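/- Let A_k be a sequence of measurable subsets of ℝⁿ (n ≥ 2) with Lebesgue measure m(A_k) → ∞. Then μ({Λ ∈ X_n : Λ ∩ A_k = ∅}) → 0 as k → ∞, where μ is Haar probability measure on X_n = SL(n,ℝ)/SL(n,ℤ). -/

import Mathlib

open MeasureTheory Filter Matrix Real ENNReal

noncomputable section

/-- `SL(n, ℝ)`. -/
abbrev SLR (n : ℕ) := Matrix.SpecialLinearGroup (Fin n) ℝ

instance (n : ℕ) : TopologicalSpace (SLR n) :=
  TopologicalSpace.induced (fun g => (g : Matrix (Fin n) (Fin n) ℝ)) inferInstance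

/-- The image of `SL(n, ℤ)` in `SL(n, ℝ)`. -/
def latticeGamma (n : ℕ) : Subgroup (SLR n) :=
  (Matrix.SpecialLinearGroup.map (n := Fin n) (Int.castRingHom ℝ)).range

/-- The space of unimodular lattices `X_n = SL(n,ℝ)/SL(n,ℤ)`. -/
abbrev LatticeSpace (n : ℕ) := SLR n ⧸ latticeGamma n

instance (n : ℕ) : MeasurableSpace (LatticeSpace n) := borel _

/-- The real vector `g · m` of the lattice `g ℤⁿ` coming from the integer vector `m`. -/
def vecOf (n : ℕ) (g : SLR n) (m : Fin n → ℤ) : Fin n → ℝ :=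
  (g : Matrix (Fin n) (Fin n) ℝ).mulVec (fun i => (m i : ℝ))

/-- Euclidean norm on `Fin n → ℝ`. -/
def eNorm {n : ℕ} (v : Fin n → ℝ) : ℝ := ‖(WithLp.equiv 2 (Fin n → ℝ)).symm v‖

/-- The lattice `Λ` contains a nonzero vector lying in `A`. -/
def Intersects (n : ℕ) (Λ : LatticeSpace n) (A : Set (Fin n → ℝ)) : Prop :=
  ∀ g : SLR n, (QuotientGroup.mk g : LatticeSpace n) = Λ →
    ∃ m : Fin n → ℤ, m ≠ 0 ∧ vecOf n g m ∈ A

/-- `α₁(Λ) = sup_{0 ≠ v ∈ Λ} 1/‖v‖` (Euclidean norm). -/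
def alpha1 (n : ℕ) (Λ : LatticeSpace n) : ℝ :=
  sSup {r : ℝ | ∃ g : SLR n, (QuotientGroup.mk g : LatticeSpace n) = Λ ∧
    ∃ m : Fin n → ℤ, m ≠ 0 ∧ r = 1 / eNorm (vecOf n g m)}

/-! ### Topology and measurability of the space of lattices -/

instance (n : ℕ) : IsTopologicalGroup (SLR n) :=
  Matrix.SpecialLinearGroup.topologicalGroup

lemma isClosedEmbedding_coe_SLR (n : ℕ) : Topology.IsClosedEmbedding
    (fun g : SLR n => (g : Matrix (Fin n) (Fin n) ℝ)) :=
  Matrix.SpecialLinearGroup.isClosedEmbedding_val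

instance (n : ℕ) : SecondCountableTopology (SLR n) :=
  have : SecondCountableTopology (Matrix (Fin n) (Fin n) ℝ) :=
    inferInstanceAs (SecondCountableTopology (Fin n → Fin n → ℝ))
  (isClosedEmbedding_coe_SLR n).isEmbedding.secondCountableTopology

instance (n : ℕ) : PolishSpace (SLR n) :=
  have : PolishSpace (Matrix (Fin n) (Fin n) ℝ) :=
    inferInstanceAs (PolishSpace (Fin n → Fin n → ℝ))
  (isClosedEmbedding_coe_SLR n).polishSpace

instance (n : ℕ) : MeasurableSpace (SLR n) := borel _
instance (n : ℕ) : BorelSpace (SLR n) := ⟨rfl⟩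
instance (n : ℕ) : BorelSpace (LatticeSpace n) := ⟨rfl⟩

lemma isClosed_latticeGamma (n : ℕ) : IsClosed (latticeGamma n : Set (SLR n)) := by
  have h := (Topology.IsClosedEmbedding.specialLinearGroup_map (n := Fin n)
    (f := Int.castRingHom ℝ) Int.isClosedEmbedding_coe_real).isClosed_range
  exact h

instance (n : ℕ) : T1Space (LatticeSpace n) :=
  have := isClosed_latticeGamma n
  QuotientGroup.instT1Space

/-- A function on the space of lattices is measurable as soon as its lift to `SL(n, ℝ)` is. -/
lemma measurable_of_comp_mk {n : ℕ} {β : Type*} [MeasurableSpace β] {f : LatticeSpace n → β}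
    (hf : Measurable (fun g : SLR n => f (QuotientGroup.mk g))) : Measurable f := by
  have h := Continuous.map_borel_eq (X := SLR n) (Y := LatticeSpace n)
    (f := QuotientGroup.mk) QuotientGroup.continuous_mk QuotientGroup.mk_surjective
  intro s hs
  have : MeasurableSet[MeasurableSpace.map (QuotientGroup.mk) (borel (SLR n))] (f ⁻¹' s) := hf hs
  rw [h] at this
  exact this

lemma measurable_mk_SLR (n : ℕ) : Measurable (QuotientGroup.mk : SLR n → LatticeSpace n) :=
  QuotientGroup.continuous_mk.measurable

/-- The inclusion of `SL(n, ℤ)` in `SL(n, ℝ)`. -/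
def ofInt {n : ℕ} : Matrix.SpecialLinearGroup (Fin n) ℤ →* SLR n :=
  Matrix.SpecialLinearGroup.map (n := Fin n) (Int.castRingHom ℝ)

lemma ofInt_mem {n : ℕ} (γ : Matrix.SpecialLinearGroup (Fin n) ℤ) : ofInt γ ∈ latticeGamma n :=
  ⟨γ, rfl⟩

lemma exists_ofInt {n : ℕ} {g : SLR n} (hg : g ∈ latticeGamma n) : ∃ γ, ofInt γ = g := hg

@[simp] lemma mk_mul_ofInt {n : ℕ} (g : SLR n) (γ) :
    (QuotientGroup.mk (g * ofInt γ) : LatticeSpace n) = QuotientGroup.mk g := by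
  rw [QuotientGroup.eq]; simpa using ofInt_mem γ⁻¹

instance (n : ℕ) : Countable (Matrix.SpecialLinearGroup (Fin n) ℤ) :=
  have : Countable (Matrix (Fin n) (Fin n) ℤ) := inferInstanceAs (Countable (Fin n → Fin n → ℤ))
  Subtype.countable

@[simp] lemma vecOf_mul_ofInt {n : ℕ} (g : SLR n) (γ : Matrix.SpecialLinearGroup (Fin n) ℤ)
    (m : Fin n → ℤ) :
    vecOf n (g * ofInt γ) m = vecOf n g ((γ : Matrix (Fin n) (Fin n) ℤ).mulVec m) := by
  unfold vecOf
  rw [Matrix.SpecialLinearGroup.coe_mul, ← Matrix.mulVec_mulVec]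
  congr 1
  ext i
  simp [Matrix.mulVec, dotProduct, ofInt]

lemma continuous_vecOf {n : ℕ} (m : Fin n → ℤ) : Continuous (fun g : SLR n => vecOf n g m) :=
  (isClosedEmbedding_coe_SLR n).continuous.matrix_mulVec continuous_const

lemma vecOf_mul {n : ℕ} (h g : SLR n) (m : Fin n → ℤ) :
    vecOf n (h * g) m = (h : Matrix (Fin n) (Fin n) ℝ).mulVec (vecOf n g m) := by
  simp [vecOf, Matrix.mulVec_mulVec]

/-- The linear action of `SL(n, ℤ)` on integer vectors. -/
def actInt {n : ℕ} (γ : Matrix.SpecialLinearGroup (Fin n) ℤ) : (Fin n → ℤ) ≃ (Fin n → ℤ) where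
  toFun m := (γ : Matrix (Fin n) (Fin n) ℤ).mulVec m
  invFun m := ((γ⁻¹ : Matrix.SpecialLinearGroup (Fin n) ℤ) : Matrix (Fin n) (Fin n) ℤ).mulVec m
  left_inv m := by
    beta_reduce
    simp [Matrix.mulVec_mulVec, ← Matrix.SpecialLinearGroup.coe_mul, -Matrix.SpecialLinearGroup.coe_inv]
  right_inv m := by
    simp [Matrix.mulVec_mulVec, ← Matrix.SpecialLinearGroup.coe_mul, -Matrix.SpecialLinearGroup.coe_inv]

lemma intersects_mk {n : ℕ} (g : SLR n) (A : Set (Fin n → ℝ)) :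
    Intersects n (QuotientGroup.mk g) A ↔ ∃ m : Fin n → ℤ, m ≠ 0 ∧ vecOf n g m ∈ A := by
  constructor
  · intro h; exact h g rfl
  · rintro ⟨m, hm, hA⟩ g' hg'
    rw [QuotientGroup.eq] at hg'
    obtain ⟨γ, hγ⟩ := exists_ofInt hg'
    have hg : g = g' * ofInt γ := by rw [hγ]; group
    refine ⟨actInt γ m, ?_, ?_⟩
    · intro h
      apply hm
      apply (actInt γ).injective
      rw [h]; simp [actInt]
    · rw [hg, vecOf_mul_ofInt] at hA; exact hA

/-! ### Lifting measures from the space of lattices to `SL(n, ℝ)` -/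

section

variable {n : ℕ}

/-- The sum over a coset of `SL(n, ℤ)`, as a measure on `SL(n, ℝ)`. -/
def cosetMeasure (n : ℕ) (x : LatticeSpace n) : Measure (SLR n) :=
  Quotient.liftOn' x
    (fun g => Measure.sum fun γ : Matrix.SpecialLinearGroup (Fin n) ℤ => Measure.dirac (g * ofInt γ))
    (by
      intro a b hab
      rw [QuotientGroup.leftRel_apply] at hab
      obtain ⟨δ, hδ⟩ := exists_ofInt hab
      have hb : b = a * ofInt δ := by rw [hδ]; group
      subst hb
      ext s hs
      simp only [Measure.sum_apply _ hs]
      rw [← (Equiv.mulLeft δ).tsum_eq (fun γ => (Measure.dirac (a * ofInt γ)) s)]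
      simp [mul_assoc])

lemma lintegral_cosetMeasure (g : SLR n) {f : SLR n → ℝ≥0∞} (hf : Measurable f) :
    ∫⁻ h, f h ∂(cosetMeasure n (QuotientGroup.mk g)) =
      ∑' γ : Matrix.SpecialLinearGroup (Fin n) ℤ, f (g * ofInt γ) := by
  have : cosetMeasure n (QuotientGroup.mk g) =
    Measure.sum fun γ : Matrix.SpecialLinearGroup (Fin n) ℤ => Measure.dirac (g * ofInt γ) := rfl
  rw [this, lintegral_sum_measure]
  simp [lintegral_dirac' _ hf]

lemma measurable_mul_ofInt (γ : Matrix.SpecialLinearGroup (Fin n) ℤ) :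
    Measurable (fun g : SLR n => g * ofInt γ) := (continuous_mul_const _).measurable

lemma measurable_cosetMeasure : Measurable (cosetMeasure n) := by
  apply measurable_of_comp_mk
  apply Measure.measurable_of_measurable_coe
  intro s hs
  have : (fun g : SLR n => cosetMeasure n (QuotientGroup.mk g) s) =
      fun g => ∑' γ : Matrix.SpecialLinearGroup (Fin n) ℤ, s.indicator 1 (g * ofInt γ) := by
    funext g
    rw [← lintegral_cosetMeasure g (measurable_one.indicator hs), lintegral_indicator_one hs]
  rw [this]
  exact Measurable.tsum fun γ =>
    (measurable_one.indicator hs).comp (measurable_mul_ofInt γ)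

/-- The lift of a measure on the space of lattices to `SL(n, ℝ)`. -/
def liftMeasure (μ : Measure (LatticeSpace n)) : Measure (SLR n) := μ.bind (cosetMeasure n)

lemma lintegral_liftMeasure (μ : Measure (LatticeSpace n)) {f : SLR n → ℝ≥0∞}
    (hf : Measurable f) :
    ∫⁻ h, f h ∂(liftMeasure μ) = ∫⁻ x, ∫⁻ h, f h ∂(cosetMeasure n x) ∂μ :=
  Measure.lintegral_bind measurable_cosetMeasure.aemeasurable hf.aemeasurable

/-- Unfolding: the integral of a sum over cosets. -/
lemma lintegral_eq_lintegral_liftMeasure (μ : Measure (LatticeSpace n)) {f : SLR n → ℝ≥0∞}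
    (hf : Measurable f) {F : LatticeSpace n → ℝ≥0∞}
    (hF : ∀ g : SLR n, F (QuotientGroup.mk g) =
      ∑' γ : Matrix.SpecialLinearGroup (Fin n) ℤ, f (g * ofInt γ)) :
    ∫⁻ x, F x ∂μ = ∫⁻ h, f h ∂(liftMeasure μ) := by
  rw [lintegral_liftMeasure μ hf]
  congr 1
  funext x
  induction x using QuotientGroup.induction_on with
  | H g => rw [hF, lintegral_cosetMeasure g hf]

/-- Invariance of a measure on the space of lattices. -/
def InvariantLat (μ : Measure (LatticeSpace n)) : Prop :=
  ∀ (g : SLR n) (s : Set (LatticeSpace n)), MeasurableSet s → μ ((fun x => g • x) ⁻¹' s) = μ s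

lemma measurable_smul_lat (h : SLR n) : Measurable (fun x : LatticeSpace n => h • x) := by
  apply measurable_of_comp_mk
  exact (measurable_mk_SLR n).comp (continuous_const_mul h).measurable

lemma InvariantLat.map_eq {μ : Measure (LatticeSpace n)} (hμ : InvariantLat μ) (h : SLR n) :
    μ.map (fun x => h • x) = μ := by
  ext s hs
  rw [Measure.map_apply (measurable_smul_lat h) hs, hμ h s hs]

lemma InvariantLat.isMulLeftInvariant {μ : Measure (LatticeSpace n)} (hμ : InvariantLat μ) :
    (liftMeasure μ).IsMulLeftInvariant := by
  constructor
  intro h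
  have hm : Measurable (fun g : SLR n => h * g) := (continuous_const_mul h).measurable
  refine Measure.ext_of_lintegral _ fun f hf => ?_
  rw [lintegral_map hf hm, lintegral_liftMeasure μ hf]
  refine (lintegral_liftMeasure μ (hf.comp hm)).trans ?_
  conv_rhs => rw [← hμ.map_eq h]
  rw [lintegral_map _ (measurable_smul_lat h)]
  · congr 1
    funext x
    induction x using QuotientGroup.induction_on with
    | H g =>
      have : h • (QuotientGroup.mk g : LatticeSpace n) = QuotientGroup.mk (h * g) := rfl
      rw [this, lintegral_cosetMeasure _ hf, lintegral_cosetMeasure _ (hf.comp hm)]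
      simp [mul_assoc]
  · exact (Measure.measurable_lintegral hf).comp measurable_cosetMeasure

lemma map_mul_right_ofInt (μ : Measure (LatticeSpace n))
    (δ : Matrix.SpecialLinearGroup (Fin n) ℤ) :
    (liftMeasure μ).map (fun g => g * ofInt δ) = liftMeasure μ := by
  refine Measure.ext_of_lintegral _ fun f hf => ?_
  have hm := measurable_mul_ofInt δ
  rw [lintegral_map hf hm, lintegral_liftMeasure μ hf]
  refine (lintegral_liftMeasure μ (hf.comp hm)).trans ?_
  congr 1
  funext x
  induction x using QuotientGroup.induction_on with
  | H g =>
    rw [lintegral_cosetMeasure _ hf, lintegral_cosetMeasure _ (hf.comp hm),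
      ← (Equiv.mulRight δ).tsum_eq (fun γ => f (g * ofInt γ))]
    simp [mul_assoc]

/-- Around every point there is an open set meeting every coset of `SL(n, ℤ)` at most once. -/
lemma exists_open_injective_mk (g₀ : SLR n) : ∃ B : Set (SLR n), IsOpen B ∧ g₀ ∈ B ∧
    ∀ g ∈ B, ∀ γ : Matrix.SpecialLinearGroup (Fin n) ℤ, g * ofInt γ ∈ B → γ = 1 := by
  let U : Set (SLR n) := ⋂ i, ⋂ j, {h : SLR n | |h i j - (1 : SLR n) i j| < 1}
  have hUo : IsOpen U := by
    refine isOpen_iInter_of_finite fun i => isOpen_iInter_of_finite fun j => ?_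
    have : Continuous (fun h : SLR n => h i j) :=
      (isClosedEmbedding_coe_SLR n).continuous.matrix_elem i j
    exact isOpen_lt (by fun_prop) continuous_const
  have h1U : (1 : SLR n) ∈ U := by simp [U]
  have hc : ContinuousAt (fun p : SLR n × SLR n => p.1⁻¹ * p.2) (g₀, g₀) := by fun_prop
  have hU : U ∈ nhds ((g₀ : SLR n)⁻¹ * g₀) := by
    rw [inv_mul_cancel]; exact hUo.mem_nhds h1U
  have := hc.preimage_mem_nhds hU
  obtain ⟨u, hu, v, hv, huv⟩ := mem_nhds_prod_iff.1 this
  obtain ⟨B, hBt, hBo, hgB⟩ := mem_nhds_iff.1 (Filter.inter_mem hu hv)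
  refine ⟨B, hBo, hgB, fun g hg γ hγ => ?_⟩
  have hmem : g⁻¹ * (g * ofInt γ) ∈ U :=
    @huv (g, g * ofInt γ) ⟨(hBt hg).1, (hBt hγ).2⟩
  rw [inv_mul_cancel_left] at hmem
  ext i j
  have hij : |(ofInt γ : SLR n) i j - (1 : SLR n) i j| < 1 := by
    simp only [U, Set.mem_iInter] at hmem
    exact hmem i j
  have e : (ofInt γ : SLR n) i j - (1 : SLR n) i j =
      ((γ i j - (1 : Matrix.SpecialLinearGroup (Fin n) ℤ) i j : ℤ) : ℝ) := by
    by_cases hij : i = j <;>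
    simp [ofInt, hij]
  rw [e] at hij
  have : |(γ i j - (1 : Matrix.SpecialLinearGroup (Fin n) ℤ) i j : ℤ)| < 1 := by
    exact_mod_cast hij
  rw [Int.abs_lt_one_iff] at this
  linarith

lemma tsum_indicator_le_one {B : Set (SLR n)}
    (hB : ∀ g ∈ B, ∀ γ : Matrix.SpecialLinearGroup (Fin n) ℤ, g * ofInt γ ∈ B → γ = 1)
    (g : SLR n) :
    ∑' γ : Matrix.SpecialLinearGroup (Fin n) ℤ, B.indicator (1 : SLR n → ℝ≥0∞) (g * ofInt γ)
      ≤ 1 := by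
  by_cases h : ∃ γ₀, g * ofInt γ₀ ∈ B
  · obtain ⟨γ₀, h₀⟩ := h
    rw [tsum_eq_single γ₀]
    · exact Set.indicator_le_self' (fun _ _ => zero_le) _
    · intro γ hγ
      rw [Set.indicator_of_notMem]
      intro hmem
      apply hγ
      have := hB _ h₀ (γ₀⁻¹ * γ) (by simpa [mul_assoc] using hmem)
      rw [inv_mul_eq_one] at this
      exact this.symm
  · push Not at h
    simp [Set.indicator_of_notMem (h _)]

lemma exists_countable_cover (n : ℕ) : ∃ B : ℕ → Set (SLR n), (∀ i, IsOpen (B i)) ∧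
    (⋃ i, B i) = Set.univ ∧
    ∀ i, ∀ g ∈ B i, ∀ γ : Matrix.SpecialLinearGroup (Fin n) ℤ, g * ofInt γ ∈ B i → γ = 1 := by
  choose B hBo hB hB1 using exists_open_injective_mk (n := n)
  obtain ⟨s, hs, hsU⟩ := TopologicalSpace.countable_cover_nhds
    (fun g : SLR n => (hBo g).mem_nhds (hB g))
  have hne : s.Nonempty := by
    by_contra h
    rw [Set.not_nonempty_iff_eq_empty] at h
    subst h
    simp only [Set.biUnion_empty] at hsU
    exact Set.empty_ne_univ hsU
  obtain ⟨e, he⟩ := hs.exists_eq_range hne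
  refine ⟨fun i => B (e i), fun i => hBo _, ?_, fun i => hB1 _⟩
  rw [← hsU, he, Set.biUnion_range]

/-- A weight function on `SL(n, ℝ)` whose sum over every coset of `SL(n, ℤ)` is one. -/
lemma exists_weight (n : ℕ) : ∃ w : SLR n → ℝ≥0∞, Measurable w ∧
    ∀ g, ∑' γ : Matrix.SpecialLinearGroup (Fin n) ℤ, w (g * ofInt γ) = 1 := by
  obtain ⟨B, hBo, hBU, hB⟩ := exists_countable_cover n
  let v : SLR n → ℝ≥0∞ := fun g => ∑' i : ℕ, (2⁻¹ : ℝ≥0∞) ^ i * (B i).indicator 1 g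
  have hv : Measurable v := Measurable.tsum fun i =>
    (measurable_one.indicator (hBo i).measurableSet).const_mul _
  let V : SLR n → ℝ≥0∞ := fun g => ∑' γ : Matrix.SpecialLinearGroup (Fin n) ℤ, v (g * ofInt γ)
  have hV : Measurable V := Measurable.tsum fun γ => hv.comp (measurable_mul_ofInt γ)
  have hVinv : ∀ g (γ : Matrix.SpecialLinearGroup (Fin n) ℤ), V (g * ofInt γ) = V g := by
    intro g γ
    simp only [V]
    rw [← (Equiv.mulLeft γ).tsum_eq (fun δ => v (g * ofInt δ))]
    simp [mul_assoc]
  have hVtop : ∀ g, V g ≠ ∞ := by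
    intro g
    have : V g = ∑' i : ℕ, (2⁻¹ : ℝ≥0∞) ^ i *
        ∑' γ : Matrix.SpecialLinearGroup (Fin n) ℤ, (B i).indicator 1 (g * ofInt γ) := by
      simp only [V, v]
      rw [ENNReal.tsum_comm]
      simp_rw [ENNReal.tsum_mul_left]
    rw [this]
    refine ne_top_of_le_ne_top ?_ (ENNReal.tsum_le_tsum fun i =>
      mul_le_mul_right (tsum_indicator_le_one (hB i) g) _)
    simp [ENNReal.tsum_geometric]
  have hV0 : ∀ g, V g ≠ 0 := by
    intro g h
    simp only [V, v, ENNReal.tsum_eq_zero] at h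
    have hg : g ∈ ⋃ i, B i := hBU ▸ Set.mem_univ g
    obtain ⟨i, hi⟩ := Set.mem_iUnion.1 hg
    have := h 1 i
    simp [hi] at this
  refine ⟨fun g => v g / V g, hv.div hV, fun g => ?_⟩
  simp only [hVinv, div_eq_mul_inv]
  rw [ENNReal.tsum_mul_right]
  exact ENNReal.mul_inv_cancel (hV0 g) (hVtop g)

lemma liftMeasure_le_one (μ : Measure (LatticeSpace n)) [IsProbabilityMeasure μ]
    {B : Set (SLR n)} (hBo : IsOpen B)
    (hB : ∀ g ∈ B, ∀ γ : Matrix.SpecialLinearGroup (Fin n) ℤ, g * ofInt γ ∈ B → γ = 1) :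
    liftMeasure μ B ≤ 1 := by
  have hm : Measurable (B.indicator (1 : SLR n → ℝ≥0∞)) :=
    measurable_one.indicator hBo.measurableSet
  rw [← lintegral_indicator_one hBo.measurableSet, lintegral_liftMeasure μ hm]
  refine (lintegral_mono (g := fun _ => 1) fun x => ?_).trans (by simp)
  induction x using QuotientGroup.induction_on with
  | H g =>
    rw [lintegral_cosetMeasure _ hm]
    exact tsum_indicator_le_one hB g

lemma sigmaFinite_liftMeasure (μ : Measure (LatticeSpace n)) [IsProbabilityMeasure μ] :
    SigmaFinite (liftMeasure μ) := by
  obtain ⟨B, hBo, hBU, hB⟩ := exists_countable_cover n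
  refine Measure.sigmaFinite_of_countable (S := Set.range B) (Set.countable_range B) ?_ ?_
  · rintro _ ⟨i, rfl⟩
    exact (liftMeasure_le_one μ (hBo i) (hB i)).trans_lt ENNReal.one_lt_top
  · rw [Set.sUnion_range, hBU]

lemma exists_liftMeasure_ne (μ : Measure (LatticeSpace n)) [IsProbabilityMeasure μ] :
    ∃ s, MeasurableSet s ∧ liftMeasure μ s ≠ 0 ∧ liftMeasure μ s ≠ ∞ := by
  obtain ⟨B, hBo, hBU, hB⟩ := exists_countable_cover n
  by_contra! h
  have h0 : ∀ i, liftMeasure μ (B i) = 0 := by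
    intro i
    by_contra hi
    have := h (B i) (hBo i).measurableSet hi
    exact absurd (liftMeasure_le_one μ (hBo i) (hB i)) (by simp [this])
  have hz : liftMeasure μ = 0 := by
    rw [← Measure.measure_univ_eq_zero, ← hBU]
    exact measure_iUnion_null h0
  obtain ⟨w, hw, hw1⟩ := exists_weight n
  have := lintegral_eq_lintegral_liftMeasure μ hw (F := fun _ => 1) (fun g => (hw1 g).symm)
  rw [hz] at this
  simp at this

/-- Uniqueness of the invariant probability measure on the space of lattices. -/
lemma InvariantLat.unique {μ ν : Measure (LatticeSpace n)} [IsProbabilityMeasure μ]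
    [IsProbabilityMeasure ν] (hμ : InvariantLat μ) (hν : InvariantLat ν) : μ = ν := by
  have := hμ.isMulLeftInvariant
  have := hν.isMulLeftInvariant
  have := sigmaFinite_liftMeasure μ
  have := sigmaFinite_liftMeasure ν
  obtain ⟨s, -, hs0, hst⟩ := exists_liftMeasure_ne ν
  have key := measure_eq_div_smul (liftMeasure μ) (liftMeasure ν) hs0 hst
  set c := liftMeasure μ s / liftMeasure ν s
  obtain ⟨w, hw, hw1⟩ := exists_weight n
  have hS : ∀ S : Set (LatticeSpace n), MeasurableSet S → μ S = c * ν S := by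
    intro S hS
    let f : SLR n → ℝ≥0∞ := fun g => S.indicator 1 (QuotientGroup.mk g : LatticeSpace n) * w g
    have hf : Measurable f :=
      ((measurable_one.indicator hS).comp (measurable_mk_SLR n)).mul hw
    have hF : ∀ g : SLR n, S.indicator 1 (QuotientGroup.mk g : LatticeSpace n) =
        ∑' γ : Matrix.SpecialLinearGroup (Fin n) ℤ, f (g * ofInt γ) := by
      intro g
      simp only [f, mk_mul_ofInt]
      rw [ENNReal.tsum_mul_left, hw1, mul_one]
    rw [← lintegral_indicator_one hS, ← lintegral_indicator_one hS,
      lintegral_eq_lintegral_liftMeasure μ hf hF, lintegral_eq_lintegral_liftMeasure ν hf hF,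
      key, lintegral_smul_measure, smul_eq_mul]
  have hc : c = 1 := by
    have := hS Set.univ MeasurableSet.univ
    simpa using this.symm
  ext S hSm
  rw [hS S hSm, hc, one_mul]

/-- The lifted measure is invariant under right translation by every element which is
conjugate to its inverse. -/
lemma InvariantLat.map_mul_right {μ : Measure (LatticeSpace n)} [IsProbabilityMeasure μ]
    (hμ : InvariantLat μ) {b c : SLR n} (hbc : c * b * c⁻¹ = b⁻¹) :
    (liftMeasure μ).map (fun g => g * b) = liftMeasure μ := by
  have := hμ.isMulLeftInvariant
  have := sigmaFinite_liftMeasure μ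
  obtain ⟨s, hsm, hs0, hst⟩ := exists_liftMeasure_ne μ
  set ν := liftMeasure μ
  have hmR : ∀ h : SLR n, Measurable (fun g : SLR n => g * h) :=
    fun h => (continuous_mul_const h).measurable
  have hk : ∀ h : SLR n, ∃ k : ℝ≥0∞, ν.map (fun g => g * h) = k • ν := by
    intro h
    have h1 : (ν.map (fun g => g * h)).IsMulLeftInvariant := by
      constructor
      intro a
      have hmL : Measurable (fun g : SLR n => a * g) := (continuous_const_mul a).measurable
      rw [Measure.map_map hmL (hmR h)]
      conv_rhs => rw [← map_mul_left_eq_self ν a]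
      rw [Measure.map_map (hmR h) hmL]
      congr 1
      funext g
      simp [mul_assoc]
    have h2 : SigmaFinite (ν.map (fun g => g * h)) :=
      (Homeomorph.mulRight h).toMeasurableEquiv.sigmaFinite_map
    exact ⟨_, measure_eq_div_smul _ ν hs0 hst⟩
  choose k hk using hk
  have hinj : ∀ a b : ℝ≥0∞, a • ν = b • ν → a = b := by
    intro a b hab
    have := congrArg (fun m : Measure (SLR n) => m s) hab
    simp only [Measure.smul_apply, smul_eq_mul] at this
    exact (ENNReal.mul_left_inj hs0 hst).1 this
  have hmul : ∀ g h, k (g * h) = k g * k h := by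
    intro g h
    apply hinj
    rw [← hk, mul_smul, ← hk h, ← Measure.map_smul, ← hk g, Measure.map_map (hmR h) (hmR g)]
    congr 1
    funext x
    simp [mul_assoc]
  have hone : k 1 = 1 := by
    apply hinj
    rw [← hk]
    simp
  have hkb : k b * k b = 1 := by
    have h1 : k (b⁻¹) = k b := by
      rw [← hbc, hmul, hmul, mul_comm (k c), mul_assoc, ← hmul c, mul_inv_cancel, hone, mul_one]
    rw [← hone, ← mul_inv_cancel b, hmul, h1]
  have : k b = 1 := by
    rcases lt_trichotomy (k b) 1 with h | h | h
    · exact absurd hkb (ENNReal.mul_lt_mul h h |>.trans_eq (one_mul 1)).ne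
    · exact h
    · exact absurd hkb ((one_mul (1 : ℝ≥0∞)).symm.trans_lt (ENNReal.mul_lt_mul h h)).ne'
  rw [hk, this, one_smul]

end

/-! ### Counting lattice points with a bump function -/

section

/-- A Lipschitz function with values in `[0, 1]`, supported in a spherical shell. -/
structure Bump (n : ℕ) where
  /-- the function -/
  f : (Fin n → ℝ) → ℝ≥0∞
  /-- the Lipschitz constant -/
  K : ℝ
  /-- the inner radius -/
  r : ℝ
  /-- the outer radius -/
  R : ℝ
  K_nonneg : 0 ≤ K
  r_pos : 0 < r
  R_pos : 0 < R
  measurable : Measurable f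
  le_one : ∀ x, f x ≤ 1
  lip : ∀ x y, f x ≤ f y + ENNReal.ofReal (K * ‖x - y‖)
  supp_le : ∀ x, f x ≠ 0 → ‖x‖ ≤ R
  le_supp : ∀ x, f x ≠ 0 → r ≤ ‖x‖

variable {n : ℕ}

/-- The real vector with the same coordinates as an integer vector. -/
def intVec (m : Fin n → ℤ) : Fin n → ℝ := fun i => (m i : ℝ)

/-- The half-open unit cube. -/
def unitCube (n : ℕ) : Set (Fin n → ℝ) := Set.univ.pi fun _ => Set.Ico 0 1

lemma measurableSet_unitCube : MeasurableSet (unitCube n) :=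
  MeasurableSet.univ_pi fun _ => measurableSet_Ico

lemma volume_unitCube : volume (unitCube n) = 1 := by
  rw [unitCube, volume_pi_pi]
  simp

/-- Integration over `ℝⁿ` by summing over the integer translates of the unit cube. -/
lemma lintegral_eq_tsum_unitCube {F : (Fin n → ℝ) → ℝ≥0∞} (hF : Measurable F) :
    ∫⁻ x, F x = ∑' m : Fin n → ℤ, ∫⁻ x in unitCube n, F (intVec m + x) := by
  have hm : ∀ m : Fin n → ℤ, MeasurableSet ((fun x => intVec m + x) '' unitCube n) :=
    fun m => (MeasurableEquiv.addLeft (intVec m)).measurableSet_image.2 measurableSet_unitCube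
  have hfl : ∀ (m : Fin n → ℤ) (x : Fin n → ℝ), x ∈ (fun x => intVec m + x) '' unitCube n ↔
      ∀ i, ⌊x i⌋ = m i := by
    intro m x
    constructor
    · rintro ⟨y, hy, rfl⟩ i
      have := hy i (Set.mem_univ i)
      simp only [Pi.add_apply, intVec, Int.floor_intCast_add, add_eq_left]
      exact Int.floor_eq_zero_iff.2 this
    · intro h
      refine ⟨fun i => Int.fract (x i), fun i _ => ⟨Int.fract_nonneg _, Int.fract_lt_one _⟩, ?_⟩
      funext i
      simp only [Pi.add_apply, intVec, ← h i, Int.floor_add_fract]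
  have hU : (⋃ m : Fin n → ℤ, (fun x => intVec m + x) '' unitCube n) = Set.univ := by
    refine Set.eq_univ_of_forall fun x => Set.mem_iUnion.2 ⟨fun i => ⌊x i⌋, ?_⟩
    rw [hfl]; simp
  have hd : Pairwise (Function.onFun Disjoint
      fun m : Fin n → ℤ => (fun x => intVec m + x) '' unitCube n) := by
    intro m m' hmm
    refine Set.disjoint_left.2 fun x hx hx' => hmm ?_
    rw [hfl] at hx hx'
    funext i
    rw [← hx i, hx' i]
  rw [← setLIntegral_univ, ← hU, lintegral_iUnion hm hd]
  congr 1
  funext m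
  rw [← (measurePreserving_add_left volume (intVec m)).setLIntegral_comp_preimage (hm m) hF]
  congr 2
  exact Set.preimage_image_eq _ (add_right_injective _)

lemma measurable_mulVec (M : Matrix (Fin n) (Fin n) ℝ) :
    Measurable (fun x : Fin n → ℝ => M.mulVec x) :=
  (continuous_const.matrix_mulVec continuous_id).measurable

lemma lintegral_comp_mulVec (g : SLR n) {F : (Fin n → ℝ) → ℝ≥0∞} (hF : Measurable F) :
    ∫⁻ x, F ((g : Matrix (Fin n) (Fin n) ℝ).mulVec x) = ∫⁻ x, F x := by
  have h := Real.map_matrix_volume_pi_eq_smul_volume_pi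
    (M := (g : Matrix (Fin n) (Fin n) ℝ)) (by simp)
  have hm := measurable_mulVec (g : Matrix (Fin n) (Fin n) ℝ)
  have h2 : Measure.map (fun x : Fin n → ℝ => (g : Matrix (Fin n) (Fin n) ℝ).mulVec x) volume =
      volume := by
    have e : (fun x : Fin n → ℝ => (g : Matrix (Fin n) (Fin n) ℝ).mulVec x) =
      toLin' (g : Matrix (Fin n) (Fin n) ℝ) := by funext x; simp
    rw [e, h]; simp
  conv_rhs => rw [← h2, lintegral_map hF hm]

lemma lintegral_comp_inv_smul {T : ℝ} (hT : 0 < T) {F : (Fin n → ℝ) → ℝ≥0∞} (hF : Measurable F) :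
    ∫⁻ x, F (T⁻¹ • x) = ENNReal.ofReal (T ^ n) * ∫⁻ x, F x := by
  have h := Measure.map_addHaar_smul (volume : Measure (Fin n → ℝ)) (inv_ne_zero hT.ne')
  rw [← lintegral_map hF (measurable_const_smul T⁻¹), h, lintegral_smul_measure]
  simp [abs_of_pos hT]

namespace Bump

variable (b : Bump n)

/-- The sum of a scaled bump function over all lattice points. -/
def full (T : ℝ) (g : SLR n) : ℝ≥0∞ := ∑' m : Fin n → ℤ, b.f (T⁻¹ • vecOf n g m)

/-- The integral of a bump function. -/
def mass : ℝ≥0∞ := ∫⁻ x, b.f x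

/-- The constant in the error term for the lattice point count. -/
def err (D : ℝ) : ℝ := b.K * D * (2 * (b.R + D)) ^ n

lemma err_nonneg {D : ℝ} (hD : 0 ≤ D) : 0 ≤ b.err D := by
  have := b.K_nonneg
  have := b.R_pos
  unfold err; positivity

lemma mass_lt_top : b.mass < ∞ := by
  have hR := b.R_pos
  have : b.mass ≤ ∫⁻ x, (Metric.closedBall (0 : Fin n → ℝ) b.R).indicator 1 x := by
    refine lintegral_mono fun x => ?_
    by_cases h : b.f x = 0
    · simp [h]
    · have := b.supp_le x h
      rw [Set.indicator_of_mem (by simpa using this)]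
      exact b.le_one x
  refine this.trans_lt ?_
  rw [lintegral_indicator_one measurableSet_closedBall]
  exact measure_closedBall_lt_top

variable {b} {g : SLR n} {D T : ℝ}

lemma vecOf_eq (g : SLR n) (m : Fin n → ℤ) :
    vecOf n g m = (g : Matrix (Fin n) (Fin n) ℝ).mulVec (intVec m) := rfl

lemma err_integral (hD : 0 ≤ D) (hT : 1 ≤ T) (hn : 0 < n) :
    ∫⁻ y, ENNReal.ofReal (b.K * (D / T)) * (Metric.closedBall (0 : Fin n → ℝ)
      (T * b.R + D)).indicator 1 ((g : Matrix (Fin n) (Fin n) ℝ).mulVec y) ≤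
    ENNReal.ofReal (b.err D * T ^ (n - 1)) := by
  have hK := b.K_nonneg
  have hR := b.R_pos
  have hT0 : 0 < T := by linarith
  have hm : Measurable ((Metric.closedBall (0 : Fin n → ℝ)
      (T * b.R + D)).indicator (1 : (Fin n → ℝ) → ℝ≥0∞)) :=
    measurable_one.indicator measurableSet_closedBall
  have hm' : Measurable fun y : Fin n → ℝ => (Metric.closedBall (0 : Fin n → ℝ)
      (T * b.R + D)).indicator (1 : (Fin n → ℝ) → ℝ≥0∞)
        ((g : Matrix (Fin n) (Fin n) ℝ).mulVec y) := hm.comp (measurable_mulVec _)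
  rw [lintegral_const_mul _ hm', lintegral_comp_mulVec g hm,
    lintegral_indicator_one measurableSet_closedBall, Real.volume_pi_closedBall _ (by positivity),
    ← ENNReal.ofReal_mul (by positivity)]
  apply ENNReal.ofReal_le_ofReal
  rw [Fintype.card_fin, err]
  have h1 : (2 * (T * b.R + D)) ^ n ≤ (T * (2 * (b.R + D))) ^ n := by
    apply pow_le_pow_left₀ (by positivity)
    nlinarith
  calc b.K * (D / T) * (2 * (T * b.R + D)) ^ n ≤ b.K * (D / T) * (T * (2 * (b.R + D))) ^ n := by
        gcongr
    _ = b.K * D * (2 * (b.R + D)) ^ n * T ^ (n - 1) := by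
        obtain ⟨k, rfl⟩ : ∃ k, n = k + 1 := ⟨n - 1, by omega⟩
        rw [mul_pow]
        simp only [Nat.add_sub_cancel]
        field_simp
        ring

/-- Pointwise comparison of a bump function at lattice points and at points of the
corresponding cells. -/
lemma compare (hT : 0 < T) (hD : 0 ≤ D) {v w : Fin n → ℝ} (hvw : ‖v - w‖ ≤ D) :
    b.f (T⁻¹ • v) ≤ b.f (T⁻¹ • w) + ENNReal.ofReal (b.K * (D / T)) *
      (Metric.closedBall (0 : Fin n → ℝ) (T * b.R + D)).indicator 1 v ∧
    b.f (T⁻¹ • v) ≤ b.f (T⁻¹ • w) + ENNReal.ofReal (b.K * (D / T)) *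
      (Metric.closedBall (0 : Fin n → ℝ) (T * b.R + D)).indicator 1 w := by
  by_cases h : b.f (T⁻¹ • v) = 0
  · simp [h]
  have h1 := b.supp_le _ h
  have hv : ‖v‖ ≤ T * b.R := by
    rw [norm_smul, norm_inv, Real.norm_of_nonneg hT.le, inv_mul_le_iff₀ hT] at h1
    exact h1
  have hw : ‖w‖ ≤ T * b.R + D := by
    have := norm_sub_norm_le w v
    rw [norm_sub_rev] at this
    linarith
  have hl := b.lip (T⁻¹ • v) (T⁻¹ • w)
  have hl2 : ENNReal.ofReal (b.K * ‖T⁻¹ • v - T⁻¹ • w‖) ≤ ENNReal.ofReal (b.K * (D / T)) := by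
    apply ENNReal.ofReal_le_ofReal
    apply mul_le_mul_of_nonneg_left _ b.K_nonneg
    rw [← smul_sub, norm_smul, norm_inv, Real.norm_of_nonneg hT.le, div_eq_inv_mul]
    gcongr
  rw [Set.indicator_of_mem (by simpa using hv.trans (by linarith)),
    Set.indicator_of_mem (by simpa using hw)]
  simp only [Pi.one_apply, mul_one, and_self]
  exact hl.trans (by gcongr)

lemma full_le (hn : 0 < n) (hD : ∀ x ∈ unitCube n, ‖(g : Matrix (Fin n) (Fin n) ℝ).mulVec x‖ ≤ D)
    (hT : 1 ≤ T) :
    b.full T g ≤ ENNReal.ofReal (T ^ n) * b.mass + ENNReal.ofReal (b.err D * T ^ (n - 1)) := by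
  have hT0 : 0 < T := by linarith
  have hD0 : 0 ≤ D := (norm_nonneg _).trans (hD 0 (by intro i _; simp))
  have hm1 : Measurable fun y : Fin n → ℝ =>
      b.f (T⁻¹ • (g : Matrix (Fin n) (Fin n) ℝ).mulVec y) :=
    b.measurable.comp ((measurable_mulVec _).const_smul T⁻¹)
  have hm2 : Measurable fun y : Fin n → ℝ => ENNReal.ofReal (b.K * (D / T)) *
      (Metric.closedBall (0 : Fin n → ℝ) (T * b.R + D)).indicator (1 : (Fin n → ℝ) → ℝ≥0∞)
        ((g : Matrix (Fin n) (Fin n) ℝ).mulVec y) :=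
    ((measurable_one.indicator measurableSet_closedBall).comp (measurable_mulVec _)).const_mul _
  calc b.full T g = ∑' m : Fin n → ℤ, ∫⁻ x in unitCube n, b.f (T⁻¹ • vecOf n g m) := by
        simp [full, volume_unitCube]
    _ ≤ ∑' m : Fin n → ℤ, ∫⁻ x in unitCube n,
          (b.f (T⁻¹ • (g : Matrix (Fin n) (Fin n) ℝ).mulVec (intVec m + x)) +
          ENNReal.ofReal (b.K * (D / T)) * (Metric.closedBall (0 : Fin n → ℝ)
          (T * b.R + D)).indicator 1 ((g : Matrix (Fin n) (Fin n) ℝ).mulVec (intVec m + x))) := by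
        refine ENNReal.tsum_le_tsum fun m => ?_
        refine setLIntegral_mono' measurableSet_unitCube fun x hx => ?_
        refine (compare hT0 hD0 ?_).2
        rw [vecOf_eq, Matrix.mulVec_add, sub_add_cancel_left, norm_neg]
        exact hD x hx
    _ = ∫⁻ y, (b.f (T⁻¹ • (g : Matrix (Fin n) (Fin n) ℝ).mulVec y) +
          ENNReal.ofReal (b.K * (D / T)) * (Metric.closedBall (0 : Fin n → ℝ)
          (T * b.R + D)).indicator 1 ((g : Matrix (Fin n) (Fin n) ℝ).mulVec y)) :=
        (lintegral_eq_tsum_unitCube (hm1.add hm2)).symm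
    _ ≤ _ := by
        rw [lintegral_add_left hm1]
        refine add_le_add (le_of_eq ?_) (err_integral hD0 hT hn)
        rw [lintegral_comp_mulVec g (F := fun y => b.f (T⁻¹ • y))
          (b.measurable.comp (measurable_const_smul T⁻¹)),
          lintegral_comp_inv_smul hT0 b.measurable, mass]

lemma le_full (hn : 0 < n) (hD : ∀ x ∈ unitCube n, ‖(g : Matrix (Fin n) (Fin n) ℝ).mulVec x‖ ≤ D)
    (hT : 1 ≤ T) :
    ENNReal.ofReal (T ^ n) * b.mass ≤ b.full T g + ENNReal.ofReal (b.err D * T ^ (n - 1)) := by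
  have hT0 : 0 < T := by linarith
  have hD0 : 0 ≤ D := (norm_nonneg _).trans (hD 0 (by intro i _; simp))
  have hm1 : Measurable fun y : Fin n → ℝ =>
      b.f (T⁻¹ • (g : Matrix (Fin n) (Fin n) ℝ).mulVec y) :=
    b.measurable.comp ((measurable_mulVec _).const_smul T⁻¹)
  have hm2 : Measurable fun y : Fin n → ℝ => ENNReal.ofReal (b.K * (D / T)) *
      (Metric.closedBall (0 : Fin n → ℝ) (T * b.R + D)).indicator (1 : (Fin n → ℝ) → ℝ≥0∞)
        ((g : Matrix (Fin n) (Fin n) ℝ).mulVec y) :=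
    ((measurable_one.indicator measurableSet_closedBall).comp (measurable_mulVec _)).const_mul _
  calc ENNReal.ofReal (T ^ n) * b.mass
      = ∫⁻ y, b.f (T⁻¹ • (g : Matrix (Fin n) (Fin n) ℝ).mulVec y) := by
        rw [lintegral_comp_mulVec g (F := fun y => b.f (T⁻¹ • y))
          (b.measurable.comp (measurable_const_smul T⁻¹)),
          lintegral_comp_inv_smul hT0 b.measurable, mass]
    _ = ∑' m : Fin n → ℤ, ∫⁻ x in unitCube n,
          b.f (T⁻¹ • (g : Matrix (Fin n) (Fin n) ℝ).mulVec (intVec m + x)) :=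
        lintegral_eq_tsum_unitCube hm1
    _ ≤ ∑' m : Fin n → ℤ, ∫⁻ x in unitCube n, (b.f (T⁻¹ • vecOf n g m) +
          ENNReal.ofReal (b.K * (D / T)) * (Metric.closedBall (0 : Fin n → ℝ)
          (T * b.R + D)).indicator 1 ((g : Matrix (Fin n) (Fin n) ℝ).mulVec (intVec m + x))) := by
        refine ENNReal.tsum_le_tsum fun m => ?_
        refine setLIntegral_mono' measurableSet_unitCube fun x hx => ?_
        refine (compare hT0 hD0 ?_).1
        rw [vecOf_eq, Matrix.mulVec_add, add_sub_cancel_left]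
        exact hD x hx
    _ = b.full T g + ∫⁻ y, ENNReal.ofReal (b.K * (D / T)) * (Metric.closedBall (0 : Fin n → ℝ)
          (T * b.R + D)).indicator 1 ((g : Matrix (Fin n) (Fin n) ℝ).mulVec y) := by
        rw [lintegral_eq_tsum_unitCube hm2, full, ← ENNReal.tsum_add]
        congr 1
        funext m
        rw [lintegral_add_left measurable_const]
        simp [volume_unitCube]
    _ ≤ _ := by gcongr; exact err_integral hD0 hT hn

lemma exists_diam (g : SLR n) :
    ∃ D : ℝ, 0 ≤ D ∧ ∀ x ∈ unitCube n, ‖(g : Matrix (Fin n) (Fin n) ℝ).mulVec x‖ ≤ D := by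
  let L := LinearMap.toContinuousLinearMap (Matrix.toLin' (g : Matrix (Fin n) (Fin n) ℝ))
  refine ⟨‖L‖, norm_nonneg _, fun x hx => ?_⟩
  have h1 : ‖x‖ ≤ 1 := by
    rw [pi_norm_le_iff_of_nonneg zero_le_one]
    intro i
    have := hx i (Set.mem_univ i)
    rw [Real.norm_of_nonneg this.1]
    exact this.2.le
  have := L.le_opNorm x
  have h2 : L x = (g : Matrix (Fin n) (Fin n) ℝ).mulVec x := rfl
  rw [h2] at this
  exact this.trans (mul_le_of_le_one_right (norm_nonneg _) h1)

end Bump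

end

/-! ### Primitive integer vectors -/

section

variable {n : ℕ}

/-- An integer vector is primitive if its coordinates generate the unit ideal. -/
def IsPrim (m : Fin n → ℤ) : Prop := ∃ c : Fin n → ℤ, c ⬝ᵥ m = 1

lemma IsPrim.ne_zero {m : Fin n → ℤ} (hm : IsPrim m) : m ≠ 0 := by
  rintro rfl
  obtain ⟨c, hc⟩ := hm
  simp at hc

lemma isPrim_actInt (γ : Matrix.SpecialLinearGroup (Fin n) ℤ) {m : Fin n → ℤ} (hm : IsPrim m) :
    IsPrim (actInt γ m) := by
  obtain ⟨c, hc⟩ := hm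
  refine ⟨c ᵥ* ((γ⁻¹ : Matrix.SpecialLinearGroup (Fin n) ℤ) : Matrix (Fin n) (Fin n) ℤ), ?_⟩
  rw [← Matrix.dotProduct_mulVec]
  exact (congrArg (fun v => c ⬝ᵥ v) ((actInt γ).symm_apply_apply m)).trans hc

lemma actInt_inv_apply (γ : Matrix.SpecialLinearGroup (Fin n) ℤ) (m : Fin n → ℤ) :
    actInt γ⁻¹ (actInt γ m) = m := (actInt γ).symm_apply_apply m

lemma actInt_apply_inv (γ : Matrix.SpecialLinearGroup (Fin n) ℤ) (m : Fin n → ℤ) :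
    actInt γ (actInt γ⁻¹ m) = m := (actInt γ).apply_symm_apply m

/-- The action of `SL(n, ℤ)` on primitive vectors. -/
def actPrim (γ : Matrix.SpecialLinearGroup (Fin n) ℤ) :
    {m : Fin n → ℤ // IsPrim m} ≃ {m : Fin n → ℤ // IsPrim m} where
  toFun m := ⟨actInt γ m, isPrim_actInt γ m.2⟩
  invFun m := ⟨actInt γ⁻¹ m, isPrim_actInt γ⁻¹ m.2⟩
  left_inv m := Subtype.ext (actInt_inv_apply γ m)
  right_inv m := Subtype.ext (actInt_apply_inv γ m)

/-- The sum of a function over the primitive vectors of a lattice. -/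
def primSum (F : (Fin n → ℝ) → ℝ≥0∞) (g : SLR n) : ℝ≥0∞ :=
  ∑' m : {m : Fin n → ℤ // IsPrim m}, F (vecOf n g m)

lemma primSum_mul_ofInt (F : (Fin n → ℝ) → ℝ≥0∞) (g : SLR n)
    (γ : Matrix.SpecialLinearGroup (Fin n) ℤ) : primSum F (g * ofInt γ) = primSum F g := by
  unfold primSum
  rw [← (actPrim γ).tsum_eq (fun m => F (vecOf n g m))]
  simp only [vecOf_mul_ofInt]
  rfl

lemma measurable_primSum {F : (Fin n → ℝ) → ℝ≥0∞} (hF : Measurable F) :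
    Measurable (primSum (n := n) F) :=
  Measurable.tsum fun m => hF.comp (continuous_vecOf m.1).measurable

lemma exists_prim_of_ne_zero {m : Fin n → ℤ} (hm : m ≠ 0) :
    ∃ (q : ℕ) (m' : Fin n → ℤ), 0 < q ∧ IsPrim m' ∧ m = (q : ℤ) • m' := by
  obtain ⟨d, hd⟩ := (IsPrincipalIdealRing.principal (Ideal.span (Set.range m))).principal
  have hmd : ∀ i, d ∣ m i := by
    intro i
    have : m i ∈ Ideal.span (Set.range m) := Ideal.subset_span ⟨i, rfl⟩
    rw [hd] at this
    exact Ideal.mem_span_singleton.1 this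
  have hdm : d ∈ Ideal.span (Set.range m) := by
    rw [hd]; exact Ideal.mem_span_singleton_self d
  obtain ⟨c, hc⟩ := Ideal.mem_span_range_iff_exists_fun.1 hdm
  choose m' hm' using hmd
  have hd0 : d ≠ 0 := by
    rintro rfl
    apply hm
    funext i
    simp [hm' i]
  have hcm : c ⬝ᵥ m' = 1 := by
    have : d * (c ⬝ᵥ m') = d * 1 := by
      rw [mul_one]
      conv_rhs => rw [← hc]
      rw [dotProduct, Finset.mul_sum]
      exact Finset.sum_congr rfl fun i _ => by rw [hm' i]; ring
    exact mul_left_cancel₀ hd0 this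
  have hs : (d.natAbs : ℤ) = d.sign * d := by
    rw [mul_comm]; exact (Int.mul_sign_self d).symm
  have hss : d.sign * d.sign = 1 := by
    rcases lt_or_gt_of_ne hd0 with h | h
    · simp [Int.sign_eq_neg_one_of_neg h]
    · simp [Int.sign_eq_one_of_pos h]
  refine ⟨d.natAbs, d.sign • m', Int.natAbs_pos.2 hd0, ⟨d.sign • c, ?_⟩, ?_⟩
  · rw [smul_dotProduct, dotProduct_smul, hcm, smul_eq_mul, smul_eq_mul, mul_one, hss]
  · funext i
    rw [Pi.smul_apply, Pi.smul_apply, hs, smul_eq_mul, smul_eq_mul, hm' i]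
    linear_combination (-d * m' i) * hss

lemma prim_smul_injective {q q' : ℕ} {m m' : Fin n → ℤ} (hq : 0 < q)
    (hm : IsPrim m) (hm' : IsPrim m') (h : (q : ℤ) • m = (q' : ℤ) • m') : q = q' ∧ m = m' := by
  have hqq : q = q' := by
    obtain ⟨c, hc⟩ := hm
    obtain ⟨c', hc'⟩ := hm'
    have h1 := congrArg (fun v => c ⬝ᵥ v) h
    have h2 := congrArg (fun v => c' ⬝ᵥ v) h
    simp only [dotProduct_smul, hc, hc', smul_eq_mul, mul_one] at h1 h2
    exact Nat.dvd_antisymm (Int.natCast_dvd_natCast.1 ⟨_, h2.symm⟩)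
      (Int.natCast_dvd_natCast.1 ⟨_, h1⟩)
  refine ⟨hqq, ?_⟩
  subst hqq
  exact smul_right_injective _ (by exact_mod_cast hq.ne' : (q : ℤ) ≠ 0) h

/-- Every nonzero integer vector is uniquely a positive multiple of a primitive vector. -/
def primEquiv (n : ℕ) : ℕ × {m : Fin n → ℤ // IsPrim m} ≃ {m : Fin n → ℤ // m ≠ 0} :=
  Equiv.ofBijective (fun p => ⟨((p.1 + 1 : ℕ) : ℤ) • p.2.1,
      smul_ne_zero (by positivity) p.2.2.ne_zero⟩) (by
    constructor
    · rintro ⟨q, m, hm⟩ ⟨q', m', hm'⟩ h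
      obtain ⟨h1, h2⟩ := prim_smul_injective (Nat.succ_pos q) hm hm' (congrArg Subtype.val h)
      simp only [Prod.mk.injEq, Subtype.mk.injEq]
      exact ⟨by omega, h2⟩
    · rintro ⟨m, hm⟩
      obtain ⟨q, m', hq, hm', rfl⟩ := exists_prim_of_ne_zero hm
      refine ⟨⟨q - 1, m', hm'⟩, Subtype.ext ?_⟩
      simp only [Nat.sub_add_cancel hq])

lemma vecOf_smul (g : SLR n) (q : ℤ) (m : Fin n → ℤ) :
    vecOf n g (q • m) = (q : ℝ) • vecOf n g m := by
  rw [Bump.vecOf_eq, Bump.vecOf_eq, ← Matrix.mulVec_smul]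
  congr 1
  funext i
  simp [intVec]

namespace Bump

variable (b : Bump n)

/-- The scaled bump function. -/
def sc (T : ℝ) : (Fin n → ℝ) → ℝ≥0∞ := fun x => b.f (T⁻¹ • x)

lemma measurable_sc (T : ℝ) : Measurable (b.sc T) :=
  b.measurable.comp (measurable_const_smul T⁻¹)

lemma f_zero : b.f 0 = 0 := by
  by_contra h
  have := b.le_supp 0 h
  rw [norm_zero] at this
  exact absurd this (not_le.2 b.r_pos)

lemma full_eq_tsum_primSum (T : ℝ) (g : SLR n) :
    b.full T g = ∑' q : ℕ, primSum (b.sc (T / (q + 1 : ℕ))) g := by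
  have h1 : b.full T g = ∑' m : {m : Fin n → ℤ // m ≠ 0}, b.f (T⁻¹ • vecOf n g m) := by
    unfold full
    refine (tsum_subtype_eq_of_support_subset (s := {m : Fin n → ℤ | m ≠ 0}) ?_).symm
    intro m hm
    rw [Function.mem_support] at hm
    rintro rfl
    apply hm
    have : vecOf n g 0 = 0 := by
      simpa using vecOf_smul g 0 0
    rw [this, smul_zero, f_zero]
  rw [h1, ← (primEquiv n).tsum_eq, ENNReal.tsum_prod']
  congr 1
  funext q
  unfold primSum
  congr 1
  funext m
  have : ((primEquiv n (q, m) : {m : Fin n → ℤ // m ≠ 0}) : Fin n → ℤ) =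
    ((q + 1 : ℕ) : ℤ) • m.1 := rfl
  rw [this, vecOf_smul, smul_smul, sc, inv_div, div_eq_mul_inv, mul_comm T⁻¹]
  norm_cast

lemma primSum_sc_le_full (T : ℝ) (g : SLR n) : primSum (b.sc T) g ≤ b.full T g := by
  rw [full_eq_tsum_primSum]
  refine le_trans (le_of_eq ?_) (ENNReal.le_tsum 0)
  simp

/-- A bound for the coordinates of integer vectors in terms of lattice vectors. -/
lemma exists_norm_le (g : SLR n) : ∃ E : ℝ, 0 < E ∧ ∀ m : Fin n → ℤ,
    ‖intVec m‖ ≤ E * ‖vecOf n g m‖ := by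
  let L := LinearMap.toContinuousLinearMap
    (Matrix.toLin' ((g⁻¹ : SLR n) : Matrix (Fin n) (Fin n) ℝ))
  refine ⟨‖L‖ + 1, by positivity, fun m => ?_⟩
  have h1 : L (vecOf n g m) = intVec m := by
    change ((g⁻¹ : SLR n) : Matrix (Fin n) (Fin n) ℝ).mulVec
      ((g : Matrix (Fin n) (Fin n) ℝ).mulVec (intVec m)) = _
    rw [Matrix.mulVec_mulVec, ← Matrix.SpecialLinearGroup.coe_mul, inv_mul_cancel]
    simp
  rw [← h1]
  refine (L.le_opNorm _).trans ?_
  gcongr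
  simp

variable {b}

lemma norm_vecOf_le {g : SLR n} {T : ℝ} (hT : 0 < T) {m : Fin n → ℤ}
    (h : b.f (T⁻¹ • vecOf n g m) ≠ 0) : ‖vecOf n g m‖ ≤ T * b.R := by
  have h1 := b.supp_le _ h
  rwa [norm_smul, norm_inv, Real.norm_of_nonneg hT.le, inv_mul_le_iff₀ hT] at h1

lemma full_le_of_norm_le {g : SLR n} {E : ℝ} (hE : 0 < E)
    (hg : ∀ m : Fin n → ℤ, ‖intVec m‖ ≤ E * ‖vecOf n g m‖) {T : ℝ} (hT : 0 < T) :
    b.full T g ≤ ENNReal.ofReal ((3 * E * b.R * T) ^ n) := by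
  have hR := b.R_pos
  set s := E * (T * b.R)
  have hs : 0 < s := by positivity
  let S : Finset (Fin n → ℤ) := Fintype.piFinset fun _ => Finset.Icc (-⌊s⌋) ⌊s⌋
  have hmem : ∀ m : Fin n → ℤ, b.f (T⁻¹ • vecOf n g m) ≠ 0 → m ∈ S ∧ 1 ≤ s := by
    intro m hm
    have h2 : ‖intVec m‖ ≤ s := (hg m).trans
      (mul_le_mul_of_nonneg_left (norm_vecOf_le hT hm) hE.le)
    have h3 : ∀ i, |(m i : ℝ)| ≤ s := fun i => (norm_le_pi_norm (intVec m) i).trans h2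
    constructor
    · simp only [S, Fintype.mem_piFinset, Finset.mem_Icc, ← abs_le]
      intro i
      rw [Int.le_floor]
      have := h3 i
      push_cast
      exact this
    · by_contra! hlt
      have : m = 0 := by
        funext i
        have h4 := (h3 i).trans_lt hlt
        have : |m i| < 1 := by exact_mod_cast h4
        simpa using Int.abs_lt_one_iff.1 this
      subst this
      apply hm
      have : vecOf n g 0 = 0 := by simpa using vecOf_smul g 0 0
      rw [this, smul_zero, f_zero]
  by_cases h1 : 1 ≤ s
  · calc b.full T g = ∑ m ∈ S, b.f (T⁻¹ • vecOf n g m) := by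
          refine tsum_eq_sum fun m hm => ?_
          by_contra h
          exact hm (hmem m h).1
      _ ≤ ∑ m ∈ S, 1 := Finset.sum_le_sum fun m _ => b.le_one _
      _ = ((S.card : ℝ≥0∞)) := by simp
      _ = ENNReal.ofReal ((2 * ⌊s⌋ + 1 : ℝ) ^ n) := by
          have hf : 0 ≤ ⌊s⌋ := Int.floor_nonneg.2 hs.le
          have hc : (S.card : ℝ) = (2 * ⌊s⌋ + 1 : ℝ) ^ n := by
            have h5 : ((⌊s⌋ + 1 - -⌊s⌋).toNat : ℤ) = 2 * ⌊s⌋ + 1 := by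
              rw [Int.toNat_of_nonneg (by omega)]; ring
            simp only [S, Fintype.card_piFinset, Int.card_Icc, Finset.prod_const,
              Finset.card_univ, Fintype.card_fin]
            push_cast
            congr 1
            exact_mod_cast h5
          rw [← hc, ENNReal.ofReal_natCast]
      _ ≤ _ := by
          apply ENNReal.ofReal_le_ofReal
          have hf : (0 : ℝ) ≤ ⌊s⌋ := by exact_mod_cast Int.floor_nonneg.2 hs.le
          apply pow_le_pow_left₀ (by positivity)
          have := Int.floor_le s
          have e : 3 * E * b.R * T = 3 * s := by simp only [s]; ring
          rw [e]
          linarith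
  · have : b.full T g = 0 := by
      unfold full
      rw [ENNReal.tsum_eq_zero]
      intro m
      by_contra h
      exact h1 (hmem m h).2
    rw [this]; exact zero_le

lemma full_lt_top {g : SLR n} {T : ℝ} (hT : 0 < T) : b.full T g < ∞ := by
  obtain ⟨E, hE, hg⟩ := exists_norm_le g
  exact (full_le_of_norm_le hE hg hT).trans_lt ENNReal.ofReal_lt_top

end Bump

lemma tsum_inv_sq : ∑' q : ℕ, ENNReal.ofReal (1 / ((q : ℝ) + 1) ^ 2) =
    ENNReal.ofReal (π ^ 2 / 6) := by
  have h := (hasSum_nat_add_iff' 1).2 hasSum_zeta_two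
  norm_num at h
  simp_rw [← one_div] at h
  rw [← ENNReal.ofReal_tsum_of_nonneg (fun q => by positivity) h.summable, h.tsum_eq]

lemma tsum_inv_pow_le (hn : 2 ≤ n) : ∑' q : ℕ, ENNReal.ofReal (1 / ((q : ℝ) + 2) ^ n) ≤
    ENNReal.ofReal (3 / 4) := by
  have h := (hasSum_nat_add_iff' 2).2 hasSum_zeta_two
  simp only [Finset.sum_range_succ, Finset.range_zero, Finset.sum_empty, Nat.cast_zero, ne_eq,
    OfNat.ofNat_ne_zero,
    not_false_eq_true, zero_pow, Nat.cast_add, Nat.cast_one, Nat.cast_ofNat] at h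
  calc ∑' q : ℕ, ENNReal.ofReal (1 / ((q : ℝ) + 2) ^ n)
      ≤ ∑' q : ℕ, ENNReal.ofReal (1 / ((q : ℝ) + 2) ^ 2) := by
        refine ENNReal.tsum_le_tsum fun q => ENNReal.ofReal_le_ofReal ?_
        have hq : (0 : ℝ) ≤ q := by positivity
        exact one_div_le_one_div_of_le (by positivity) (pow_le_pow_right₀ (by linarith) hn)
    _ = _ := by
        rw [← ENNReal.ofReal_tsum_of_nonneg (fun q => by positivity) h.summable]
    _ ≤ _ := by
        rw [h.tsum_eq]
        apply ENNReal.ofReal_le_ofReal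
        have := Real.pi_lt_d2
        have := Real.pi_pos
        nlinarith

end

section

namespace Bump
variable {n : ℕ} (b : Bump n)

/-- The asymptotic lattice point count. -/
lemma tendsto_full_div (hn : 0 < n) (g : SLR n) :
    Tendsto (fun T : ℝ => b.full T g / ENNReal.ofReal (T ^ n)) atTop (nhds b.mass) := by
  obtain ⟨D, hD0, hD⟩ := exists_diam g
  have herr : Tendsto (fun T : ℝ => ENNReal.ofReal (b.err D * T⁻¹)) atTop (nhds 0) := by
    rw [← ENNReal.ofReal_zero]
    refine ENNReal.tendsto_ofReal ?_
    simpa using tendsto_inv_atTop_zero.const_mul (b.err D)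
  have hE : ∀ T : ℝ, 1 ≤ T → ENNReal.ofReal (b.err D * T ^ (n - 1)) / ENNReal.ofReal (T ^ n) =
      ENNReal.ofReal (b.err D * T⁻¹) := by
    intro T hT
    have hT0 : 0 < T := by linarith
    rw [← ENNReal.ofReal_div_of_pos (by positivity)]
    congr 1
    obtain ⟨k, rfl⟩ : ∃ k, n = k + 1 := ⟨n - 1, by omega⟩
    simp only [Nat.add_sub_cancel]
    field_simp
    ring
  have hP : ∀ T : ℝ, 1 ≤ T → ENNReal.ofReal (T ^ n) ≠ 0 := by
    intro T hT
    have hT0 : 0 < T := by linarith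
    simpa using pow_pos hT0 n
  refine tendsto_of_tendsto_of_tendsto_of_le_of_le'
    (g := fun T : ℝ => b.mass - ENNReal.ofReal (b.err D * T⁻¹))
    (h := fun T : ℝ => b.mass + ENNReal.ofReal (b.err D * T⁻¹)) ?_ ?_ ?_ ?_
  · simpa using ENNReal.Tendsto.sub tendsto_const_nhds herr (Or.inr (by simp))
  · simpa using tendsto_const_nhds.add herr
  · filter_upwards [eventually_ge_atTop 1] with T hT
    rw [tsub_le_iff_right, ← hE T hT, ← ENNReal.add_div,
      ENNReal.le_div_iff_mul_le (Or.inl (hP T hT)) (Or.inl ENNReal.ofReal_ne_top), mul_comm]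
    exact le_full hn hD hT
  · filter_upwards [eventually_ge_atTop 1] with T hT
    rw [← hE T hT, ENNReal.div_le_iff_le_mul (Or.inl (hP T hT)) (Or.inl ENNReal.ofReal_ne_top),
      add_mul, ENNReal.div_mul_cancel (hP T hT) ENNReal.ofReal_ne_top, mul_comm]
    exact full_le hn hD hT

/-- A positive proportion of lattice points is primitive. -/
lemma eventually_le_primSum (hn : 2 ≤ n) (hM : b.mass ≠ 0) (g : SLR n) :
    ∀ᶠ T : ℝ in atTop, ENNReal.ofReal (T ^ n) * b.mass ≤ 16 * primSum (b.sc T) g := by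
  obtain ⟨E, hE, hg⟩ := exists_norm_le g
  have hR := b.R_pos
  have hMt : b.mass ≠ ∞ := b.mass_lt_top.ne
  let P : ℝ → ℝ≥0∞ := fun T => ENNReal.ofReal (T ^ n)
  have hP0 : ∀ T : ℝ, 0 < T → P T ≠ 0 := fun T hT => by simpa [P] using pow_pos hT n
  have hPt : ∀ T, P T ≠ ∞ := fun T => ENNReal.ofReal_ne_top
  let G : ℝ → ℕ → ℝ≥0∞ := fun T q => b.full (T / ((q : ℝ) + 2)) g / P T
  have hratio : ∀ T : ℝ, 0 < T → ∀ q : ℕ,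
      G T q = ENNReal.ofReal (1 / ((q : ℝ) + 2) ^ n) *
        (b.full (T / ((q : ℝ) + 2)) g / P (T / ((q : ℝ) + 2))) := by
    intro T hT q
    have e : P T = ENNReal.ofReal (((q : ℝ) + 2) ^ n) * P (T / ((q : ℝ) + 2)) := by
      simp only [P]
      rw [← ENNReal.ofReal_mul (by positivity), ← mul_pow]
      congr 2
      field_simp
    have hq : (0 : ℝ) < ((q : ℝ) + 2) ^ n := by positivity
    simp only [G]
    rw [e, one_div, ENNReal.ofReal_inv_of_pos hq, div_eq_mul_inv, div_eq_mul_inv (b.full _ _),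
      div_eq_mul_inv, ENNReal.mul_inv (Or.inr (hPt _)) (Or.inl ENNReal.ofReal_ne_top)]
    ring
  have hlim : Tendsto (fun T => ∫⁻ q, G T q ∂Measure.count) atTop
      (nhds (∫⁻ q : ℕ, ENNReal.ofReal (1 / ((q : ℝ) + 2) ^ n) * b.mass ∂Measure.count)) := by
    refine tendsto_lintegral_filter_of_dominated_convergence
      (fun q : ℕ => ENNReal.ofReal (1 / ((q : ℝ) + 2) ^ n) * ENNReal.ofReal ((3 * E * b.R) ^ n))
      (Eventually.of_forall fun _ => measurable_of_countable _) ?_ ?_ ?_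
    · filter_upwards [eventually_gt_atTop 0] with T hT
      refine Eventually.of_forall fun q => ?_
      rw [hratio T hT q]
      gcongr
      have hTq : 0 < T / ((q : ℝ) + 2) := by positivity
      rw [ENNReal.div_le_iff_le_mul (Or.inl (hP0 _ hTq)) (Or.inl (hPt _)),
        ← ENNReal.ofReal_mul (by positivity), ← mul_pow]
      exact full_le_of_norm_le hE hg hTq
    · rw [lintegral_count, ENNReal.tsum_mul_right]
      refine ENNReal.mul_ne_top ?_ ENNReal.ofReal_ne_top
      exact ((tsum_inv_pow_le hn).trans_lt ENNReal.ofReal_lt_top).ne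
    · refine Eventually.of_forall fun q => ?_
      have h1 : Tendsto (fun T : ℝ => T / ((q : ℝ) + 2)) atTop atTop :=
        tendsto_id.atTop_div_const (by positivity)
      have h2 := ENNReal.Tendsto.const_mul ((b.tendsto_full_div (by omega) g).comp h1)
        (a := ENNReal.ofReal (1 / ((q : ℝ) + 2) ^ n)) (Or.inr ENNReal.ofReal_ne_top)
      refine h2.congr' ?_
      filter_upwards [eventually_gt_atTop 0] with T hT
      exact (hratio T hT q).symm
  have hub : ∫⁻ q : ℕ, ENNReal.ofReal (1 / ((q : ℝ) + 2) ^ n) * b.mass ∂Measure.count <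
      ENNReal.ofReal (7 / 8) * b.mass := by
    rw [lintegral_count, ENNReal.tsum_mul_right]
    refine (ENNReal.mul_lt_mul_iff_left hM hMt).2 ((tsum_inv_pow_le hn).trans_lt ?_)
    exact (ENNReal.ofReal_lt_ofReal_iff (by norm_num)).2 (by norm_num)
  have hlb : ENNReal.ofReal (15 / 16) * b.mass < b.mass := by
    conv_rhs => rw [← one_mul b.mass]
    refine (ENNReal.mul_lt_mul_iff_left hM hMt).2 ?_
    rw [← ENNReal.ofReal_one]
    exact (ENNReal.ofReal_lt_ofReal_iff (by norm_num)).2 (by norm_num)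
  filter_upwards [hlim.eventually_lt_const hub,
    (b.tendsto_full_div (by omega) g).eventually_const_lt hlb, eventually_gt_atTop 0]
    with T h1 h2 hT
  have h3 : b.full T g ≤ primSum (b.sc T) g + ∑' q : ℕ, b.full (T / ((q : ℝ) + 2)) g := by
    rw [full_eq_tsum_primSum, tsum_eq_zero_add' ENNReal.summable]
    simp only [zero_add, Nat.cast_one, div_one]
    gcongr with q
    refine le_trans (le_of_eq ?_) (b.primSum_sc_le_full _ g)
    congr 3
    push_cast; ring
  have h4 : ∑' q : ℕ, b.full (T / ((q : ℝ) + 2)) g ≤ ENNReal.ofReal (7 / 8) * b.mass * P T := by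
    rw [lintegral_count] at h1
    simp only [G, div_eq_mul_inv] at h1
    rw [ENNReal.tsum_mul_right, ← div_eq_mul_inv] at h1
    exact (ENNReal.div_le_iff_le_mul (Or.inl (hP0 T hT)) (Or.inl (hPt T))).1 h1.le
  have h5 : ENNReal.ofReal (15 / 16) * b.mass * P T ≤ b.full T g :=
    (ENNReal.le_div_iff_mul_le (Or.inl (hP0 T hT)) (Or.inl (hPt T))).1 h2.le
  have h6 : ENNReal.ofReal (1 / 16) * b.mass * P T + ENNReal.ofReal (7 / 8) * b.mass * P T ≤
      primSum (b.sc T) g + ENNReal.ofReal (7 / 8) * b.mass * P T := by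
    rw [← add_mul, ← add_mul, ← ENNReal.ofReal_add (by norm_num) (by norm_num)]
    norm_num only
    exact h5.trans (h3.trans (by gcongr))
  have h7 := (ENNReal.add_le_add_iff_right (ENNReal.mul_ne_top
    (ENNReal.mul_ne_top ENNReal.ofReal_ne_top hMt) (hPt T))).1 h6
  calc ENNReal.ofReal (T ^ n) * b.mass = 16 * (ENNReal.ofReal (1 / 16) * b.mass * P T) := by
        rw [← mul_assoc, ← mul_assoc, show (16 : ℝ≥0∞) = ENNReal.ofReal 16 by simp,
          ← ENNReal.ofReal_mul (by norm_num)]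
        norm_num
        exact mul_comm _ _
    _ ≤ _ := by gcongr

end Bump

end

/-! ### Hecke operators -/

section

variable {n : ℕ}

lemma mk_eq_of_vecOf {g₁ g₂ : SLR n} (h : ∀ m, ∃ m', vecOf n g₂ m = vecOf n g₁ m') :
    (QuotientGroup.mk g₁ : LatticeSpace n) = QuotientGroup.mk g₂ := by
  choose φ hφ using fun j : Fin n => h (Pi.single j 1)
  have hintegral : ∀ j : Fin n, intVec (Pi.single j 1) = Pi.single j (1 : ℝ) := by
    intro j
    funext i
    by_cases hij : i = j
    · subst hij; simp [intVec]
    · simp [intVec, hij]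
  have key : ((g₁⁻¹ * g₂ : SLR n) : Matrix (Fin n) (Fin n) ℝ) =
      (Matrix.of fun i j => φ j i).map (Int.castRingHom ℝ) := by
    ext i j
    have h1 : ((g₁⁻¹ * g₂ : SLR n) : Matrix (Fin n) (Fin n) ℝ).mulVec (Pi.single j 1) =
        intVec (φ j) := by
      rw [← hintegral, ← Bump.vecOf_eq, vecOf_mul, hφ, ← vecOf_mul, inv_mul_cancel, Bump.vecOf_eq]
      simp
    have h2 := congrFun h1 i
    rw [Matrix.mulVec_single_one] at h2
    simpa [intVec] using h2
  rw [QuotientGroup.eq]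
  refine ⟨⟨Matrix.of fun i j => φ j i, ?_⟩, ?_⟩
  · have hd : ((Matrix.of fun i j => φ j i).map (Int.castRingHom ℝ)).det = 1 := by
      rw [← key]; exact (g₁⁻¹ * g₂).2
    have hd' := (RingHom.map_det (Int.castRingHom ℝ) (Matrix.of fun i j => φ j i)).trans hd
    simp only [eq_intCast] at hd'
    exact_mod_cast hd'
  · apply Subtype.ext
    exact key.symm

/-- The integer vectors orthogonal to `a` modulo `p`. -/
def IsOrth {p : ℕ} (a : Fin n → ZMod p) (m : Fin n → ℤ) : Prop :=
  a ⬝ᵥ (fun i => (m i : ZMod p)) = 0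

lemma exists_integer_hecke {p : ℕ} [Fact p.Prime] {a : Fin n → ZMod p} (ha : a ≠ 0) :
    ∃ H : Matrix (Fin n) (Fin n) ℤ, H.det = p ∧
      ∀ m, IsOrth a m ↔ ∃ m', H.mulVec m' = m := by
  obtain ⟨i, hi⟩ := Function.ne_iff.1 ha
  simp only [Pi.zero_apply] at hi
  let v : Fin n → ℤ := fun j => if j = i then (p : ℤ) else ((-(a i)⁻¹ * a j).val : ℤ)
  refine ⟨(1 : Matrix (Fin n) (Fin n) ℤ).updateRow i v, ?_, fun m => ?_⟩
  · rw [← Matrix.cramer_transpose_apply]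
    simp [v]
  have hmul : ∀ m' : Fin n → ℤ, ((1 : Matrix (Fin n) (Fin n) ℤ).updateRow i v).mulVec m' =
      Function.update m' i (v ⬝ᵥ m') := by
    intro m'
    funext j
    by_cases hj : j = i
    · subst hj; simp [Matrix.mulVec]
    · simp [Matrix.mulVec, hj, Matrix.one_apply, dotProduct]
  have hva : ∀ m' : Fin n → ℤ, ((v ⬝ᵥ m' : ℤ) : ZMod p) =
      -(a i)⁻¹ * ∑ j ∈ Finset.univ.erase i, a j * (m' j : ZMod p) := by
    intro m'
    rw [dotProduct, ← Finset.add_sum_erase _ _ (Finset.mem_univ i), Finset.mul_sum]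
    push_cast
    rw [show ((v i : ℤ) : ZMod p) = 0 by simp [v], zero_mul, zero_add]
    refine Finset.sum_congr rfl fun j hj => ?_
    have : ((v j : ℤ) : ZMod p) = -(a i)⁻¹ * a j := by
      simp only [v, if_neg (Finset.ne_of_mem_erase hj)]
      rw [Int.cast_natCast, ZMod.natCast_zmod_val]
    rw [this]; ring
  have horth : ∀ m : Fin n → ℤ, IsOrth a m ↔
      (m i : ZMod p) = -(a i)⁻¹ * ∑ j ∈ Finset.univ.erase i, a j * (m j : ZMod p) := by
    intro m
    rw [IsOrth, dotProduct, ← Finset.add_sum_erase _ _ (Finset.mem_univ i)]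
    constructor
    · intro h
      have : ∑ j ∈ Finset.univ.erase i, a j * (m j : ZMod p) = - (a i * m i) := by
        linear_combination h
      rw [this]
      field_simp
    · intro h
      rw [h]
      field_simp
      ring
  constructor
  · intro hm
    rw [horth] at hm
    have h1 : ((m i - (v ⬝ᵥ Function.update m i 0) : ℤ) : ZMod p) = 0 := by
      push_cast
      have := hva (Function.update m i 0)
      rw [this, hm, sub_eq_zero]
      congr 1
      refine Finset.sum_congr rfl fun j hj => ?_
      rw [Function.update_of_ne (Finset.ne_of_mem_erase hj)]
    obtain ⟨k, hk⟩ := (ZMod.intCast_zmod_eq_zero_iff_dvd _ p).1 h1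
    refine ⟨Function.update m i k, ?_⟩
    rw [hmul, Function.update_idem]
    have h2 : v ⬝ᵥ Function.update m i k = v ⬝ᵥ Function.update m i 0 + p * k := by
      rw [dotProduct, dotProduct, ← Finset.add_sum_erase _ _ (Finset.mem_univ i),
        ← Finset.add_sum_erase Finset.univ (fun j => v j * Function.update m i 0 j)
          (Finset.mem_univ i)]
      have : ∑ j ∈ Finset.univ.erase i, v j * Function.update m i k j =
          ∑ j ∈ Finset.univ.erase i, v j * Function.update m i 0 j := by
        refine Finset.sum_congr rfl fun j hj => ?_
        rw [Function.update_of_ne (Finset.ne_of_mem_erase hj),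
          Function.update_of_ne (Finset.ne_of_mem_erase hj)]
      rw [this]
      simp [v]
      ring
    rw [h2, ← hk, add_sub_cancel]
    exact Function.update_eq_self i m
  · rintro ⟨m', rfl⟩
    rw [horth, hmul, Function.update_self, hva]
    congr 1
    refine Finset.sum_congr rfl fun j hj => ?_
    rw [Function.update_of_ne (Finset.ne_of_mem_erase hj)]

/-- The scaling factor which makes a sublattice of index `p` unimodular. -/
def heckeScale (n p : ℕ) : ℝ := (p : ℝ) ^ (n : ℝ)⁻¹

lemma heckeScale_pos {p : ℕ} (hp : p.Prime) : 0 < heckeScale n p :=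
  Real.rpow_pos_of_pos (by exact_mod_cast hp.pos) _

lemma heckeScale_pow (hn : n ≠ 0) (p : ℕ) : heckeScale n p ^ n = p :=
  Real.rpow_inv_natCast_pow (by positivity) hn

lemma exists_rescale (hn : n ≠ 0) {p : ℕ} (hp : p.Prime) {H : Matrix (Fin n) (Fin n) ℤ}
    (hH : H.det = p) :
    ∃ h : SLR n, ∀ m, vecOf n h m = (heckeScale n p)⁻¹ • intVec (H.mulVec m) := by
  have hdet : ((heckeScale n p)⁻¹ • H.map (Int.castRingHom ℝ)).det = 1 := by
    rw [Matrix.det_smul, Fintype.card_fin, inv_pow, heckeScale_pow hn]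
    have := (RingHom.map_det (Int.castRingHom ℝ) H).symm
    rw [RingHom.mapMatrix_apply] at this
    rw [this, hH]
    have : (p : ℝ) ≠ 0 := by exact_mod_cast hp.ne_zero
    simp [this]
  obtain ⟨h, hh⟩ : ∃ h : SLR n, (h : Matrix (Fin n) (Fin n) ℝ) =
    (heckeScale n p)⁻¹ • H.map (Int.castRingHom ℝ) := ⟨⟨_, hdet⟩, rfl⟩
  refine ⟨h, fun m => ?_⟩
  rw [Bump.vecOf_eq, hh, Matrix.smul_mulVec]
  congr 1
  funext i
  simp [intVec, Matrix.mulVec, dotProduct]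

lemma exists_hecke (hn : n ≠ 0) {p : ℕ} [hp : Fact p.Prime] {a : Fin n → ZMod p} (ha : a ≠ 0) :
    ∃ h : SLR n, (∀ m', ∃ m, IsOrth a m ∧ vecOf n h m' = (heckeScale n p)⁻¹ • intVec m) ∧
      ∀ m, IsOrth a m → ∃ m', vecOf n h m' = (heckeScale n p)⁻¹ • intVec m := by
  obtain ⟨H, hH, hm⟩ := exists_integer_hecke ha
  obtain ⟨h, hh⟩ := exists_rescale hn hp.out hH
  refine ⟨h, fun m' => ⟨H.mulVec m', (hm _).2 ⟨m', rfl⟩, hh m'⟩, fun m hmo => ?_⟩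
  obtain ⟨m', rfl⟩ := (hm m).1 hmo
  exact ⟨m', hh m'⟩

/-- A matrix whose lattice is the rescaled lattice of integer vectors orthogonal to `a`
modulo `p`. -/
def hecke (hn : n ≠ 0) {p : ℕ} [Fact p.Prime] (a : {a : Fin n → ZMod p // a ≠ 0}) : SLR n :=
  (exists_hecke hn a.2).choose

lemma exists_isOrth_of_hecke (hn : n ≠ 0) {p : ℕ} [Fact p.Prime]
    (a : {a : Fin n → ZMod p // a ≠ 0}) (m' : Fin n → ℤ) :
    ∃ m, IsOrth a.1 m ∧ vecOf n (hecke hn a) m' = (heckeScale n p)⁻¹ • intVec m :=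
  (exists_hecke hn a.2).choose_spec.1 m'

lemma exists_hecke_of_isOrth (hn : n ≠ 0) {p : ℕ} [Fact p.Prime]
    (a : {a : Fin n → ZMod p // a ≠ 0}) {m : Fin n → ℤ} (hm : IsOrth a.1 m) :
    ∃ m', vecOf n (hecke hn a) m' = (heckeScale n p)⁻¹ • intVec m :=
  (exists_hecke hn a.2).choose_spec.2 m hm

/-- The action of `SL(n, ℤ)` on nonzero row vectors modulo `p`. -/
def actRow (p : ℕ) (γ : Matrix.SpecialLinearGroup (Fin n) ℤ) :
    {a : Fin n → ZMod p // a ≠ 0} ≃ {a : Fin n → ZMod p // a ≠ 0} :=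
  let A (δ : Matrix.SpecialLinearGroup (Fin n) ℤ) : Matrix (Fin n) (Fin n) (ZMod p) :=
    (δ : Matrix (Fin n) (Fin n) ℤ).map (Int.castRingHom (ZMod p))
  have hA : ∀ δ δ', A δ * A δ' = A (δ * δ') := fun δ δ' => by
    simp only [A, Matrix.SpecialLinearGroup.coe_mul, Matrix.map_mul]
  have h1 : A 1 = 1 := by simp [A]
  have hne : ∀ δ (a : Fin n → ZMod p), a ≠ 0 → a ᵥ* A δ ≠ 0 := fun δ a ha h => ha (by
    have := congrArg (fun v => v ᵥ* A δ⁻¹) h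
    simpa only [Matrix.vecMul_vecMul, hA, mul_inv_cancel, h1, Matrix.vecMul_one,
      Matrix.zero_vecMul] using this)
  { toFun := fun a => ⟨a.1 ᵥ* A γ⁻¹, hne _ _ a.2⟩
    invFun := fun a => ⟨a.1 ᵥ* A γ, hne _ _ a.2⟩
    left_inv := fun a => Subtype.ext (by
      simp only [Matrix.vecMul_vecMul, hA, inv_mul_cancel, h1, Matrix.vecMul_one])
    right_inv := fun a => Subtype.ext (by
      simp only [Matrix.vecMul_vecMul, hA, mul_inv_cancel, h1, Matrix.vecMul_one]) }

lemma isOrth_actRow {p : ℕ} (γ : Matrix.SpecialLinearGroup (Fin n) ℤ)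
    (a : {a : Fin n → ZMod p // a ≠ 0}) {m : Fin n → ℤ} (hm : IsOrth a.1 m) :
    IsOrth (actRow p γ a).1 (actInt γ m) := by
  have h1 : (fun i => ((actInt γ m) i : ZMod p)) =
      ((γ : Matrix (Fin n) (Fin n) ℤ).map (Int.castRingHom (ZMod p))).mulVec
        (fun i => (m i : ZMod p)) := by
    funext i
    simp [actInt, Matrix.mulVec, dotProduct]
  have h2 : (actRow p γ a).1 = a.1 ᵥ* ((γ⁻¹ : Matrix.SpecialLinearGroup (Fin n) ℤ) :
    Matrix (Fin n) (Fin n) ℤ).map (Int.castRingHom (ZMod p)) := rfl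
  rw [IsOrth, h1, h2, Matrix.dotProduct_mulVec, Matrix.vecMul_vecMul, ← Matrix.map_mul,
    ← Matrix.SpecialLinearGroup.coe_mul, inv_mul_cancel]
  unfold IsOrth at hm
  simpa using hm

lemma mk_mul_hecke (hn : n ≠ 0) {p : ℕ} [Fact p.Prime] (g : SLR n)
    (γ : Matrix.SpecialLinearGroup (Fin n) ℤ) (a : {a : Fin n → ZMod p // a ≠ 0}) :
    (QuotientGroup.mk (g * hecke hn (actRow p γ a)) : LatticeSpace n) =
      QuotientGroup.mk (g * ofInt γ * hecke hn a) := by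
  apply mk_eq_of_vecOf
  intro m'
  obtain ⟨m, hm, h⟩ := exists_isOrth_of_hecke hn a m'
  obtain ⟨m'', h''⟩ := exists_hecke_of_isOrth hn (actRow p γ a) (isOrth_actRow γ a hm)
  refine ⟨m'', ?_⟩
  rw [vecOf_mul, vecOf_mul g, h, h'', Matrix.mulVec_smul, Matrix.mulVec_smul, ← Bump.vecOf_eq,
    ← Bump.vecOf_eq, vecOf_mul_ofInt]
  rfl

/-- The Hecke correspondence at the prime `p`, as a measure-valued function. -/
def heckeMeasure (hn : n ≠ 0) (p : ℕ) [Fact p.Prime] (x : LatticeSpace n) :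
    Measure (LatticeSpace n) :=
  Quotient.liftOn' x
    (fun g => Measure.sum fun a : {a : Fin n → ZMod p // a ≠ 0} =>
      Measure.dirac (QuotientGroup.mk (g * hecke hn a) : LatticeSpace n))
    (by
      intro g g' hgg
      rw [QuotientGroup.leftRel_apply] at hgg
      obtain ⟨δ, hδ⟩ := exists_ofInt hgg
      have hb : g' = g * ofInt δ := by rw [hδ]; group
      subst hb
      ext s hs
      simp only [Measure.sum_apply _ hs]
      rw [← (actRow p δ).tsum_eq]
      simp only [mk_mul_hecke])

lemma lintegral_heckeMeasure (hn : n ≠ 0) (p : ℕ) [Fact p.Prime] (g : SLR n)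
    {f : LatticeSpace n → ℝ≥0∞} (hf : Measurable f) :
    ∫⁻ x, f x ∂(heckeMeasure hn p (QuotientGroup.mk g)) =
      ∑ a : {a : Fin n → ZMod p // a ≠ 0}, f (QuotientGroup.mk (g * hecke hn a)) := by
  have : heckeMeasure hn p (QuotientGroup.mk g) =
    Measure.sum fun a : {a : Fin n → ZMod p // a ≠ 0} =>
      Measure.dirac (QuotientGroup.mk (g * hecke hn a) : LatticeSpace n) := rfl
  rw [this, lintegral_sum_measure, tsum_fintype]
  simp [lintegral_dirac' _ hf]

lemma measurable_heckeMeasure (hn : n ≠ 0) (p : ℕ) [Fact p.Prime] :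
    Measurable (heckeMeasure hn p) := by
  apply measurable_of_comp_mk
  apply Measure.measurable_of_measurable_coe
  intro s hs
  have : (fun g : SLR n => heckeMeasure hn p (QuotientGroup.mk g) s) =
      fun g => ∑ a : {a : Fin n → ZMod p // a ≠ 0},
        s.indicator 1 (QuotientGroup.mk (g * hecke hn a) : LatticeSpace n) := by
    funext g
    rw [← lintegral_heckeMeasure hn p g (measurable_one.indicator hs), lintegral_indicator_one hs]
  rw [this]
  exact Finset.measurable_sum _ fun a _ => (measurable_one.indicator hs).comp
    ((measurable_mk_SLR n).comp (continuous_mul_const _).measurable)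

/-- The invariant probability measure is stable under Hecke operators. -/
lemma InvariantLat.hecke_eq {μ : Measure (LatticeSpace n)} [IsProbabilityMeasure μ]
    (hμ : InvariantLat μ) (hn : n ≠ 0) (p : ℕ) [hp : Fact p.Prime]
    {f : LatticeSpace n → ℝ≥0∞} (hf : Measurable f) :
    ∫⁻ x, f x ∂μ = ∫⁻ x, ((p ^ n - 1 : ℕ) : ℝ≥0∞)⁻¹ * ∫⁻ y, f y ∂(heckeMeasure hn p x) ∂μ := by
  set N : ℝ≥0∞ := ((p ^ n - 1 : ℕ) : ℝ≥0∞)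
  have hcard : (Fintype.card {a : Fin n → ZMod p // a ≠ 0} : ℝ≥0∞) = N := by
    simp only [N]
    congr 1
    rw [Fintype.card_subtype_compl, Fintype.card_subtype_eq]
    simp [ZMod.card]
  have hN0 : N ≠ 0 := by
    have h1 : 1 < p ^ n := Nat.one_lt_pow hn hp.out.one_lt
    simp only [N, ne_eq, Nat.cast_eq_zero]
    omega
  have hNt : N ≠ ∞ := ENNReal.natCast_ne_top _
  set ν := N⁻¹ • μ.bind (heckeMeasure hn p)
  have hν : ∀ {f : LatticeSpace n → ℝ≥0∞}, Measurable f →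
      ∫⁻ x, f x ∂ν = ∫⁻ x, N⁻¹ * ∫⁻ y, f y ∂(heckeMeasure hn p x) ∂μ := by
    intro f hf
    rw [lintegral_smul_measure, Measure.lintegral_bind
      (measurable_heckeMeasure hn p).aemeasurable hf.aemeasurable, smul_eq_mul,
      lintegral_const_mul]
    exact (Measure.measurable_lintegral hf).comp (measurable_heckeMeasure hn p)
  have : IsProbabilityMeasure ν := by
    constructor
    rw [← lintegral_one, hν measurable_const]
    refine (lintegral_congr (g := fun _ => 1) fun x => ?_).trans (by simp)
    induction x using QuotientGroup.induction_on with
    | H g =>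
      rw [lintegral_heckeMeasure hn p g measurable_const]
      simp only [Finset.sum_const, Finset.card_univ, nsmul_eq_mul, mul_one]
      rw [hcard, ENNReal.inv_mul_cancel hN0 hNt]
  have hνi : InvariantLat ν := by
    intro h s hs
    have hs' := measurable_smul_lat h hs
    rw [← lintegral_indicator_one hs, ← lintegral_indicator_one hs',
      hν (measurable_one.indicator hs), hν (measurable_one.indicator hs')]
    conv_rhs => rw [← hμ.map_eq h]
    rw [lintegral_map _ (measurable_smul_lat h)]
    · congr 1
      funext x
      induction x using QuotientGroup.induction_on with
      | H g =>
        have : h • (QuotientGroup.mk g : LatticeSpace n) = QuotientGroup.mk (h * g) := rfl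
        rw [this, lintegral_heckeMeasure hn p _ (measurable_one.indicator hs),
          lintegral_heckeMeasure hn p _ (measurable_one.indicator hs')]
        congr 2
        funext a
        rw [mul_assoc]
        rfl
    · exact ((Measure.measurable_lintegral (measurable_one.indicator hs)).comp
        (measurable_heckeMeasure hn p)).const_mul _
  rw [← hν hf, hμ.unique hνi]

end

/-! ### Counting and Chebyshev's inequality for Hecke points -/

section

lemma chebyshev_count {A ι : Type*} [Fintype A] (P : Finset ι) (w : ι → ℝ)
    (hw0 : ∀ m, 0 ≤ w m) (hw1 : ∀ m, w m ≤ 1) (e : A → ι → ℝ) (he0 : ∀ a m, 0 ≤ e a m)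
    (he1 : ∀ a m, e a m ≤ 1) {p q : ℝ} (hp : 0 < p) (hA : (Fintype.card A : ℝ) = q)
    (s : ι → ι → Prop) [∀ m m', Decidable (s m m')] (B : Finset A)
    (hB : ∀ a ∈ B, ∑ m ∈ P, w m * e a m = 0)
    (h1 : ∀ m ∈ P, p * ∑ a, e a m = q)
    (h2 : ∀ m ∈ P, ∀ m' ∈ P, ¬ s m m' → p ^ 2 * ∑ a, e a m * e a m' = q)
    (h3 : ∀ m ∈ P, (P.filter (s m)).card ≤ 2) :
    (B.card : ℝ) * ∑ m ∈ P, w m ≤ 2 * p * q := by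
  set W := ∑ m ∈ P, w m
  set N : A → ℝ := fun a => ∑ m ∈ P, w m * e a m
  have hW : 0 ≤ W := Finset.sum_nonneg fun m _ => hw0 m
  have hq : 0 ≤ q := hA ▸ Nat.cast_nonneg _
  have hN : p * ∑ a, N a = q * W := by
    simp only [N]
    rw [Finset.sum_comm]
    simp_rw [← Finset.mul_sum]
    rw [Finset.mul_sum, Finset.mul_sum]
    exact Finset.sum_congr rfl fun m hm => by rw [← h1 m hm]; ring
  have hN2 : p ^ 2 * ∑ a, N a ^ 2 ≤ q * W ^ 2 + 2 * p * q * W := by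
    have e1 : p ^ 2 * ∑ a, N a ^ 2 =
        ∑ m ∈ P, ∑ m' ∈ P, w m * w m' * (p ^ 2 * ∑ a, e a m * e a m') := by
      simp only [N, sq (∑ m ∈ P, _), Finset.sum_mul_sum]
      rw [Finset.sum_comm, Finset.mul_sum]
      refine Finset.sum_congr rfl fun m _ => ?_
      rw [Finset.sum_comm, Finset.mul_sum]
      refine Finset.sum_congr rfl fun m' _ => ?_
      rw [Finset.mul_sum, Finset.mul_sum, Finset.mul_sum]
      exact Finset.sum_congr rfl fun a _ => by ring
    have e2 : ∀ m ∈ P, ∑ m' ∈ P, w m * w m' * (p ^ 2 * ∑ a, e a m * e a m') ≤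
        w m * (q * W + 2 * p * q) := by
      intro m hm
      have e3 : ∀ m' ∈ P, w m * w m' * (p ^ 2 * ∑ a, e a m * e a m') ≤
          w m * (w m' * q + if s m m' then p * q else 0) := by
        intro m' hm'
        rw [mul_assoc]
        refine mul_le_mul_of_nonneg_left ?_ (hw0 m)
        split_ifs with hs
        · have e4 : ∑ a, e a m * e a m' ≤ ∑ a, e a m :=
            Finset.sum_le_sum fun a _ => mul_le_of_le_one_right (he0 a m) (he1 a m')
          have e5 : p ^ 2 * ∑ a, e a m * e a m' ≤ p * q := by
            rw [← h1 m hm, ← mul_assoc, ← sq]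
            exact mul_le_mul_of_nonneg_left e4 (by positivity)
          have e6 : 0 ≤ p ^ 2 * ∑ a, e a m * e a m' := mul_nonneg (by positivity)
            (Finset.sum_nonneg fun a _ => mul_nonneg (he0 _ _) (he0 _ _))
          have e7 : w m' * (p ^ 2 * ∑ a, e a m * e a m') ≤ p * q :=
            (mul_le_of_le_one_left e6 (hw1 m')).trans e5
          have e8 : 0 ≤ w m' * q := mul_nonneg (hw0 _) hq
          linarith
        · rw [h2 m hm m' hm' hs, add_zero]
      refine (Finset.sum_le_sum e3).trans ?_
      rw [← Finset.mul_sum, Finset.sum_add_distrib, ← Finset.sum_mul, ← Finset.sum_filter,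
        Finset.sum_const, nsmul_eq_mul]
      refine mul_le_mul_of_nonneg_left ?_ (hw0 m)
      have e9 : ((P.filter (s m)).card : ℝ) * (p * q) ≤ 2 * (p * q) :=
        mul_le_mul_of_nonneg_right (by exact_mod_cast h3 m hm) (by positivity)
      have : W * q = q * W := mul_comm _ _
      change W * q + _ ≤ _
      linarith
    rw [e1]
    refine (Finset.sum_le_sum e2).trans (le_of_eq ?_)
    rw [← Finset.sum_mul]
    change W * _ = _
    ring
  have hV : ∑ a, (p * N a - W) ^ 2 ≤ 2 * p * q * W := by
    have : ∑ a, (p * N a - W) ^ 2 =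
        p ^ 2 * ∑ a, N a ^ 2 - 2 * W * (p * ∑ a, N a) + q * W ^ 2 := by
      have e1 : q * W ^ 2 = ∑ _a : A, W ^ 2 := by simp [hA]
      rw [e1, Finset.mul_sum Finset.univ, Finset.mul_sum Finset.univ, Finset.mul_sum Finset.univ,
        ← Finset.sum_sub_distrib,
        ← Finset.sum_add_distrib]
      exact Finset.sum_congr rfl fun a _ => by ring
    rw [this, hN]
    nlinarith
  have hBW : (B.card : ℝ) * W ^ 2 ≤ 2 * p * q * W := by
    refine le_trans ?_ hV
    have : (B.card : ℝ) * W ^ 2 = ∑ a ∈ B, (p * N a - W) ^ 2 := by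
      rw [← nsmul_eq_mul, ← Finset.sum_const]
      exact Finset.sum_congr rfl fun a ha => by
        rw [show N a = 0 from hB a ha]; ring
    rw [this]
    exact Finset.sum_le_sum_of_subset_of_nonneg (Finset.subset_univ _) fun _ _ _ => sq_nonneg _
  rcases hW.eq_or_lt with h | h
  · rw [← h, mul_zero]; positivity
  · exact le_of_mul_le_mul_right (by linarith) h

lemma card_filter_eq_zero_mul {V W : Type*} [AddCommGroup V] [AddCommGroup W] [Fintype V]
    [Fintype W] [DecidableEq W] (φ : V →+ W) (hφ : Function.Surjective φ) :
    (Finset.univ.filter fun v => φ v = 0).card * Fintype.card W = Fintype.card V := by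
  have h := AddSubgroup.card_mul_index φ.ker
  rw [AddSubgroup.index_ker, AddMonoidHom.range_eq_top.2 hφ] at h
  rw [← Nat.card_eq_fintype_card (α := V), ← h, ← Nat.card_eq_fintype_card (α := W)]
  congr 1
  · rw [← Nat.subtype_card _ (fun x => Iff.rfl)]
    simp
  · simp

variable {n : ℕ}

/-- The pairing of row vectors modulo `p` with a fixed integer vector. -/
def pairing (p : ℕ) (m : Fin n → ℤ) : (Fin n → ZMod p) →+ ZMod p where
  toFun a := a ⬝ᵥ (fun i => (m i : ZMod p))
  map_zero' := zero_dotProduct _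
  map_add' _ _ := add_dotProduct _ _ _

lemma pairing_surjective {p : ℕ} {m : Fin n → ℤ} (hm : IsPrim m) :
    Function.Surjective (pairing p m) := by
  obtain ⟨c, hc⟩ := hm
  intro u
  refine ⟨u • fun i => (c i : ZMod p), ?_⟩
  have : (fun i => (c i : ZMod p)) ⬝ᵥ (fun i => (m i : ZMod p)) = 1 := by
    have := congrArg (Int.cast : ℤ → ZMod p) hc
    simpa [dotProduct] using this
  change (u • fun i => (c i : ZMod p)) ⬝ᵥ _ = _
  rw [smul_dotProduct, this, smul_eq_mul, mul_one]

lemma pairing_prod_surjective {p : ℕ} [Fact p.Prime] {m m' : Fin n → ℤ} {i j : Fin n}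
    (h : ((m i * m' j - m j * m' i : ℤ) : ZMod p) ≠ 0) :
    Function.Surjective ((pairing p m).prod (pairing p m')) := by
  rintro ⟨u, v⟩
  push_cast at h
  refine ⟨Pi.single i ((u * m' j - v * m j) / (m i * m' j - m j * m' i)) +
    Pi.single j ((v * m i - u * m' i) / (m i * m' j - m j * m' i)), ?_⟩
  simp only [AddMonoidHom.prod_apply, pairing, AddMonoidHom.coe_mk, ZeroHom.coe_mk,
    add_dotProduct, single_dotProduct, Prod.mk.injEq]
  constructor <;> rw [div_mul_eq_mul_div, div_mul_eq_mul_div, ← add_div, div_eq_iff h] <;> ring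

lemma card_isOrth {p : ℕ} [Fact p.Prime] {m : Fin n → ℤ} (hm : IsPrim m) :
    (p : ℝ) * ∑ a : Fin n → ZMod p, (if pairing p m a = 0 then (1 : ℝ) else 0) =
      (p : ℝ) ^ n := by
  rw [Finset.sum_boole, mul_comm]
  have := card_filter_eq_zero_mul _ (pairing_surjective (p := p) hm)
  simp only [ZMod.card, Fintype.card_pi, Finset.prod_const, Finset.card_univ,
    Fintype.card_fin] at this
  exact_mod_cast this

lemma card_isOrth_pair {p : ℕ} [Fact p.Prime] {m m' : Fin n → ℤ} {i j : Fin n}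
    (h : ((m i * m' j - m j * m' i : ℤ) : ZMod p) ≠ 0) :
    (p : ℝ) ^ 2 * ∑ a : Fin n → ZMod p, (if pairing p m a = 0 then (1 : ℝ) else 0) *
      (if pairing p m' a = 0 then (1 : ℝ) else 0) = (p : ℝ) ^ n := by
  have e : ∀ a : Fin n → ZMod p, (if pairing p m a = 0 then (1 : ℝ) else 0) *
      (if pairing p m' a = 0 then (1 : ℝ) else 0) =
      if ((pairing p m).prod (pairing p m')) a = 0 then 1 else 0 := by
    intro a
    by_cases h1 : pairing p m a = 0 <;> by_cases h2 : pairing p m' a = 0 <;>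
      simp [h1, h2]
  simp_rw [e]
  rw [Finset.sum_boole, mul_comm]
  have := card_filter_eq_zero_mul _ (pairing_prod_surjective h)
  simp only [ZMod.card, Fintype.card_pi, Finset.prod_const, Finset.card_univ,
    Fintype.card_fin, Fintype.card_prod] at this
  rw [sq]
  exact_mod_cast this

lemma eq_or_eq_neg_of_minors {m m' : Fin n → ℤ} (hm : IsPrim m) (hm' : IsPrim m')
    (h : ∀ i j, m i * m' j - m j * m' i = 0) : m' = m ∨ m' = -m := by
  obtain ⟨c, hc⟩ := hm
  obtain ⟨c', hc'⟩ := hm'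
  have h1 : m' = (c ⬝ᵥ m') • m := by
    funext j
    have : m' j = (c ⬝ᵥ m) * m' j := by rw [hc, one_mul]
    rw [this, Pi.smul_apply, smul_eq_mul, dotProduct, dotProduct, Finset.sum_mul, Finset.sum_mul]
    exact Finset.sum_congr rfl fun i _ => by linear_combination c i * h i j
  have h2 : (c ⬝ᵥ m') * (c' ⬝ᵥ m) = 1 := by
    conv_rhs => rw [← hc', h1]
    rw [dotProduct_smul, smul_eq_mul]
  rcases Int.isUnit_iff.1 (IsUnit.of_mul_eq_one _ h2) with h3 | h3
  · left; rw [h1, h3, one_smul]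
  · right; rw [h1, h3, neg_smul, one_smul]

end

section

variable {n : ℕ}

/-- The function on the space of lattices induced by a function invariant under the
right action of `SL(n, ℤ)`. -/
def descend (F : SLR n → ℝ≥0∞)
    (hF : ∀ g (γ : Matrix.SpecialLinearGroup (Fin n) ℤ), F (g * ofInt γ) = F g)
    (x : LatticeSpace n) : ℝ≥0∞ :=
  Quotient.liftOn' x F (by
    intro a b hab
    rw [QuotientGroup.leftRel_apply] at hab
    obtain ⟨δ, hδ⟩ := exists_ofInt hab
    have hb : b = a * ofInt δ := by rw [hδ]; group
    rw [hb, hF])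

lemma measurable_descend {F : SLR n → ℝ≥0∞}
    {hF : ∀ g (γ : Matrix.SpecialLinearGroup (Fin n) ℤ), F (g * ofInt γ) = F g}
    (hm : Measurable F) : Measurable (descend F hF) :=
  measurable_of_comp_mk hm

/-- `primSum` as a function of the lattice. -/
def latPrimSum (F : (Fin n → ℝ) → ℝ≥0∞) : LatticeSpace n → ℝ≥0∞ :=
  descend (primSum F) (primSum_mul_ofInt F)

@[simp] lemma latPrimSum_mk (F : (Fin n → ℝ) → ℝ≥0∞) (g : SLR n) :
    latPrimSum F (QuotientGroup.mk g) = primSum F g := rfl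

lemma measurable_latPrimSum {F : (Fin n → ℝ) → ℝ≥0∞} (hF : Measurable F) :
    Measurable (latPrimSum F) := measurable_descend (measurable_primSum hF)

namespace Bump

variable (b : Bump n)

lemma full_mul_ofInt (T : ℝ) (g : SLR n) (γ : Matrix.SpecialLinearGroup (Fin n) ℤ) :
    b.full T (g * ofInt γ) = b.full T g := by
  simp_rw [full_eq_tsum_primSum, primSum_mul_ofInt]

lemma measurable_full (T : ℝ) : Measurable (b.full T) := by
  have : b.full T = fun g => ∑' q : ℕ, primSum (b.sc (T / (q + 1 : ℕ))) g :=
    funext fun g => b.full_eq_tsum_primSum T g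
  rw [this]
  exact Measurable.tsum fun q => measurable_primSum (b.measurable_sc _)

/-- `Bump.full` as a function of the lattice. -/
def latFull (T : ℝ) : LatticeSpace n → ℝ≥0∞ := descend (b.full T) (b.full_mul_ofInt T)

@[simp] lemma latFull_mk (T : ℝ) (g : SLR n) :
    b.latFull T (QuotientGroup.mk g) = b.full T g := rfl

lemma measurable_latFull (T : ℝ) : Measurable (b.latFull T) :=
  measurable_descend (b.measurable_full T)

lemma full_eq_zero {T : ℝ} {g : SLR n} (h : b.full T g = 0) (m : Fin n → ℤ) :
    b.f (T⁻¹ • vecOf n g m) = 0 := ENNReal.tsum_eq_zero.1 h m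

lemma abs_le_of_ne_zero {g : SLR n} {E : ℝ} (hE : 0 < E)
    (hg : ∀ m : Fin n → ℤ, ‖intVec m‖ ≤ E * ‖vecOf n g m‖) {T : ℝ} (hT : 0 < T)
    {m : Fin n → ℤ} (h : b.f (T⁻¹ • vecOf n g m) ≠ 0) (i : Fin n) :
    |(m i : ℝ)| ≤ E * (T * b.R) :=
  (norm_le_pi_norm (intVec m) i).trans
    ((hg m).trans (mul_le_mul_of_nonneg_left (b.norm_vecOf_le hT h) hE.le))

lemma finite_support (g : SLR n) {T : ℝ} (hT : 0 < T) :
    {m : {m : Fin n → ℤ // IsPrim m} | b.f (T⁻¹ • vecOf n g m) ≠ 0}.Finite := by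
  obtain ⟨E, hE, hg⟩ := exists_norm_le g
  set s := E * (T * b.R)
  have hf : (Set.univ.pi fun _ : Fin n => Set.Icc (-⌊s⌋) ⌊s⌋).Finite :=
    Set.Finite.pi fun _ => Set.finite_Icc _ _
  refine Set.Finite.subset (hf.preimage (Subtype.val_injective.injOn)) fun m hm => ?_
  intro i _
  have h := abs_le.1 (b.abs_le_of_ne_zero hE hg hT hm i)
  refine ⟨?_, Int.le_floor.2 h.2⟩
  have : -(m.1 i) ≤ ⌊s⌋ := Int.le_floor.2 (by push_cast; linarith)
  linarith

lemma card_avoiding_hecke_le {g : SLR n} {E : ℝ} (hE : 0 < E)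
    (hg : ∀ m : Fin n → ℤ, ‖intVec m‖ ≤ E * ‖vecOf n g m‖) (hn : n ≠ 0) {p : ℕ} [hp : Fact p.Prime]
    (hlarge : 2 * (E * (heckeScale n p * b.R)) ^ 2 < p)
    (B : Finset {a : Fin n → ZMod p // a ≠ 0}) (hB : ∀ a ∈ B, b.full 1 (g * hecke hn a) = 0) :
    (B.card : ℝ) * (primSum (b.sc (heckeScale n p)) g).toReal ≤ 2 * p * (p : ℝ) ^ n := by
  classical
  set T := heckeScale n p
  have hT : 0 < T := heckeScale_pos hp.out
  have hlt : ∀ x, b.f x ≠ ∞ := fun x => ((b.le_one x).trans_lt ENNReal.one_lt_top).ne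
  let P := (b.finite_support g hT).toFinset
  have hP : ∀ m ∈ P, b.f (T⁻¹ • vecOf n g m) ≠ 0 := fun m hm =>
    (b.finite_support g hT).mem_toFinset.1 hm
  let w : {m : Fin n → ℤ // IsPrim m} → ℝ := fun m => (b.f (T⁻¹ • vecOf n g m)).toReal
  have hsum : (primSum (b.sc T) g).toReal = ∑ m ∈ P, w m := by
    rw [← ENNReal.toReal_sum fun m _ => hlt _]
    congr 1
    refine tsum_eq_sum fun m hm => ?_
    by_contra h
    exact hm ((b.finite_support g hT).mem_toFinset.2 h)
  have key := chebyshev_count (A := Fin n → ZMod p) P w (fun m => ENNReal.toReal_nonneg)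
    (fun m => ENNReal.toReal_le_of_le_ofReal zero_le_one (by simpa using b.le_one _))
    (fun a m => if pairing p m.1 a = 0 then (1 : ℝ) else 0)
    (fun a m => by split_ifs <;> simp) (fun a m => by split_ifs <;> simp)
    (p := p) (q := (p : ℝ) ^ n) (by exact_mod_cast hp.out.pos)
    (by simp) (fun m m' => m'.1 = m.1 ∨ m'.1 = -m.1)
    (B.map (Function.Embedding.subtype _)) ?_ (fun m _ => card_isOrth m.2) ?_ ?_
  · rwa [Finset.card_map, ← hsum] at key
  · intro a ha
    obtain ⟨a, haB, rfl⟩ := Finset.mem_map.1 ha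
    refine Finset.sum_eq_zero fun m hm => ?_
    rw [mul_eq_zero]
    right
    rw [if_neg]
    intro ho
    obtain ⟨m', hm'⟩ := exists_hecke_of_isOrth hn a (m := m.1) ho
    have := b.full_eq_zero (hB a haB) m'
    rw [vecOf_mul, hm', Matrix.mulVec_smul, ← vecOf_eq, inv_one, one_smul] at this
    exact hP m hm this
  · intro m hm m' hm' hs
    obtain ⟨i, j, hij⟩ : ∃ i j, m.1 i * m'.1 j - m.1 j * m'.1 i ≠ 0 := by
      by_contra! h
      exact hs (eq_or_eq_neg_of_minors m.2 m'.2 h)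
    refine card_isOrth_pair (i := i) (j := j) fun h => hij ?_
    have hd := (ZMod.intCast_zmod_eq_zero_iff_dvd _ p).1 h
    refine Int.eq_zero_of_abs_lt_dvd hd ?_
    have hm1 := b.abs_le_of_ne_zero hE hg hT (hP m hm)
    have hm2 := b.abs_le_of_ne_zero hE hg hT (hP m' hm')
    have : |((m.1 i * m'.1 j - m.1 j * m'.1 i : ℤ) : ℝ)| ≤ 2 * (E * (T * b.R)) ^ 2 := by
      push_cast
      refine (abs_sub _ _).trans ?_
      rw [abs_mul, abs_mul]
      have h1 := mul_le_mul (hm1 i) (hm2 j) (abs_nonneg _) ((abs_nonneg _).trans (hm1 i))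
      have h2 := mul_le_mul (hm1 j) (hm2 i) (abs_nonneg _) ((abs_nonneg _).trans (hm1 j))
      linarith
    have := this.trans_lt hlarge
    exact_mod_cast this
  · intro m _
    have hneg : IsPrim (-m.1) := by
      obtain ⟨c, hc⟩ := m.2
      exact ⟨-c, by rw [neg_dotProduct_neg, hc]⟩
    refine (Finset.card_le_card (t := {m, ⟨-m.1, hneg⟩}) fun m' hm' => ?_).trans
      Finset.card_le_two
    rcases (Finset.mem_filter.1 hm').2 with h | h
    · simp [Subtype.ext_iff, h]
    · simp [Subtype.ext_iff, h]

lemma tendsto_heckeScale (hn : n ≠ 0) : Tendsto (fun p : ℕ => heckeScale n p) atTop atTop :=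
  (tendsto_rpow_atTop (by positivity)).comp tendsto_natCast_atTop_atTop

lemma eventually_large (hn : 3 ≤ n) (E : ℝ) :
    ∀ᶠ p : ℕ in atTop, 2 * (E * (heckeScale n p * b.R)) ^ 2 < p := by
  filter_upwards [(tendsto_heckeScale (n := n) (by omega)).eventually_gt_atTop (max 1 (2 * (E * b.R) ^ 2))] with p hp
  have hp1 : 1 < heckeScale n p := (le_max_left _ _).trans_lt hp
  have hp2 : 2 * (E * b.R) ^ 2 < heckeScale n p := (le_max_right _ _).trans_lt hp
  have h3 : heckeScale n p ^ 3 ≤ p := by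
    conv_rhs => rw [← heckeScale_pow (n := n) (by omega) p]
    exact pow_le_pow_right₀ hp1.le hn
  have h4 := mul_lt_mul_of_pos_right hp2 (pow_pos (zero_lt_one.trans hp1) 2)
  nlinarith

/-- The bound for avoiding lattices in dimension at least three. -/
theorem measure_latFull_eq_zero_le_of_three_le (hn : 3 ≤ n) {μ : Measure (LatticeSpace n)}
    [IsProbabilityMeasure μ] (hμ : InvariantLat μ) (hM : b.mass ≠ 0) :
    μ {x | b.latFull 1 x = 0} ≤ 64 / b.mass := by
  have hn0 : n ≠ 0 := by omega
  set s := {x | b.latFull 1 x = 0}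
  have hs : MeasurableSet s := b.measurable_latFull 1 (measurableSet_singleton 0)
  have hind : Measurable (s.indicator (1 : LatticeSpace n → ℝ≥0∞)) := measurable_one.indicator hs
  have hfact : ∀ k, Fact (Nat.nth Nat.Prime k).Prime := fun k => ⟨Nat.prime_nth_prime k⟩
  let P : ℕ → ℕ := fun k => Nat.nth Nat.Prime k
  have hPt : Tendsto P atTop atTop :=
    (Nat.nth_strictMono Nat.infinite_setOfPred_prime).tendsto_atTop
  let F : ℕ → LatticeSpace n → ℝ≥0∞ := fun k x => ((P k ^ n - 1 : ℕ) : ℝ≥0∞)⁻¹ *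
    ∫⁻ y, s.indicator 1 y ∂(heckeMeasure hn0 (P k) x)
  have hF : ∀ k, ∫⁻ x, F k x ∂μ = μ s := fun k => by
    rw [← lintegral_indicator_one hs]
    exact (hμ.hecke_eq hn0 (P k) hind).symm
  have hFm : ∀ k, Measurable (F k) := fun k =>
    ((Measure.measurable_lintegral hind).comp (measurable_heckeMeasure hn0 (P k))).const_mul _
  have hFmk : ∀ k g, ∃ B : Finset {a : Fin n → ZMod (P k) // a ≠ 0},
      (∀ a ∈ B, b.full 1 (g * hecke hn0 a) = 0) ∧
      F k (QuotientGroup.mk g) = ((P k ^ n - 1 : ℕ) : ℝ≥0∞)⁻¹ * B.card := by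
    intro k g
    classical
    refine ⟨Finset.univ.filter fun a => b.full 1 (g * hecke hn0 a) = 0, fun a ha =>
      (Finset.mem_filter.1 ha).2, ?_⟩
    simp only [F]
    rw [lintegral_heckeMeasure hn0 (P k) g hind, Finset.card_filter]
    push_cast
    congr 1
    exact Finset.sum_congr rfl fun a _ => Set.indicator_apply _ _ _
  have hcard : ∀ k, Fintype.card {a : Fin n → ZMod (P k) // a ≠ 0} = P k ^ n - 1 := fun k => by
    rw [Fintype.card_subtype_compl, Fintype.card_subtype_eq]
    simp [ZMod.card]
  have hpn : ∀ k, 2 ≤ P k ^ n := fun k =>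
    (hfact k).out.two_le.trans (Nat.le_self_pow hn0 _)
  have hF1 : ∀ k x, F k x ≤ 1 := by
    intro k x
    induction x using QuotientGroup.induction_on with
    | H g =>
      obtain ⟨B, -, hB⟩ := hFmk k g
      rw [hB]
      refine (mul_le_mul_right (Nat.cast_le.2 ((Finset.card_le_univ B).trans (hcard k).le)) _).trans ?_
      exact ENNReal.inv_mul_le_one _
  have hlim : ∀ x, limsup (fun k => F k x) atTop ≤ 64 / b.mass := by
    intro x
    induction x using QuotientGroup.induction_on with
    | H g =>
      obtain ⟨E, hE, hg⟩ := exists_norm_le g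
      refine limsup_le_of_le (h := ?_)
      filter_upwards [hPt.eventually (b.eventually_large hn E),
        ((tendsto_heckeScale hn0).comp hPt).eventually
          (b.eventually_le_primSum (by omega) hM g)] with k h1 h2
      obtain ⟨B, hB0, hB⟩ := hFmk k g
      have h3 := b.card_avoiding_hecke_le hE hg hn0 h1 B hB0
      simp only [Function.comp_apply] at h2
      rw [heckeScale_pow hn0] at h2
      have hMt : b.mass ≠ ∞ := b.mass_lt_top.ne
      have hM0 : 0 < b.mass.toReal := ENNReal.toReal_pos hM hMt
      have hT : 0 < heckeScale n (P k) := heckeScale_pos (hfact k).out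
      have hWt : primSum (b.sc (heckeScale n (P k))) g ≠ ∞ :=
        ((b.primSum_sc_le_full _ g).trans_lt (b.full_lt_top hT)).ne
      have h4 := ENNReal.toReal_mono (ENNReal.mul_ne_top (by simp) hWt) h2
      rw [ENNReal.toReal_mul, ENNReal.toReal_mul, ENNReal.toReal_ofReal (by positivity)] at h4
      have hp0 : (0 : ℝ) < P k := by exact_mod_cast (hfact k).out.pos
      have h16 : (16 : ℝ≥0∞).toReal = 16 := by norm_num
      rw [h16] at h4
      have h5 : (B.card : ℝ) * b.mass.toReal ≤ 32 * (P k : ℝ) ^ n := by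
        have : (P k : ℝ) * ((B.card : ℝ) * b.mass.toReal) ≤ P k * (32 * (P k : ℝ) ^ n) := by
          nlinarith [Nat.cast_nonneg (α := ℝ) B.card]
        exact le_of_mul_le_mul_left this hp0
      have h6 : (P k : ℝ) ^ n ≤ 2 * ((P k ^ n - 1 : ℕ) : ℝ) := by
        have : P k ^ n ≤ 2 * (P k ^ n - 1) := by have := hpn k; omega
        exact_mod_cast this
      have h7 : (B.card : ℝ≥0∞) * b.mass ≤ 64 * ((P k ^ n - 1 : ℕ) : ℝ≥0∞) := by
        rw [← ENNReal.toReal_le_toReal (ENNReal.mul_ne_top (by simp) hMt)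
          (ENNReal.mul_ne_top (by simp) (by simp)), ENNReal.toReal_mul, ENNReal.toReal_mul]
        simp only [ENNReal.toReal_natCast, ENNReal.toReal_ofNat]
        linarith
      rw [hB, ENNReal.le_div_iff_mul_le (Or.inl hM) (Or.inl hMt), mul_assoc]
      refine (mul_le_mul_right h7 _).trans ?_
      rw [mul_left_comm]
      refine (mul_le_mul_right (ENNReal.inv_mul_le_one _) _).trans ?_
      simp
  calc μ s = limsup (fun k => ∫⁻ x, F k x ∂μ) atTop := by simp [hF]
    _ ≤ ∫⁻ x, limsup (fun k => F k x) atTop ∂μ :=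
        limsup_lintegral_le (fun _ => 1) hFm (fun k => ae_of_all _ (hF1 k)) (by simp)
    _ ≤ ∫⁻ _, 64 / b.mass ∂μ := lintegral_mono hlim
    _ = 64 / b.mass := by simp

end Bump

end

/-! ### Lattices in the plane -/

lemma mul_ofInt_apply (g : SLR 2) (γ : Matrix.SpecialLinearGroup (Fin 2) ℤ) (i j : Fin 2) :
    (g * ofInt γ) i j = g i 0 * (γ 0 j : ℝ) + g i 1 * (γ 1 j : ℝ) := by
  rw [Matrix.SpecialLinearGroup.coe_mul, Matrix.mul_apply, Fin.sum_univ_two]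
  simp [ofInt]

lemma det_eq_two (g : SLR 2) : g 0 0 * g 1 1 - g 0 1 * g 1 0 = 1 := by
  have := g.2
  rwa [Matrix.det_fin_two] at this

lemma det_eq_two_int (γ : Matrix.SpecialLinearGroup (Fin 2) ℤ) :
    γ 0 0 * γ 1 1 - γ 0 1 * γ 1 0 = 1 := by
  have := γ.2
  rwa [Matrix.det_fin_two] at this

/-- The first column of a matrix. -/
def firstCol (g : SLR 2) : Fin 2 → ℝ := fun i => g i 0

/-- The squared length of the first column of a matrix. -/
def normCol (g : SLR 2) : ℝ := g 0 0 ^ 2 + g 1 0 ^ 2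

lemma normCol_pos (g : SLR 2) : 0 < normCol g := by
  have h := det_eq_two g
  unfold normCol
  by_contra! h0
  have h1 : g 0 0 = 0 := by nlinarith [sq_nonneg (g 0 0), sq_nonneg (g 1 0)]
  have h2 : g 1 0 = 0 := by nlinarith [sq_nonneg (g 0 0), sq_nonneg (g 1 0)]
  rw [h1, h2] at h
  norm_num at h

/-- The component of the second column along the first. -/
def shear (g : SLR 2) : ℝ := (g 0 0 * g 0 1 + g 1 0 * g 1 1) / normCol g

lemma measurable_entry (i j : Fin 2) : Measurable (fun g : SLR 2 => g i j) :=
  ((isClosedEmbedding_coe_SLR 2).continuous.matrix_elem i j).measurable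

lemma measurable_firstCol : Measurable firstCol :=
  measurable_pi_lambda _ fun i => measurable_entry i 0

lemma measurable_shear : Measurable shear := by
  have := measurable_entry 0 0
  have := measurable_entry 0 1
  have := measurable_entry 1 0
  have := measurable_entry 1 1
  unfold shear normCol
  fun_prop

/-- A unimodular integer matrix with a given first column. -/
def basisOf (m : {m : Fin 2 → ℤ // IsPrim m}) : Matrix.SpecialLinearGroup (Fin 2) ℤ :=
  ⟨!![m.1 0, -m.2.choose 1; m.1 1, m.2.choose 0], by
    have : m.2.choose 0 * m.1 0 + m.2.choose 1 * m.1 1 = 1 :=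
      (Fin.sum_univ_two fun i => m.2.choose i * m.1 i).symm.trans m.2.choose_spec
    rw [Matrix.det_fin_two_of]
    linear_combination this⟩

lemma coe_basisOf (m : {m : Fin 2 → ℤ // IsPrim m}) :
    (basisOf m : Matrix (Fin 2) (Fin 2) ℤ) =
      !![m.1 0, -m.2.choose 1; m.1 1, m.2.choose 0] := rfl

/-- The integer upper triangular unipotent matrices. -/
def upper (i : ℤ) : Matrix.SpecialLinearGroup (Fin 2) ℤ := ⟨!![1, i; 0, 1], by simp⟩

lemma coe_upper (i : ℤ) : (upper i : Matrix (Fin 2) (Fin 2) ℤ) = !![1, i; 0, 1] := rfl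

lemma upper_inj {i j : ℤ} (h : upper i = upper j) : i = j := by
  have := congrArg (fun γ : Matrix.SpecialLinearGroup (Fin 2) ℤ => γ 0 1) h
  simpa [coe_upper] using this

lemma firstCol_mul_basisOf (g : SLR 2) (m : {m : Fin 2 → ℤ // IsPrim m}) :
    firstCol (g * ofInt (basisOf m)) = vecOf 2 g m := by
  funext i
  simp [firstCol, mul_ofInt_apply, vecOf, Matrix.mulVec, dotProduct, coe_basisOf]

lemma firstCol_mul_upper (g : SLR 2) (i : ℤ) : firstCol (g * ofInt (upper i)) = firstCol g := by
  funext j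
  simp [firstCol, mul_ofInt_apply, coe_upper]

lemma shear_mul_upper (g : SLR 2) (i : ℤ) : shear (g * ofInt (upper i)) = shear g + i := by
  have h := (normCol_pos g).ne'
  have h1 : normCol (g * ofInt (upper i)) = normCol g := by
    simp [normCol, mul_ofInt_apply, coe_upper]
  rw [shear, shear, h1, div_add' _ _ _ h]
  congr 1
  simp only [normCol, mul_ofInt_apply, coe_upper]
  simp
  ring

/-- Unimodular integer matrices are parametrized by the first column and an integer. -/
def slEquiv : {m : Fin 2 → ℤ // IsPrim m} × ℤ ≃ Matrix.SpecialLinearGroup (Fin 2) ℤ :=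
  Equiv.ofBijective (fun p => basisOf p.1 * upper p.2) (by
    have hcol : ∀ (m : {m : Fin 2 → ℤ // IsPrim m}) (i : ℤ) (j : Fin 2),
        (basisOf m * upper i) j 0 = m.1 j := by
      intro m i j
      rw [Matrix.SpecialLinearGroup.coe_mul, Matrix.mul_apply, Fin.sum_univ_two]
      fin_cases j <;> simp [coe_basisOf, coe_upper]
    constructor
    · rintro ⟨m, i⟩ ⟨m', i'⟩ h
      have hm : m = m' := by
        refine Subtype.ext (funext fun j => ?_)
        rw [← hcol m i j, ← hcol m' i' j]
        exact congrArg (fun γ : Matrix.SpecialLinearGroup (Fin 2) ℤ => γ j 0) h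
      subst hm
      exact Prod.ext rfl (upper_inj (mul_left_cancel h))
    · intro γ
      have hd := det_eq_two_int γ
      let m : {m : Fin 2 → ℤ // IsPrim m} := ⟨fun j => γ j 0, ![γ 1 1, -γ 0 1], by
        simp [dotProduct, Fin.sum_univ_two]
        linarith⟩
      refine ⟨⟨m, ((basisOf m)⁻¹ * γ) 0 1⟩, ?_⟩
      have hinv : (basisOf m)⁻¹ * γ = upper (((basisOf m)⁻¹ * γ) 0 1) := by
        have hb : (basisOf m)⁻¹ * basisOf m = 1 := inv_mul_cancel _
        have h0 : ∀ j, ((basisOf m)⁻¹ * γ) j 0 = (1 : Matrix (Fin 2) (Fin 2) ℤ) j 0 := by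
          intro j
          rw [← Matrix.SpecialLinearGroup.coe_one, ← hb, Matrix.SpecialLinearGroup.coe_mul,
            Matrix.SpecialLinearGroup.coe_mul, Matrix.mul_apply, Matrix.mul_apply]
          refine Finset.sum_congr rfl fun k _ => ?_
          have : γ k 0 = basisOf m k 0 := by fin_cases k <;> simp [coe_basisOf, m]
          rw [this]
        have h00 := h0 0
        have h10 := h0 1
        simp only [Matrix.one_apply_eq] at h00
        rw [Matrix.one_apply_ne (by decide)] at h10
        have hd' := det_eq_two_int ((basisOf m)⁻¹ * γ)
        rw [h00, h10] at hd'
        ext i j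
        fin_cases i <;> fin_cases j
        · exact h00
        · rfl
        · exact h10
        · change ((basisOf m)⁻¹ * γ) 1 1 = 1
          linarith
      change basisOf m * upper _ = γ
      rw [← hinv, mul_inv_cancel_left])

/-- The indicator of matrices whose shear lies in `[0, s)`, weighted by a function of the first
column. -/
def shearWeight (F : (Fin 2 → ℝ) → ℝ≥0∞) (s : ℝ) (g : SLR 2) : ℝ≥0∞ :=
  (Set.Ico 0 s).indicator (fun _ => F (firstCol g)) (shear g)

lemma measurable_shearWeight {F : (Fin 2 → ℝ) → ℝ≥0∞} (hF : Measurable F) (s : ℝ) :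
    Measurable (shearWeight F s) := by
  have : shearWeight F s = (shear ⁻¹' Set.Ico 0 s).indicator (F ∘ firstCol) := by
    funext g
    rfl
  rw [this]
  exact (hF.comp measurable_firstCol).indicator (measurable_shear measurableSet_Ico)

lemma primSum_eq_tsum_shearWeight (F : (Fin 2 → ℝ) → ℝ≥0∞) (g : SLR 2) :
    primSum F g = ∑' γ : Matrix.SpecialLinearGroup (Fin 2) ℤ, shearWeight F 1 (g * ofInt γ) := by
  rw [← slEquiv.tsum_eq, ENNReal.tsum_prod']
  refine tsum_congr fun m => ?_
  set h := g * ofInt (basisOf m)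
  have e : ∀ i : ℤ, shearWeight F 1 (g * ofInt (slEquiv (m, i))) =
      (Set.Ico (0 : ℝ) 1).indicator (fun _ => F (vecOf 2 g m)) (shear h + i) := by
    intro i
    have : g * ofInt (slEquiv (m, i)) = h * ofInt (upper i) := by
      change g * ofInt (basisOf m * upper i) = _
      rw [map_mul, mul_assoc]
    rw [this, shearWeight, shear_mul_upper, firstCol_mul_upper, firstCol_mul_basisOf]
  simp_rw [e]
  rw [tsum_eq_single (-⌊shear h⌋)]
  · rw [Set.indicator_of_mem]
    push_cast
    exact ⟨by linarith [Int.floor_le (shear h)], by linarith [Int.lt_floor_add_one (shear h)]⟩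
  · intro i hi
    rw [Set.indicator_of_notMem]
    rintro ⟨h1, h2⟩
    apply hi
    have : ⌊shear h⌋ = -i := Int.floor_eq_iff.2 ⟨by push_cast; linarith, by push_cast; linarith⟩
    rw [this, neg_neg]

lemma InvariantLat.lintegral_mul_ofInt {n : ℕ} (μ : Measure (LatticeSpace n))
    (γ : Matrix.SpecialLinearGroup (Fin n) ℤ) {f : SLR n → ℝ≥0∞} (hf : Measurable f) :
    ∫⁻ g, f (g * ofInt γ) ∂(liftMeasure μ) = ∫⁻ g, f g ∂(liftMeasure μ) := by
  conv_rhs => rw [← map_mul_right_ofInt μ γ]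
  rw [lintegral_map hf (measurable_mul_ofInt γ)]

lemma InvariantLat.lintegral_mul_right {n : ℕ} {μ : Measure (LatticeSpace n)}
    [IsProbabilityMeasure μ] (hμ : InvariantLat μ) {b c : SLR n} (hbc : c * b * c⁻¹ = b⁻¹)
    {f : SLR n → ℝ≥0∞} (hf : Measurable f) :
    ∫⁻ g, f (g * b) ∂(liftMeasure μ) = ∫⁻ g, f g ∂(liftMeasure μ) := by
  conv_rhs => rw [← hμ.map_mul_right hbc]
  rw [lintegral_map hf (continuous_mul_const b).measurable]

lemma lintegral_shearWeight_natCast (μ : Measure (LatticeSpace 2))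
    {F : (Fin 2 → ℝ) → ℝ≥0∞} (hF : Measurable F) (q : ℕ) :
    ∫⁻ g, shearWeight F q g ∂(liftMeasure μ) =
      q * ∫⁻ g, shearWeight F 1 g ∂(liftMeasure μ) := by
  induction q with
  | zero => simp [shearWeight]
  | succ q ih =>
    have e : ∀ g, shearWeight F (q + 1 : ℕ) g =
        shearWeight F q g + shearWeight F 1 (g * ofInt (upper (-q))) := by
      intro g
      rw [shearWeight, shearWeight, shearWeight, shear_mul_upper, firstCol_mul_upper]
      push_cast
      have hq : (0 : ℝ) ≤ q := Nat.cast_nonneg q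
      by_cases h0 : 0 ≤ shear g
      · by_cases h1 : shear g < q
        · rw [Set.indicator_of_mem (by constructor <;> linarith),
            Set.indicator_of_mem (by constructor <;> linarith), Set.indicator_of_notMem, add_zero]
          rintro ⟨h, -⟩; linarith
        · by_cases h2 : shear g < q + 1
          · rw [Set.indicator_of_mem (by constructor <;> linarith), Set.indicator_of_notMem,
              Set.indicator_of_mem (by constructor <;> linarith), zero_add]
            rintro ⟨-, h⟩; linarith
          · rw [Set.indicator_of_notMem, Set.indicator_of_notMem, Set.indicator_of_notMem, add_zero]
            · rintro ⟨-, h⟩; linarith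
            · rintro ⟨-, h⟩; linarith
            · rintro ⟨-, h⟩; linarith
      · rw [Set.indicator_of_notMem, Set.indicator_of_notMem, Set.indicator_of_notMem, add_zero]
        · rintro ⟨h, -⟩; linarith
        · rintro ⟨h, -⟩; linarith
        · rintro ⟨h, -⟩; linarith
    simp_rw [e]
    rw [lintegral_add_left (measurable_shearWeight hF _),
      InvariantLat.lintegral_mul_ofInt μ _ (measurable_shearWeight hF _), ih]
    push_cast
    ring

/-- Diagonal matrices of determinant one. -/
def diagSL (l : ℝ) (hl : l ≠ 0) : SLR 2 := ⟨!![l, 0; 0, l⁻¹], by simp [hl]⟩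

lemma coe_diagSL (l : ℝ) (hl : l ≠ 0) :
    (diagSL l hl : Matrix (Fin 2) (Fin 2) ℝ) = !![l, 0; 0, l⁻¹] := rfl

/-- Rotation by a right angle. -/
def rotSL : SLR 2 := ⟨!![0, -1; 1, 0], by simp⟩

lemma coe_rotSL : (rotSL : Matrix (Fin 2) (Fin 2) ℝ) = !![0, -1; 1, 0] := rfl

lemma rot_conj_diag (l : ℝ) (hl : l ≠ 0) :
    rotSL * diagSL l hl * rotSL⁻¹ = (diagSL l hl)⁻¹ := by
  rw [mul_inv_eq_iff_eq_mul, eq_inv_mul_iff_mul_eq]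
  ext i j
  simp only [Matrix.SpecialLinearGroup.coe_mul, coe_diagSL, coe_rotSL]
  fin_cases i <;> fin_cases j <;> simp [Matrix.mul_apply, Fin.sum_univ_two, hl]

lemma lintegral_shearWeight_smul {μ : Measure (LatticeSpace 2)} [IsProbabilityMeasure μ]
    (hμ : InvariantLat μ) {F : (Fin 2 → ℝ) → ℝ≥0∞} (hF : Measurable F) (s : ℝ) {l : ℝ}
    (hl : 0 < l) :
    ∫⁻ g, shearWeight (fun x => F (l • x)) (l ^ 2 * s) g ∂(liftMeasure μ) =
      ∫⁻ g, shearWeight F s g ∂(liftMeasure μ) := by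
  rw [← hμ.lintegral_mul_right (rot_conj_diag l hl.ne') (measurable_shearWeight hF s)]
  congr 1
  funext g
  have hent : ∀ i, (g * diagSL l hl.ne') i 0 = l * g i 0 ∧
      (g * diagSL l hl.ne') i 1 = l⁻¹ * g i 1 := by
    intro i
    simp only [Matrix.SpecialLinearGroup.coe_mul, Matrix.mul_apply, Fin.sum_univ_two, coe_diagSL]
    simp [mul_comm]
  have h1 : firstCol (g * diagSL l hl.ne') = l • firstCol g := by
    funext i
    simp [firstCol, (hent i).1]
  have h2 : shear (g * diagSL l hl.ne') = shear g / l ^ 2 := by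
    have := (normCol_pos g).ne'
    have e : normCol (g * diagSL l hl.ne') = l ^ 2 * normCol g := by
      rw [normCol, normCol, (hent 0).1, (hent 1).1]; ring
    rw [shear, shear, e, (hent 0).1, (hent 1).1, (hent 0).2, (hent 1).2]
    field_simp
  have h3 : shear g / l ^ 2 ∈ Set.Ico 0 s ↔ shear g ∈ Set.Ico 0 (l ^ 2 * s) := by
    have : 0 < l ^ 2 := by positivity
    simp only [Set.mem_Ico, div_lt_iff₀' this]
    rw [le_div_iff₀ this, zero_mul]
  rw [shearWeight, shearWeight, h1, h2]
  by_cases h : shear g ∈ Set.Ico 0 (l ^ 2 * s)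
  · rw [Set.indicator_of_mem h, Set.indicator_of_mem (h3.2 h)]
  · rw [Set.indicator_of_notMem h, Set.indicator_of_notMem fun h' => h (h3.1 h')]

lemma lintegral_latPrimSum_eq (μ : Measure (LatticeSpace 2))
    {F : (Fin 2 → ℝ) → ℝ≥0∞} (hF : Measurable F) :
    ∫⁻ x, latPrimSum F x ∂μ = ∫⁻ g, shearWeight F 1 g ∂(liftMeasure μ) :=
  lintegral_eq_lintegral_liftMeasure μ (measurable_shearWeight hF 1)
    (fun g => primSum_eq_tsum_shearWeight F g)

lemma natCast_mul_lintegral_latPrimSum {μ : Measure (LatticeSpace 2)} [IsProbabilityMeasure μ]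
    (hμ : InvariantLat μ) {F : (Fin 2 → ℝ) → ℝ≥0∞} (hF : Measurable F) {q : ℕ} (hq : 0 < q) :
    q * ∫⁻ x, latPrimSum (fun x => F (√q • x)) x ∂μ = ∫⁻ x, latPrimSum F x ∂μ := by
  rw [lintegral_latPrimSum_eq μ hF,
    lintegral_latPrimSum_eq μ (F := fun x => F (√q • x))
      (hF.comp (measurable_const_smul (√q : ℝ)))]
  have hs : (0 : ℝ) < √q := Real.sqrt_pos.2 (by exact_mod_cast hq)
  rw [← lintegral_shearWeight_smul hμ hF 1 hs, Real.sq_sqrt (Nat.cast_nonneg q), mul_one,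
    lintegral_shearWeight_natCast μ (F := fun x => F (√q • x))
      (hF.comp (measurable_const_smul (√q : ℝ)))]

section

namespace Bump

variable (b : Bump 2)

lemma lintegral_sc_sqrt {μ : Measure (LatticeSpace 2)} [IsProbabilityMeasure μ]
    (hμ : InvariantLat μ) {p q : ℕ} (hp : 0 < p) (hq : 0 < q) :
    ∫⁻ x, latPrimSum (b.sc (√((p : ℝ) / q))) x ∂μ =
      ENNReal.ofReal ((p : ℝ) / q) * ∫⁻ x, latPrimSum b.f x ∂μ := by
  have hp' : (0 : ℝ) < p := by exact_mod_cast hp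
  have hq' : (0 : ℝ) < q := by exact_mod_cast hq
  have hsp := (Real.sqrt_pos.2 hp').ne'
  have h1 := natCast_mul_lintegral_latPrimSum hμ (b.measurable_sc (√(p : ℝ))) hp
  have h2 := natCast_mul_lintegral_latPrimSum hμ (b.measurable_sc (√(p : ℝ))) hq
  have e1 : (fun x => b.sc (√(p : ℝ)) (√(p : ℝ) • x)) = b.f := by
    funext x
    rw [sc, smul_smul, inv_mul_cancel₀ hsp, one_smul]
  have e2 : (fun x => b.sc (√(p : ℝ)) (√(q : ℝ) • x)) = b.sc (√((p : ℝ) / q)) := by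
    funext x
    rw [sc, sc, smul_smul, Real.sqrt_div hp'.le, inv_div, inv_mul_eq_div]
  rw [e1] at h1
  rw [e2] at h2
  have hq0 : (q : ℝ≥0∞) ≠ 0 := by exact_mod_cast hq.ne'
  rw [ENNReal.ofReal_div_of_pos hq', ENNReal.ofReal_natCast, ENNReal.ofReal_natCast,
    ENNReal.div_eq_inv_mul, mul_assoc, h1, ← h2, ← mul_assoc,
    ENNReal.inv_mul_cancel hq0 (ENNReal.natCast_ne_top q), one_mul]

/-- A bound for the diameter of a fundamental cell of a lattice with a primitive vector in the
support of `b`. -/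
def diam : ℝ := 2 * b.R + b.R / b.r ^ 2

lemma diam_nonneg : 0 ≤ b.diam := by
  have := b.R_pos
  have := b.r_pos
  unfold diam
  positivity

lemma exists_reduced {g : SLR 2} (hg : primSum b.f g ≠ 0) :
    ∃ γ : Matrix.SpecialLinearGroup (Fin 2) ℤ, ∀ x ∈ unitCube 2,
      ‖((g * ofInt γ : SLR 2) : Matrix (Fin 2) (Fin 2) ℝ).mulVec x‖ ≤ b.diam := by
  have hR := b.R_pos
  have hr := b.r_pos
  obtain ⟨m, hm⟩ : ∃ m : {m : Fin 2 → ℤ // IsPrim m}, b.f (vecOf 2 g m) ≠ 0 := by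
    by_contra! h
    exact hg (ENNReal.tsum_eq_zero.2 h)
  let k : ℤ := -⌊shear (g * ofInt (basisOf m))⌋
  refine ⟨basisOf m * upper k, ?_⟩
  set h := g * ofInt (basisOf m * upper k)
  have hh : h = g * ofInt (basisOf m) * ofInt (upper k) := by
    rw [mul_assoc, ← map_mul]
  have hcol : firstCol h = vecOf 2 g m := by rw [hh, firstCol_mul_upper, firstCol_mul_basisOf]
  have hshear : shear h = Int.fract (shear (g * ofInt (basisOf m))) := by
    rw [hh, shear_mul_upper, Int.fract]
    push_cast [k]
    ring
  have ht0 : 0 ≤ shear h := hshear ▸ Int.fract_nonneg _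
  have ht1 : shear h ≤ 1 := hshear ▸ (Int.fract_lt_one _).le
  rw [← hcol] at hm
  have hN := normCol_pos h
  have hc : ∀ i, |h i 0| ≤ b.R := fun i => (norm_le_pi_norm (firstCol h) i).trans (b.supp_le _ hm)
  have hNr : b.r ^ 2 ≤ normCol h := by
    by_contra! hlt
    refine absurd (b.le_supp _ hm) (not_le.2 ((pi_norm_lt_iff hr).2 fun i => ?_))
    rw [Real.norm_eq_abs]
    refine abs_lt_of_sq_lt_sq ?_ hr.le
    fin_cases i
    · exact lt_of_le_of_lt (le_add_of_nonneg_right (sq_nonneg _)) hlt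
    · exact lt_of_le_of_lt (le_add_of_nonneg_left (sq_nonneg _)) hlt
  have hs : h 0 0 * h 0 1 + h 1 0 * h 1 1 = shear h * normCol h := by
    rw [shear, div_mul_cancel₀ _ hN.ne']
  have hd := det_eq_two h
  have hdiv : ∀ i, |h i 0 / normCol h| ≤ b.R / b.r ^ 2 := fun i => by
    rw [abs_div, abs_of_pos hN]
    exact div_le_div₀ hR.le (hc i) (by positivity) hNr
  have hts : ∀ i, |shear h * h i 0| ≤ b.R := fun i => by
    rw [abs_mul, abs_of_nonneg ht0]
    exact (mul_le_of_le_one_left (abs_nonneg _) ht1).trans (hc i)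
  have hu : ∀ i, |h i 1| ≤ b.R + b.R / b.r ^ 2 := by
    have h0 : h 0 1 = shear h * h 0 0 - h 1 0 / normCol h := by
      rw [eq_sub_iff_add_eq, ← eq_sub_iff_add_eq', div_eq_iff hN.ne']
      unfold normCol at hs ⊢
      linear_combination h 0 0 * hs - h 1 0 * hd
    have h1 : h 1 1 = shear h * h 1 0 + h 0 0 / normCol h := by
      rw [← sub_eq_iff_eq_add', eq_div_iff hN.ne']
      unfold normCol at hs ⊢
      linear_combination h 0 0 * hd + h 1 0 * hs
    intro i
    fin_cases i
    · change |h 0 1| ≤ _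
      rw [h0]
      exact (abs_sub _ _).trans (add_le_add (hts 0) (hdiv 1))
    · change |h 1 1| ≤ _
      rw [h1]
      exact (abs_add_le _ _).trans (add_le_add (hts 1) (hdiv 0))
  intro x hx
  refine (pi_norm_le_iff_of_nonneg b.diam_nonneg).2 fun i => ?_
  have hx' : ∀ j, |x j| ≤ 1 := fun j => by
    have := hx j trivial
    rw [abs_of_nonneg this.1]
    exact this.2.le
  have e : ((h : Matrix (Fin 2) (Fin 2) ℝ).mulVec x) i = h i 0 * x 0 + h i 1 * x 1 := by
    simp [Matrix.mulVec, dotProduct, Fin.sum_univ_two]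
  rw [e, Real.norm_eq_abs]
  refine (abs_add_le _ _).trans ?_
  rw [abs_mul, abs_mul]
  have k1 := (mul_le_of_le_one_right (abs_nonneg (h i 0)) (hx' 0)).trans (hc i)
  have k2 := (mul_le_of_le_one_right (abs_nonneg (h i 1)) (hx' 1)).trans (hu i)
  unfold diam
  linarith

/-- The constant in the uniform error term of the lattice point count. -/
def errUnif : ℝ := b.err b.diam

lemma errUnif_nonneg : 0 ≤ b.errUnif := b.err_nonneg b.diam_nonneg

lemma full_le_of_primSum_ne_zero {g : SLR 2} (hg : primSum b.f g ≠ 0) {T : ℝ} (hT : 1 ≤ T) :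
    b.full T g ≤ ENNReal.ofReal (T ^ 2) * b.mass + ENNReal.ofReal (b.errUnif * T) := by
  obtain ⟨γ, hγ⟩ := b.exists_reduced hg
  rw [← b.full_mul_ofInt T g γ]
  simpa [errUnif] using b.full_le (by norm_num) hγ hT

lemma sc_one : b.sc 1 = b.f := by
  funext x
  simp [sc]

lemma latPrimSum_mul_latFull_le {T : ℝ} (hT : 1 ≤ T) (x : LatticeSpace 2) :
    latPrimSum b.f x * b.latFull T x ≤
      latPrimSum b.f x * (ENNReal.ofReal (T ^ 2) * b.mass + ENNReal.ofReal (b.errUnif * T)) := by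
  induction x using QuotientGroup.induction_on with
  | H g =>
    rw [latPrimSum_mk, latFull_mk]
    rcases eq_or_ne (primSum b.f g) 0 with h | h
    · simp [h]
    · gcongr
      exact b.full_le_of_primSum_ne_zero h hT

lemma latPrimSum_le (x : LatticeSpace 2) :
    latPrimSum b.f x ≤ b.mass + ENNReal.ofReal b.errUnif := by
  induction x using QuotientGroup.induction_on with
  | H g =>
    rw [latPrimSum_mk]
    rcases eq_or_ne (primSum b.f g) 0 with h | h
    · simp [h]
    · have h1 := b.primSum_sc_le_full 1 g
      rw [sc_one] at h1
      refine h1.trans ?_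
      simpa using b.full_le_of_primSum_ne_zero h le_rfl

end Bump

/-! ### Pairs of primitive vectors -/

/-- The determinant of a pair of integer vectors. -/
def detPair (P : {m : Fin 2 → ℤ // IsPrim m} × {m : Fin 2 → ℤ // IsPrim m}) : ℤ :=
  P.1.1 0 * P.2.1 1 - P.1.1 1 * P.2.1 0

/-- The sum over linearly independent pairs of primitive vectors. -/
def offSum (F H : (Fin 2 → ℝ) → ℝ≥0∞) (g : SLR 2) : ℝ≥0∞ :=
  ∑' P : {P : {m : Fin 2 → ℤ // IsPrim m} × {m : Fin 2 → ℤ // IsPrim m} // detPair P ≠ 0},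
    F (vecOf 2 g P.1.1) * H (vecOf 2 g P.1.2)

/-- The action of `SL(2, ℤ)` on linearly independent pairs of primitive vectors. -/
def actPair (γ : Matrix.SpecialLinearGroup (Fin 2) ℤ)
    (P : {P : {m : Fin 2 → ℤ // IsPrim m} × {m : Fin 2 → ℤ // IsPrim m} // detPair P ≠ 0}) :
    {P : {m : Fin 2 → ℤ // IsPrim m} × {m : Fin 2 → ℤ // IsPrim m} // detPair P ≠ 0} :=
  ⟨(actPrim γ P.1.1, actPrim γ P.1.2), by
    have hd := det_eq_two_int γ
    have : detPair (actPrim γ P.1.1, actPrim γ P.1.2) = detPair P.1 := by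
      simp only [detPair, actPrim, actInt, Equiv.coe_fn_mk, Matrix.mulVec, dotProduct,
        Fin.sum_univ_two]
      linear_combination (P.1.1.1 0 * P.1.2.1 1 - P.1.1.1 1 * P.1.2.1 0) * hd
    rw [this]
    exact P.2⟩

lemma actInt_mul {n : ℕ} (γ δ : Matrix.SpecialLinearGroup (Fin n) ℤ) (m : Fin n → ℤ) :
    actInt (γ * δ) m = actInt γ (actInt δ m) := by
  simp [actInt, Matrix.mulVec_mulVec]

lemma actPair_mul (γ δ : Matrix.SpecialLinearGroup (Fin 2) ℤ)
    (P : {P : {m : Fin 2 → ℤ // IsPrim m} × {m : Fin 2 → ℤ // IsPrim m} // detPair P ≠ 0}) :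
    actPair (γ * δ) P = actPair γ (actPair δ P) :=
  Subtype.ext (Prod.ext (Subtype.ext (actInt_mul γ δ _)) (Subtype.ext (actInt_mul γ δ _)))

lemma actPair_one
    (P : {P : {m : Fin 2 → ℤ // IsPrim m} × {m : Fin 2 → ℤ // IsPrim m} // detPair P ≠ 0}) :
    actPair 1 P = P :=
  Subtype.ext (Prod.ext (Subtype.ext (by simp [actPair, actPrim, actInt]))
    (Subtype.ext (by simp [actPair, actPrim, actInt])))

lemma actPair_free {γ δ : Matrix.SpecialLinearGroup (Fin 2) ℤ}
    {P : {P : {m : Fin 2 → ℤ // IsPrim m} × {m : Fin 2 → ℤ // IsPrim m} // detPair P ≠ 0}}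
    (h : actPair γ P = actPair δ P) : γ = δ := by
  have h1 : ∀ i, γ i 0 * P.1.1.1 0 + γ i 1 * P.1.1.1 1 = δ i 0 * P.1.1.1 0 + δ i 1 * P.1.1.1 1 := by
    intro i
    have := congrArg (fun Q : {P : {m : Fin 2 → ℤ // IsPrim m} × {m : Fin 2 → ℤ // IsPrim m} //
      detPair P ≠ 0} => Q.1.1.1 i) h
    simpa only [actPair, actPrim, actInt, Equiv.coe_fn_mk, Matrix.mulVec, dotProduct,
      Fin.sum_univ_two] using this
  have h2 : ∀ i, γ i 0 * P.1.2.1 0 + γ i 1 * P.1.2.1 1 = δ i 0 * P.1.2.1 0 + δ i 1 * P.1.2.1 1 := by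
    intro i
    have := congrArg (fun Q : {P : {m : Fin 2 → ℤ // IsPrim m} × {m : Fin 2 → ℤ // IsPrim m} //
      detPair P ≠ 0} => Q.1.2.1 i) h
    simpa only [actPair, actPrim, actInt, Equiv.coe_fn_mk, Matrix.mulVec, dotProduct,
      Fin.sum_univ_two] using this
  have hP := P.2
  unfold detPair at hP
  have e0 : ∀ i, γ i 0 = δ i 0 := fun i => mul_right_cancel₀ hP (by
    linear_combination P.1.2.1 1 * h1 i - P.1.1.1 1 * h2 i)
  have e1 : ∀ i, γ i 1 = δ i 1 := fun i => mul_right_cancel₀ hP (by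
    linear_combination P.1.1.1 0 * h2 i - P.1.2.1 0 * h1 i)
  ext i j
  fin_cases j
  · exact e0 i
  · exact e1 i

/-- Two pairs are equivalent if they lie in the same `SL(2, ℤ)`-orbit. -/
def pairSetoid :
    Setoid {P : {m : Fin 2 → ℤ // IsPrim m} × {m : Fin 2 → ℤ // IsPrim m} // detPair P ≠ 0} where
  r P Q := ∃ γ, actPair γ P = Q
  iseqv := ⟨fun P => ⟨1, actPair_one P⟩,
    fun {P Q} ⟨γ, h⟩ => ⟨γ⁻¹, by rw [← h, ← actPair_mul, inv_mul_cancel, actPair_one]⟩,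
    fun {P Q R} ⟨γ, h⟩ ⟨δ, h'⟩ => ⟨δ * γ, by rw [actPair_mul, h, h']⟩⟩

/-- Decomposition of the pairs into free `SL(2, ℤ)`-orbits. -/
def pairEquiv : Quotient pairSetoid × Matrix.SpecialLinearGroup (Fin 2) ℤ ≃
    {P : {m : Fin 2 → ℤ // IsPrim m} × {m : Fin 2 → ℤ // IsPrim m} // detPair P ≠ 0} :=
  Equiv.ofBijective (fun p => actPair p.2 p.1.out) (by
    constructor
    · rintro ⟨o, γ⟩ ⟨o', γ'⟩ h
      have ho : o = o' := by
        rw [← Quotient.out_eq o, ← Quotient.out_eq o']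
        refine Quotient.sound ⟨γ'⁻¹ * γ, ?_⟩
        change actPair γ o.out = actPair γ' o'.out at h
        rw [actPair_mul, h, ← actPair_mul, inv_mul_cancel, actPair_one]
      subst ho
      exact Prod.ext rfl (actPair_free h)
    · intro P
      obtain ⟨γ, hγ⟩ := Quotient.mk_out (s := pairSetoid) P
      exact ⟨⟨Quotient.mk pairSetoid P, γ⟩, hγ⟩)

/-- The summand of `offSum` as a function on the group. -/
def pairTerm (F H : (Fin 2 → ℝ) → ℝ≥0∞)
    (P : {P : {m : Fin 2 → ℤ // IsPrim m} × {m : Fin 2 → ℤ // IsPrim m} // detPair P ≠ 0})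
    (g : SLR 2) : ℝ≥0∞ := F (vecOf 2 g P.1.1) * H (vecOf 2 g P.1.2)

lemma measurable_pairTerm {F H : (Fin 2 → ℝ) → ℝ≥0∞} (hF : Measurable F) (hH : Measurable H)
    (P : {P : {m : Fin 2 → ℤ // IsPrim m} × {m : Fin 2 → ℤ // IsPrim m} // detPair P ≠ 0}) :
    Measurable (pairTerm F H P) :=
  (hF.comp (continuous_vecOf _).measurable).mul (hH.comp (continuous_vecOf _).measurable)

lemma pairTerm_mul_ofInt (F H : (Fin 2 → ℝ) → ℝ≥0∞)
    (P : {P : {m : Fin 2 → ℤ // IsPrim m} × {m : Fin 2 → ℤ // IsPrim m} // detPair P ≠ 0})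
    (g : SLR 2) (γ : Matrix.SpecialLinearGroup (Fin 2) ℤ) :
    pairTerm F H P (g * ofInt γ) = pairTerm F H (actPair γ P) g := by
  simp only [pairTerm, vecOf_mul_ofInt]
  rfl

lemma offSum_eq_tsum (F H : (Fin 2 → ℝ) → ℝ≥0∞) (g : SLR 2) :
    offSum F H g = ∑' γ : Matrix.SpecialLinearGroup (Fin 2) ℤ,
      ∑' o : Quotient pairSetoid, pairTerm F H o.out (g * ofInt γ) := by
  simp_rw [pairTerm_mul_ofInt]
  rw [ENNReal.tsum_comm, ← ENNReal.tsum_prod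
    (f := fun (o : Quotient pairSetoid) γ => pairTerm F H (actPair γ o.out) g)]
  exact (pairEquiv.tsum_eq (fun P => pairTerm F H P g)).symm

lemma offSum_mul_ofInt (F H : (Fin 2 → ℝ) → ℝ≥0∞) (g : SLR 2)
    (γ : Matrix.SpecialLinearGroup (Fin 2) ℤ) : offSum F H (g * ofInt γ) = offSum F H g := by
  rw [offSum_eq_tsum, offSum_eq_tsum, ← (Equiv.mulLeft γ).tsum_eq
    (fun δ => ∑' o : Quotient pairSetoid, pairTerm F H o.out (g * ofInt δ))]
  simp only [Equiv.coe_mulLeft, map_mul, mul_assoc]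

lemma measurable_offSum {F H : (Fin 2 → ℝ) → ℝ≥0∞} (hF : Measurable F) (hH : Measurable H) :
    Measurable (offSum F H) :=
  Measurable.tsum fun P => measurable_pairTerm hF hH P

/-- `offSum` as a function of the lattice. -/
def latOffSum (F H : (Fin 2 → ℝ) → ℝ≥0∞) : LatticeSpace 2 → ℝ≥0∞ :=
  descend (offSum F H) (offSum_mul_ofInt F H)

@[simp] lemma latOffSum_mk (F H : (Fin 2 → ℝ) → ℝ≥0∞) (g : SLR 2) :
    latOffSum F H (QuotientGroup.mk g) = offSum F H g := rfl

lemma measurable_latOffSum {F H : (Fin 2 → ℝ) → ℝ≥0∞} (hF : Measurable F) (hH : Measurable H) :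
    Measurable (latOffSum F H) := measurable_descend (measurable_offSum hF hH)

lemma lintegral_latOffSum_eq (μ : Measure (LatticeSpace 2)) {F H : (Fin 2 → ℝ) → ℝ≥0∞}
    (hF : Measurable F) (hH : Measurable H) :
    ∫⁻ x, latOffSum F H x ∂μ =
      ∑' o : Quotient pairSetoid, ∫⁻ g, pairTerm F H o.out g ∂(liftMeasure μ) := by
  have : Countable (Quotient pairSetoid) := inferInstance
  rw [← lintegral_tsum fun o => (measurable_pairTerm hF hH _).aemeasurable]
  exact lintegral_eq_lintegral_liftMeasure μ
    (Measurable.tsum fun o => measurable_pairTerm hF hH _) (fun g => offSum_eq_tsum F H g)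

lemma lintegral_pairTerm_smul {μ : Measure (LatticeSpace 2)} [IsProbabilityMeasure μ]
    (hμ : InvariantLat μ) {F H : (Fin 2 → ℝ) → ℝ≥0∞} (hF : Measurable F) (hH : Measurable H)
    (P : {P : {m : Fin 2 → ℤ // IsPrim m} × {m : Fin 2 → ℤ // IsPrim m} // detPair P ≠ 0})
    {l : ℝ} (hl : l ≠ 0) :
    ∫⁻ g, pairTerm (fun x => F (l • x)) (fun x => H (l⁻¹ • x)) P g ∂(liftMeasure μ) =
      ∫⁻ g, pairTerm F H P g ∂(liftMeasure μ) := by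
  set M : Matrix (Fin 2) (Fin 2) ℝ := !![(P.1.1.1 0 : ℝ), P.1.2.1 0; P.1.1.1 1, P.1.2.1 1]
  have hMd : IsUnit M.det := by
    have := P.2
    rw [isUnit_iff_ne_zero, Matrix.det_fin_two_of]
    unfold detPair at this
    intro h
    apply this
    have h' : ((P.1.1.1 0 * P.1.2.1 1 - P.1.1.1 1 * P.1.2.1 0 : ℤ) : ℝ) = 0 := by
      push_cast; linarith
    exact_mod_cast h'
  have hM1 := Matrix.mul_nonsing_inv M hMd
  have hM2 := Matrix.nonsing_inv_mul M hMd
  have hdet : ∀ A : Matrix (Fin 2) (Fin 2) ℝ, A.det = 1 → (M * A * M⁻¹).det = 1 := by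
    intro A hA
    rw [Matrix.det_mul, Matrix.det_mul, hA, mul_one, ← Matrix.det_mul, hM1, Matrix.det_one]
  obtain ⟨β, hβ⟩ : ∃ β : SLR 2, (β : Matrix (Fin 2) (Fin 2) ℝ) =
    M * (diagSL l hl : Matrix (Fin 2) (Fin 2) ℝ) * M⁻¹ := ⟨⟨_, hdet _ (diagSL l hl).2⟩, rfl⟩
  obtain ⟨c, hc⟩ : ∃ c : SLR 2, (c : Matrix (Fin 2) (Fin 2) ℝ) =
    M * (rotSL : Matrix (Fin 2) (Fin 2) ℝ) * M⁻¹ := ⟨⟨_, hdet _ rotSL.2⟩, rfl⟩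
  have hbc : c * β * c⁻¹ = β⁻¹ := by
    have h0 := rot_conj_diag l hl
    rw [mul_inv_eq_iff_eq_mul, eq_inv_mul_iff_mul_eq] at h0 ⊢
    have h1 := congrArg (fun g : SLR 2 => (g : Matrix (Fin 2) (Fin 2) ℝ)) h0
    simp only [Matrix.SpecialLinearGroup.coe_mul] at h1
    apply Subtype.ext
    change ((β * (c * β) : SLR 2) : Matrix (Fin 2) (Fin 2) ℝ) = (c : Matrix (Fin 2) (Fin 2) ℝ)
    rw [Matrix.SpecialLinearGroup.coe_mul, Matrix.SpecialLinearGroup.coe_mul, hβ, hc]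
    have : ∀ A B C : Matrix (Fin 2) (Fin 2) ℝ,
        M * A * M⁻¹ * (M * B * M⁻¹ * (M * C * M⁻¹)) = M * (A * (B * C)) * M⁻¹ := by
      intro A B C
      calc M * A * M⁻¹ * (M * B * M⁻¹ * (M * C * M⁻¹))
          = M * A * (M⁻¹ * M) * B * (M⁻¹ * M) * C * M⁻¹ := by simp only [Matrix.mul_assoc]
        _ = _ := by rw [hM2]; simp only [Matrix.mul_assoc, Matrix.mul_one]
    rw [this, h1]
  rw [← hμ.lintegral_mul_right hbc (measurable_pairTerm hF hH P)]
  congr 1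
  funext g
  have hv : ∀ v : Fin 2 → ℝ, (β : Matrix (Fin 2) (Fin 2) ℝ).mulVec (M.mulVec v) =
      M.mulVec ((diagSL l hl : Matrix (Fin 2) (Fin 2) ℝ).mulVec v) := by
    intro v
    rw [hβ, Matrix.mulVec_mulVec, Matrix.mulVec_mulVec, Matrix.mul_assoc, hM2, Matrix.mul_one]
  have m1 : intVec P.1.1.1 = M.mulVec ![1, 0] := by
    funext i; fin_cases i <;> simp [intVec, M, Matrix.mulVec, dotProduct]
  have m2 : intVec P.1.2.1 = M.mulVec ![0, 1] := by
    funext i; fin_cases i <;> simp [intVec, M, Matrix.mulVec, dotProduct]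
  have d1 : (diagSL l hl : Matrix (Fin 2) (Fin 2) ℝ).mulVec ![1, 0] = l • ![1, 0] := by
    funext i; fin_cases i <;> simp [coe_diagSL, Matrix.mulVec, dotProduct]
  have d2 : (diagSL l hl : Matrix (Fin 2) (Fin 2) ℝ).mulVec ![0, 1] = l⁻¹ • ![0, 1] := by
    funext i; fin_cases i <;> simp [coe_diagSL, Matrix.mulVec, dotProduct]
  have v1 : vecOf 2 (g * β) P.1.1 = l • vecOf 2 g P.1.1 := by
    rw [vecOf_mul, Bump.vecOf_eq, Bump.vecOf_eq, m1, hv, d1, Matrix.mulVec_smul,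
      Matrix.mulVec_smul]
  have v2 : vecOf 2 (g * β) P.1.2 = l⁻¹ • vecOf 2 g P.1.2 := by
    rw [vecOf_mul, Bump.vecOf_eq, Bump.vecOf_eq, m2, hv, d2, Matrix.mulVec_smul,
      Matrix.mulVec_smul]
  rw [pairTerm, pairTerm, v1, v2]

/-- Pair correlations are unchanged when the two functions are rescaled inversely. -/
lemma lintegral_latOffSum_smul {μ : Measure (LatticeSpace 2)} [IsProbabilityMeasure μ]
    (hμ : InvariantLat μ) {F H : (Fin 2 → ℝ) → ℝ≥0∞} (hF : Measurable F) (hH : Measurable H)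
    {l : ℝ} (hl : l ≠ 0) :
    ∫⁻ x, latOffSum (fun x => F (l • x)) (fun x => H (l⁻¹ • x)) x ∂μ =
      ∫⁻ x, latOffSum F H x ∂μ := by
  rw [lintegral_latOffSum_eq μ hF hH, lintegral_latOffSum_eq μ (F := fun x => F (l • x))
    (H := fun x => H (l⁻¹ • x)) (hF.comp (measurable_const_smul l))
    (hH.comp (measurable_const_smul l⁻¹))]
  exact tsum_congr fun o => lintegral_pairTerm_smul hμ hF hH _ hl

end

lemma offSum_eq_indicator (F H : (Fin 2 → ℝ) → ℝ≥0∞) (g : SLR 2) :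
    offSum F H g = ∑' (m : {m : Fin 2 → ℤ // IsPrim m}) (m' : {m : Fin 2 → ℤ // IsPrim m}),
      {P | detPair P ≠ 0}.indicator (fun P => F (vecOf 2 g P.1) * H (vecOf 2 g P.2)) (m, m') := by
  rw [← ENNReal.tsum_prod (f := fun m m' => {P | detPair P ≠ 0}.indicator
    (fun P => F (vecOf 2 g P.1) * H (vecOf 2 g P.2)) (m, m'))]
  exact tsum_subtype {P | detPair P ≠ 0} fun P => F (vecOf 2 g P.1) * H (vecOf 2 g P.2)

lemma primSum_mul_primSum (F H : (Fin 2 → ℝ) → ℝ≥0∞) (g : SLR 2) :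
    primSum F g * primSum H g =
      ∑' (m : {m : Fin 2 → ℤ // IsPrim m}) (m' : {m : Fin 2 → ℤ // IsPrim m}),
        F (vecOf 2 g m) * H (vecOf 2 g m') := by
  unfold primSum
  rw [← ENNReal.tsum_mul_right]
  exact tsum_congr fun m => ENNReal.tsum_mul_left.symm

lemma offSum_le_mul (F H : (Fin 2 → ℝ) → ℝ≥0∞) (g : SLR 2) :
    offSum F H g ≤ primSum F g * primSum H g := by
  rw [offSum_eq_indicator, primSum_mul_primSum]
  exact ENNReal.tsum_le_tsum fun m => ENNReal.tsum_le_tsum fun m' => Set.indicator_le_self _ _ _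

lemma eq_or_eq_neg_of_detPair {m m' : {m : Fin 2 → ℤ // IsPrim m}} (h : detPair (m, m') = 0) :
    m'.1 = m.1 ∨ m'.1 = -m.1 := by
  refine eq_or_eq_neg_of_minors m.2 m'.2 fun i j => ?_
  unfold detPair at h
  fin_cases i <;> fin_cases j <;> simp <;> linarith

lemma mul_le_offSum (F : (Fin 2 → ℝ) → ℝ≥0∞) {H : (Fin 2 → ℝ) → ℝ≥0∞} (hH : ∀ x, H x ≤ 1)
    (g : SLR 2) : primSum F g * primSum H g ≤ offSum F H g + 2 * primSum F g := by
  classical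
  rw [offSum_eq_indicator, primSum_mul_primSum]
  unfold primSum
  rw [← ENNReal.tsum_mul_left, ← ENNReal.tsum_add]
  refine ENNReal.tsum_le_tsum fun m => ?_
  have hneg : IsPrim (-m.1) := by
    obtain ⟨c, hc⟩ := m.2
    exact ⟨-c, by simpa using hc⟩
  have hb : ∀ m', F (vecOf 2 g m) * H (vecOf 2 g m') ≤ F (vecOf 2 g m) := fun m' =>
    mul_le_of_le_one_right zero_le (hH _)
  have key : ∀ m' : {m : Fin 2 → ℤ // IsPrim m}, F (vecOf 2 g m) * H (vecOf 2 g m') ≤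
      {P | detPair P ≠ 0}.indicator (fun P => F (vecOf 2 g P.1) * H (vecOf 2 g P.2)) (m, m') +
        ((if m' = m then F (vecOf 2 g m) else 0) +
          if m' = ⟨-m.1, hneg⟩ then F (vecOf 2 g m) else 0) := by
    intro m'
    by_cases h : detPair (m, m') = 0
    · refine le_add_left ?_
      rcases eq_or_eq_neg_of_detPair h with e | e
      · rw [if_pos (Subtype.ext e)]
        exact le_add_right (hb m')
      · rw [if_pos (c := m' = ⟨-m.1, hneg⟩) (Subtype.ext e)]
        exact le_add_left (hb m')
    · refine le_add_right (le_of_eq ?_)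
      rw [Set.indicator_of_mem (by exact h)]
  refine (ENNReal.tsum_le_tsum key).trans (le_of_eq ?_)
  rw [ENNReal.tsum_add, ENNReal.tsum_add, tsum_ite_eq, tsum_ite_eq, two_mul]

/-- Short vectors are pairwise dependent. -/
lemma offSum_eq_zero {F H : (Fin 2 → ℝ) → ℝ≥0∞} {ρ : ℝ} (hρ : 2 * ρ ^ 2 < 1)
    (hF : ∀ x, F x ≠ 0 → ‖x‖ ≤ ρ) (hH : ∀ x, H x ≠ 0 → ‖x‖ ≤ ρ) (g : SLR 2) :
    offSum F H g = 0 := by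
  refine ENNReal.tsum_eq_zero.2 fun P => ?_
  by_contra h
  have h1 := hF _ (left_ne_zero_of_mul h)
  have h2 := hH _ (right_ne_zero_of_mul h)
  set v := vecOf 2 g P.1.1
  set w := vecOf 2 g P.1.2
  have e : v 0 * w 1 - v 1 * w 0 = ((detPair P.1 : ℤ) : ℝ) := by
    have hd := det_eq_two g
    simp only [v, w, vecOf, Matrix.mulVec, dotProduct, Fin.sum_univ_two, detPair]
    push_cast
    linear_combination ((P.1.1.1 0 : ℝ) * P.1.2.1 1 - P.1.1.1 1 * P.1.2.1 0) * hd
  have hv : ∀ i, |v i| ≤ ρ := fun i => (norm_le_pi_norm v i).trans h1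
  have hw : ∀ i, |w i| ≤ ρ := fun i => (norm_le_pi_norm w i).trans h2
  have hρ0 : 0 ≤ ρ := (abs_nonneg _).trans (hv 0)
  have hb : |v 0 * w 1 - v 1 * w 0| < 1 := by
    refine (abs_sub _ _).trans_lt ?_
    rw [abs_mul, abs_mul]
    have k1 := mul_le_mul (hv 0) (hw 1) (abs_nonneg _) hρ0
    have k2 := mul_le_mul (hv 1) (hw 0) (abs_nonneg _) hρ0
    linarith
  rw [e] at hb
  have : |detPair P.1| < 1 := by exact_mod_cast hb
  exact P.2 (Int.abs_lt_one_iff.1 this)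

lemma latOffSum_le_mul (F H : (Fin 2 → ℝ) → ℝ≥0∞) (x : LatticeSpace 2) :
    latOffSum F H x ≤ latPrimSum F x * latPrimSum H x := by
  induction x using QuotientGroup.induction_on with
  | H g => exact offSum_le_mul F H g

lemma mul_le_latOffSum (F : (Fin 2 → ℝ) → ℝ≥0∞) {H : (Fin 2 → ℝ) → ℝ≥0∞} (hH : ∀ x, H x ≤ 1)
    (x : LatticeSpace 2) :
    latPrimSum F x * latPrimSum H x ≤ latOffSum F H x + 2 * latPrimSum F x := by
  induction x using QuotientGroup.induction_on with
  | H g => exact mul_le_offSum F hH g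

lemma inv_natCast_le_zeta_sub (D : ℕ) (hD : 0 < D) :
    π ^ 2 / 6 - 1 / (D : ℝ) ≤ ∑ d ∈ Finset.range D, 1 / ((d : ℝ) + 1) ^ 2 := by
  let u : ℕ → ℝ := fun k => ∑ d ∈ Finset.range (k + 1), 1 / ((d : ℝ) + 1) ^ 2 + 1 / ((k : ℝ) + 1)
  have hu : Antitone u := by
    refine antitone_nat_of_succ_le fun k => ?_
    simp only [u]
    rw [Finset.sum_range_succ]
    push_cast
    have : 1 / ((k : ℝ) + 1 + 1) ^ 2 + 1 / ((k : ℝ) + 1 + 1) ≤ 1 / ((k : ℝ) + 1) := by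
      have hk : (0 : ℝ) ≤ k := k.cast_nonneg
      rw [div_add_div _ _ (by positivity) (by positivity), div_le_div_iff₀ (by positivity)
        (by positivity)]
      nlinarith [mul_nonneg hk hk, mul_nonneg (mul_nonneg hk hk) hk]
    linarith
  have hs : HasSum (fun d : ℕ => 1 / ((d : ℝ) + 1) ^ 2) (π ^ 2 / 6) := by
    have h := (hasSum_nat_add_iff' 1).2 hasSum_zeta_two
    simpa using h
  have hl : Tendsto u atTop (nhds (π ^ 2 / 6)) := by
    have h1 := (tendsto_add_atTop_iff_nat 1).2 hs.tendsto_sum_nat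
    simpa [u] using h1.add tendsto_one_div_add_atTop_nhds_zero_nat
  obtain ⟨k, rfl⟩ : ∃ k, D = k + 1 := ⟨D - 1, by omega⟩
  have := hu.le_of_tendsto hl k
  simp only [u] at this
  push_cast
  linarith

lemma harmonic_unbounded (c : ℝ) : ∃ D : ℕ, 0 < D ∧
    c < ∑ d ∈ Finset.range D, 1 / ((d : ℝ) + 1) := by
  have h := Real.tendsto_sum_range_one_div_nat_succ_atTop
  obtain ⟨D, h1, h2⟩ := ((h.eventually_gt_atTop c).and (eventually_gt_atTop 0)).exists
  exact ⟨D, h2, h1⟩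

section

lemma ENNReal.two_mul_le_sq_add_sq (a b : ℝ≥0∞) : 2 * a * b ≤ a ^ 2 + b ^ 2 := by
  rcases eq_or_ne a ∞ with rfl | ha
  · simp
  rcases eq_or_ne b ∞ with rfl | hb
  · simp
  lift a to NNReal using ha
  lift b to NNReal using hb
  exact_mod_cast two_mul_le_add_sq a b

/-- The inequality `2 * ∫ (X + c) * t * (Y + c) ≤ ∫ (X + c) ^ 2 + t ^ 2 * ∫ (Y + c) ^ 2`,
expanded. -/
lemma two_mul_correlation_le {α : Type*} [MeasurableSpace α] (μ : Measure α)
    [IsProbabilityMeasure μ] {X Y : α → ℝ≥0∞} (hX : Measurable X) (hY : Measurable Y)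
    (c t : ℝ≥0∞) :
    2 * t * (∫⁻ x, X x * Y x ∂μ + c * ∫⁻ x, X x ∂μ + c * ∫⁻ x, Y x ∂μ + c ^ 2) ≤
      (∫⁻ x, X x * X x ∂μ + 2 * c * ∫⁻ x, X x ∂μ + c ^ 2) +
        t ^ 2 * (∫⁻ x, Y x * Y x ∂μ + 2 * c * ∫⁻ x, Y x ∂μ + c ^ 2) := by
  have hp : ∀ x, 2 * t * (X x * Y x + c * X x + c * Y x + c ^ 2) ≤
      (X x * X x + 2 * c * X x + c ^ 2) + t ^ 2 * (Y x * Y x + 2 * c * Y x + c ^ 2) := by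
    intro x
    have h := ENNReal.two_mul_le_sq_add_sq (X x + c) (t * (Y x + c))
    calc 2 * t * (X x * Y x + c * X x + c * Y x + c ^ 2)
        = 2 * (X x + c) * (t * (Y x + c)) := by ring
      _ ≤ _ := h
      _ = _ := by ring
  have h := lintegral_mono (μ := μ) hp
  rw [lintegral_const_mul _ (by fun_prop), lintegral_add_left (by fun_prop),
    lintegral_add_left (by fun_prop), lintegral_add_left (by fun_prop),
    lintegral_const_mul _ hX, lintegral_const_mul _ hY, lintegral_add_left (by fun_prop),
    lintegral_add_left (by fun_prop), lintegral_add_left (by fun_prop),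
    lintegral_const_mul _ hX, lintegral_const_mul _ (by fun_prop),
    lintegral_add_left (by fun_prop), lintegral_add_left (by fun_prop),
    lintegral_const_mul _ hY] at h
  simpa using h

namespace Bump

variable (b : Bump 2)

lemma lintegral_latPrimSum_ne_top (μ : Measure (LatticeSpace 2)) [IsProbabilityMeasure μ] :
    ∫⁻ x, latPrimSum b.f x ∂μ ≠ ∞ := by
  refine ((lintegral_mono b.latPrimSum_le).trans_lt ?_).ne
  simpa using b.mass_lt_top

lemma sum_lintegral_latOffSum_le (μ : Measure (LatticeSpace 2)) [IsProbabilityMeasure μ]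
    {T : ℝ} (hT : 1 ≤ T) (D : ℕ) :
    ∑ d ∈ Finset.range D, ∫⁻ x, latOffSum (b.sc (T / (d + 1 : ℕ))) b.f x ∂μ ≤
      (∫⁻ x, latPrimSum b.f x ∂μ) *
        (ENNReal.ofReal (T ^ 2) * b.mass + ENNReal.ofReal (b.errUnif * T)) := by
  rw [← lintegral_finsetSum _ fun d _ => measurable_latOffSum (b.measurable_sc _) b.measurable,
    ← lintegral_mul_const _ (measurable_latPrimSum b.measurable)]
  refine lintegral_mono fun x => le_trans ?_ (b.latPrimSum_mul_latFull_le hT x)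
  induction x using QuotientGroup.induction_on with
  | H g =>
    simp only [latOffSum_mk, latPrimSum_mk, latFull_mk]
    rw [mul_comm, full_eq_tsum_primSum, ← ENNReal.tsum_mul_right]
    refine le_trans (Finset.sum_le_sum fun d _ => ?_) (ENNReal.sum_le_tsum (Finset.range D))
    exact offSum_le_mul _ _ g

lemma lintegral_latOffSum_sc_ne_top (μ : Measure (LatticeSpace 2)) [IsProbabilityMeasure μ]
    {T : ℝ} (hT : 1 ≤ T) : ∫⁻ x, latOffSum (b.sc T) b.f x ∂μ ≠ ∞ := by
  have h := b.sum_lintegral_latOffSum_le μ hT 1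
  simp only [Finset.sum_range_one, zero_add, Nat.cast_one, div_one] at h
  refine ne_top_of_le_ne_top (ENNReal.mul_ne_top (b.lintegral_latPrimSum_ne_top μ) ?_) h
  exact ENNReal.add_ne_top.2 ⟨ENNReal.mul_ne_top ENNReal.ofReal_ne_top b.mass_lt_top.ne,
    ENNReal.ofReal_ne_top⟩

lemma lintegral_latFull {μ : Measure (LatticeSpace 2)} [IsProbabilityMeasure μ]
    (hμ : InvariantLat μ) {p : ℕ} (hp : 0 < p) :
    ∫⁻ x, b.latFull p x ∂μ = ENNReal.ofReal ((p : ℝ) ^ 2) *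
      (ENNReal.ofReal (π ^ 2 / 6) * ∫⁻ x, latPrimSum b.f x ∂μ) := by
  have h1 : ∀ x, b.latFull p x = ∑' q : ℕ, latPrimSum (b.sc ((p : ℝ) / (q + 1 : ℕ))) x := by
    intro x
    induction x using QuotientGroup.induction_on with
    | H g => exact b.full_eq_tsum_primSum p g
  have h2 : ∀ q : ℕ, ∫⁻ x, latPrimSum (b.sc ((p : ℝ) / (q + 1 : ℕ))) x ∂μ =
      ENNReal.ofReal ((p : ℝ) ^ 2) *
        (ENNReal.ofReal (1 / ((q : ℝ) + 1) ^ 2) * ∫⁻ x, latPrimSum b.f x ∂μ) := by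
    intro q
    have h := b.lintegral_sc_sqrt hμ (p := p ^ 2) (q := (q + 1) ^ 2) (by positivity)
      (by positivity)
    have e : √(((p ^ 2 : ℕ) : ℝ) / (((q + 1) ^ 2 : ℕ) : ℝ)) = (p : ℝ) / (q + 1 : ℕ) := by
      push_cast
      rw [← div_pow, Real.sqrt_sq (by positivity)]
    rw [e] at h
    rw [h, ← mul_assoc, ← ENNReal.ofReal_mul (by positivity)]
    congr 2
    push_cast
    ring
  simp_rw [h1]
  rw [lintegral_tsum fun q => (measurable_latPrimSum (b.measurable_sc _)).aemeasurable]
  simp_rw [h2]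
  rw [ENNReal.tsum_mul_left, ENNReal.tsum_mul_right, tsum_inv_sq]

lemma mass_le {μ : Measure (LatticeSpace 2)} [IsProbabilityMeasure μ] (hμ : InvariantLat μ) :
    b.mass ≤ ENNReal.ofReal (π ^ 2 / 6) * ∫⁻ x, latPrimSum b.f x ∂μ := by
  have hlim : ∀ x, liminf (fun k : ℕ => b.latFull ((k + 1 : ℕ) : ℝ) x /
      ENNReal.ofReal (((k + 1 : ℕ) : ℝ) ^ 2)) atTop = b.mass := by
    intro x
    induction x using QuotientGroup.induction_on with
    | H g =>
      exact (((b.tendsto_full_div (by norm_num) g).comp tendsto_natCast_atTop_atTop).comp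
        (tendsto_add_atTop_nat 1)).liminf_eq
  have hintegral : ∀ k : ℕ, ∫⁻ x, b.latFull ((k + 1 : ℕ) : ℝ) x /
      ENNReal.ofReal (((k + 1 : ℕ) : ℝ) ^ 2) ∂μ =
      ENNReal.ofReal (π ^ 2 / 6) * ∫⁻ x, latPrimSum b.f x ∂μ := by
    intro k
    simp only [div_eq_mul_inv]
    rw [lintegral_mul_const _ (b.measurable_latFull _), b.lintegral_latFull hμ (Nat.succ_pos k),
      mul_comm, ← mul_assoc, ENNReal.inv_mul_cancel _ ENNReal.ofReal_ne_top, one_mul,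
      div_eq_mul_inv]
    rw [ne_eq, ENNReal.ofReal_eq_zero, not_le]
    positivity
  have h := lintegral_liminf_le (μ := μ) (u := atTop) (f := fun (k : ℕ) x => b.latFull ((k + 1 : ℕ) : ℝ) x /
    ENNReal.ofReal (((k + 1 : ℕ) : ℝ) ^ 2)) fun k => (b.measurable_latFull _).div_const _
  simp_rw [hlim, hintegral] at h
  simpa using h

/-- A lower bound for the correlation of a bump function with a rescaled copy of itself. -/
lemma le_lintegral_latOffSum_sc {μ : Measure (LatticeSpace 2)} [IsProbabilityMeasure μ]
    (hμ : InvariantLat μ) {p q : ℕ} (hp : 0 < p) (hq : 0 < q) {T : ℝ} (hT : T = p / q)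
    (hT1 : 1 ≤ T) (hTR : 2 * b.R ^ 2 < T) :
    T ^ 2 * (∫⁻ x, latPrimSum b.f x ∂μ).toReal ^ 2 +
      T * (2 * (∫⁻ x, latOffSum b.f b.f x ∂μ).toReal -
        2 * (∫⁻ x, latPrimSum b.f x ∂μ).toReal ^ 2 - 4 * (∫⁻ x, latPrimSum b.f x ∂μ).toReal) ≤
      (∫⁻ x, latOffSum (b.sc T) b.f x ∂μ).toReal := by
  have hT0 : 0 < T := by linarith
  have hs : 0 < √T := Real.sqrt_pos.2 hT0
  have hss : √T * √T = T := Real.mul_self_sqrt hT0.le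
  have ho := b.lintegral_latOffSum_sc_ne_top μ (le_refl (1 : ℝ))
  rw [sc_one] at ho
  have hoT := b.lintegral_latOffSum_sc_ne_top μ hT1
  have hν := b.lintegral_latPrimSum_ne_top μ
  have mX := b.measurable_sc (√T)
  have mY := b.measurable_sc (√T)⁻¹
  have hle : ∀ s x, b.sc s x ≤ 1 := fun s x => b.le_one _
  have iX : ∫⁻ x, latPrimSum (b.sc (√T)) x ∂μ =
      ENNReal.ofReal T * ∫⁻ x, latPrimSum b.f x ∂μ := by
    rw [hT]; exact b.lintegral_sc_sqrt hμ hp hq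
  have iY : ∫⁻ x, latPrimSum (b.sc (√T)⁻¹) x ∂μ =
      ENNReal.ofReal T⁻¹ * ∫⁻ x, latPrimSum b.f x ∂μ := by
    rw [← Real.sqrt_inv, hT, inv_div]; exact b.lintegral_sc_sqrt hμ hq hp
  have hsc : (fun x => b.sc T (√T • x)) = b.sc (√T) := by
    funext x
    rw [sc, sc, smul_smul, inv_mul_eq_div, Real.sqrt_div_self]
  have iXX : ∫⁻ x, latPrimSum (b.sc (√T)) x * latPrimSum (b.sc (√T)) x ∂μ ≤
      ∫⁻ x, latOffSum (b.sc T) b.f x ∂μ + 2 * (ENNReal.ofReal T * ∫⁻ x, latPrimSum b.f x ∂μ) := by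
    refine (lintegral_mono (mul_le_latOffSum _ (hle _))).trans (le_of_eq ?_)
    rw [lintegral_add_left (measurable_latOffSum mX mX),
      lintegral_const_mul _ (measurable_latPrimSum mX), iX,
      ← lintegral_latOffSum_smul hμ (b.measurable_sc T) b.measurable hs.ne', hsc]
    rfl
  have iXY : ∫⁻ x, latOffSum b.f b.f x ∂μ ≤
      ∫⁻ x, latPrimSum (b.sc (√T)) x * latPrimSum (b.sc (√T)⁻¹) x ∂μ := by
    rw [← lintegral_latOffSum_smul hμ b.measurable b.measurable (inv_ne_zero hs.ne')]
    exact lintegral_mono (latOffSum_le_mul _ _)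
  have iYY : ∫⁻ x, latPrimSum (b.sc (√T)⁻¹) x * latPrimSum (b.sc (√T)⁻¹) x ∂μ ≤
      2 * (ENNReal.ofReal T⁻¹ * ∫⁻ x, latPrimSum b.f x ∂μ) := by
    refine (lintegral_mono (mul_le_latOffSum _ (hle _))).trans (le_of_eq ?_)
    have hsupp : ∀ x, b.sc (√T)⁻¹ x ≠ 0 → ‖x‖ ≤ b.R / √T := by
      intro x hx
      have := b.supp_le _ hx
      rw [inv_inv, norm_smul, Real.norm_of_nonneg hs.le] at this
      rwa [le_div_iff₀' hs]
    have hz : ∀ x, latOffSum (b.sc (√T)⁻¹) (b.sc (√T)⁻¹) x = 0 := by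
      intro x
      induction x using QuotientGroup.induction_on with
      | H g =>
        refine offSum_eq_zero (ρ := b.R / √T) ?_ hsupp hsupp g
        rw [div_pow, Real.sq_sqrt hT0.le, ← mul_div_assoc, div_lt_one hT0]
        exact hTR
    simp_rw [hz, zero_add]
    rw [lintegral_const_mul _ (measurable_latPrimSum mY), iY]
  have key := two_mul_correlation_le μ (measurable_latPrimSum mX) (measurable_latPrimSum mY)
    (∫⁻ x, latPrimSum b.f x ∂μ) (ENNReal.ofReal T)
  rw [iX, iY] at key
  have key2 := (mul_le_mul_right (add_le_add_left (add_le_add_left (add_le_add_left iXY _) _) _) _).trans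
    (key.trans (add_le_add (add_le_add_left (add_le_add_left iXX _) _)
      (mul_le_mul_right (add_le_add_left (add_le_add_left iYY _) _) _)))
  clear key iX iY iXX iXY iYY
  generalize ∫⁻ x, latPrimSum b.f x ∂μ = ν at *
  generalize ∫⁻ x, latOffSum b.f b.f x ∂μ = o at *
  generalize ∫⁻ x, latOffSum (b.sc T) b.f x ∂μ = oT at *
  lift ν to NNReal using hν
  lift o to NNReal using ho
  lift oT to NNReal using hoT
  simp only [ENNReal.ofReal] at key2
  have k3 : (2 : ℝ) * T * (o + ν * (T * ν) + ν * (T⁻¹ * ν) + ν ^ 2) ≤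
      (oT + 2 * (T * ν) + 2 * ν * (T * ν) + ν ^ 2) +
        T ^ 2 * (2 * (T⁻¹ * ν) + 2 * ν * (T⁻¹ * ν) + ν ^ 2) := by
    have k4 : (2 : NNReal) * T.toNNReal * (o + ν * (T.toNNReal * ν) + ν * (T⁻¹.toNNReal * ν) + ν ^ 2)
        ≤ (oT + 2 * (T.toNNReal * ν) + 2 * ν * (T.toNNReal * ν) + ν ^ 2) +
        T.toNNReal ^ 2 * (2 * (T⁻¹.toNNReal * ν) + 2 * ν * (T⁻¹.toNNReal * ν) + ν ^ 2) := by
      exact_mod_cast key2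
    have k5 := NNReal.coe_le_coe.2 k4
    push_cast at k5
    rwa [Real.coe_toNNReal _ hT0.le, Real.coe_toNNReal _ (inv_nonneg.2 hT0.le)] at k5
  simp only [ENNReal.coe_toReal]
  have hTi : T * T⁻¹ = 1 := mul_inv_cancel₀ hT0.ne'
  have hν2 : (0 : ℝ) ≤ (ν : ℝ) ^ 2 := sq_nonneg _
  have e1 : (2 : ℝ) * T * (o + ν * (T * ν) + ν * (T⁻¹ * ν) + ν ^ 2) =
      2 * T * o + 2 * T ^ 2 * ν ^ 2 + 2 * ν ^ 2 + 2 * T * ν ^ 2 := by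
    linear_combination 2 * (ν : ℝ) ^ 2 * hTi
  have e2 : T ^ 2 * (2 * (T⁻¹ * ν) + 2 * ν * (T⁻¹ * ν) + (ν : ℝ) ^ 2) =
      2 * T * ν + 2 * T * ν ^ 2 + T ^ 2 * ν ^ 2 := by
    linear_combination (2 * T * ν + 2 * T * (ν : ℝ) ^ 2) * hTi
  rw [e1, e2] at k3
  linarith

end Bump

end

section

namespace Bump

variable (b : Bump 2)

/-- Pair correlations of primitive vectors are at most `a ^ 2 + 2 * a` where `a` is the mean. -/
lemma lintegral_latOffSum_le {μ : Measure (LatticeSpace 2)} [IsProbabilityMeasure μ]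
    (hμ : InvariantLat μ) : (∫⁻ x, latOffSum b.f b.f x ∂μ).toReal ≤
      (∫⁻ x, latPrimSum b.f x ∂μ).toReal ^ 2 + 2 * (∫⁻ x, latPrimSum b.f x ∂μ).toReal := by
  have hν := b.lintegral_latPrimSum_ne_top μ
  have hsum := fun (T : ℝ) (hT : 1 ≤ T) (D : ℕ) => b.sum_lintegral_latOffSum_le μ hT D
  have hlow := fun (p q : ℕ) (hp : 0 < p) (hq : 0 < q) (h1 : 1 ≤ (p : ℝ) / q)
    (h2 : 2 * b.R ^ 2 < (p : ℝ) / q) => b.le_lintegral_latOffSum_sc hμ hp hq rfl h1 h2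
  have hfin := fun (T : ℝ) (hT : 1 ≤ T) => b.lintegral_latOffSum_sc_ne_top μ hT
  have hM : b.mass.toReal ≤ π ^ 2 / 6 * (∫⁻ x, latPrimSum b.f x ∂μ).toReal := by
    have := ENNReal.toReal_mono (ENNReal.mul_ne_top ENNReal.ofReal_ne_top hν) (b.mass_le hμ)
    rwa [ENNReal.toReal_mul, ENNReal.toReal_ofReal (by positivity)] at this
  set ν := ∫⁻ x, latPrimSum b.f x ∂μ
  set a := ν.toReal
  set o := (∫⁻ x, latOffSum b.f b.f x ∂μ).toReal
  have ha : 0 ≤ a := ENNReal.toReal_nonneg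
  by_contra! hlt
  set δ := 2 * o - 2 * a ^ 2 - 4 * a
  have hδ : 0 < δ := by simp only [δ]; linarith
  obtain ⟨N, hN⟩ := exists_nat_gt (max 1 (2 * b.R ^ 2))
  have hN1 := (le_max_left _ _).trans_lt hN
  have hN2 := (le_max_right _ _).trans_lt hN
  obtain ⟨D, hD, hDlt⟩ := harmonic_unbounded ((a ^ 2 * N + a * b.errUnif) / δ)
  rw [div_lt_iff₀ hδ] at hDlt
  have hD' : (1 : ℝ) ≤ D := by exact_mod_cast hD
  have hN0 : (0 : ℝ) < N := by linarith
  set T : ℝ := N * D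
  have hT1 : 1 ≤ T := by simp only [T]; nlinarith
  have hge : ∀ d ∈ Finset.range D, (N : ℝ) ≤ T / (d + 1 : ℕ) := by
    intro d hd
    have hd' : ((d + 1 : ℕ) : ℝ) ≤ D := by exact_mod_cast Finset.mem_range.1 hd
    rw [le_div_iff₀ (by positivity)]
    exact mul_le_mul_of_nonneg_left hd' hN0.le
  have hup := ENNReal.toReal_mono (ENNReal.mul_ne_top hν (ENNReal.add_ne_top.2
    ⟨ENNReal.mul_ne_top ENNReal.ofReal_ne_top b.mass_lt_top.ne, ENNReal.ofReal_ne_top⟩))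
    (hsum T hT1 D)
  rw [ENNReal.toReal_sum fun d hd => hfin _ (hN1.le.trans (hge d hd)), ENNReal.toReal_mul,
    ENNReal.toReal_add (ENNReal.mul_ne_top ENNReal.ofReal_ne_top b.mass_lt_top.ne)
      ENNReal.ofReal_ne_top, ENNReal.toReal_mul, ENNReal.toReal_ofReal (by positivity),
    ENNReal.toReal_ofReal (mul_nonneg b.errUnif_nonneg (by linarith))] at hup
  have hdown : ∑ d ∈ Finset.range D, (T ^ 2 * a ^ 2 * (1 / ((d : ℝ) + 1) ^ 2) +
      T * δ * (1 / ((d : ℝ) + 1))) ≤ ∑ d ∈ Finset.range D,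
        (∫⁻ x, latOffSum (b.sc (T / (d + 1 : ℕ))) b.f x ∂μ).toReal := by
    refine Finset.sum_le_sum fun d hd => ?_
    have e : ((N * D : ℕ) : ℝ) / (d + 1 : ℕ) = T / (d + 1 : ℕ) := by simp only [T]; push_cast; rfl
    have h := hlow (N * D) (d + 1) (Nat.mul_pos (by exact_mod_cast hN0) hD) (Nat.succ_pos d)
      (by rw [e]; exact hN1.le.trans (hge d hd)) (by rw [e]; exact hN2.trans_le (hge d hd))
    rw [e] at h
    refine le_trans (le_of_eq ?_) h
    push_cast
    rw [div_pow, mul_one_div, mul_one_div, div_mul_eq_mul_div, div_mul_eq_mul_div]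
  rw [Finset.sum_add_distrib, ← Finset.mul_sum, ← Finset.mul_sum] at hdown
  have hz := inv_natCast_le_zeta_sub D hD
  set H := ∑ d ∈ Finset.range D, 1 / ((d : ℝ) + 1)
  have hz2 : T ^ 2 * a ^ 2 * (π ^ 2 / 6 - 1 / (D : ℝ)) ≤
      T ^ 2 * a ^ 2 * ∑ d ∈ Finset.range D, 1 / ((d : ℝ) + 1) ^ 2 :=
    mul_le_mul_of_nonneg_left hz (by positivity)
  have hM2 : a * (T ^ 2 * b.mass.toReal) ≤ a * (T ^ 2 * (π ^ 2 / 6 * a)) := by gcongr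
  have hTD : T ^ 2 * a ^ 2 * (1 / (D : ℝ)) = T * (a ^ 2 * N) := by
    simp only [T]
    field_simp
  have hfinal : T * (δ * H) ≤ T * (a ^ 2 * N + a * b.errUnif) := by linarith
  have := le_of_mul_le_mul_left hfinal (by linarith)
  linarith

lemma measure_latPrimSum_eq_zero_le {μ : Measure (LatticeSpace 2)} [IsProbabilityMeasure μ]
    (hμ : InvariantLat μ) (hν : ∫⁻ x, latPrimSum b.f x ∂μ ≠ 0) :
    μ {x | latPrimSum b.f x = 0} ≤ 4 / ∫⁻ x, latPrimSum b.f x ∂μ := by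
  have hνt := b.lintegral_latPrimSum_ne_top μ
  have ho := b.lintegral_latOffSum_sc_ne_top μ (le_refl (1 : ℝ))
  rw [sc_one] at ho
  have hle := b.lintegral_latOffSum_le hμ
  have mN := measurable_latPrimSum (n := 2) b.measurable
  set ν := ∫⁻ x, latPrimSum b.f x ∂μ with hν_def
  set s := {x | latPrimSum b.f x = 0}
  have hs : MeasurableSet s := mN (measurableSet_singleton 0)
  have hp : ∀ x, 2 * ν * latPrimSum b.f x + s.indicator (fun _ => ν ^ 2) x ≤
      latPrimSum b.f x * latPrimSum b.f x + ν ^ 2 := by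
    intro x
    by_cases hx : x ∈ s
    · have : latPrimSum b.f x = 0 := hx
      simp [hx, this]
    · rw [Set.indicator_of_notMem hx, add_zero]
      refine (ENNReal.two_mul_le_sq_add_sq _ _).trans (le_of_eq ?_)
      ring
  have h := lintegral_mono (μ := μ) hp
  have h2 := lintegral_mono (μ := μ) (mul_le_latOffSum b.f b.le_one)
  rw [lintegral_add_left (measurable_latOffSum b.measurable b.measurable),
    lintegral_const_mul _ mN, ← hν_def] at h2
  rw [lintegral_add_left (by fun_prop), lintegral_const_mul _ mN, lintegral_indicator_const hs,
    lintegral_add_left (by fun_prop), lintegral_const, measure_univ, mul_one, ← hν_def] at h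
  have h3 := h.trans (add_le_add_left h2 _)
  have hst : μ s ≠ ∞ := measure_ne_top μ s
  generalize ∫⁻ x, latOffSum b.f b.f x ∂μ = o at *
  generalize μ s = m at *
  clear_value ν
  lift ν to NNReal using hνt
  lift o to NNReal using ho
  lift m to NNReal using hst
  simp only [ENNReal.coe_toReal] at hle
  have h4 : 2 * ν * ν + ν ^ 2 * m ≤ o + 2 * ν + ν ^ 2 := by exact_mod_cast h3
  have h5 := NNReal.coe_le_coe.2 h4
  push_cast at h5
  have hν0 : 0 < (ν : ℝ) := NNReal.coe_pos.2 (pos_iff_ne_zero.2 (by exact_mod_cast hν))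
  have h6 : (m : ℝ) * ν ≤ 4 := by
    refine le_of_mul_le_mul_left ?_ hν0
    nlinarith
  rw [ENNReal.le_div_iff_mul_le (Or.inl hν) (Or.inl ENNReal.coe_ne_top)]
  have h7 : m * ν ≤ 4 := by exact_mod_cast h6
  exact_mod_cast h7

lemma measure_latFull_eq_zero_le_of_two {μ : Measure (LatticeSpace 2)} [IsProbabilityMeasure μ]
    (hμ : InvariantLat μ) (hM : b.mass ≠ 0) : μ {x | b.latFull 1 x = 0} ≤ 64 / b.mass := by
  have hle := b.mass_le hμ
  have hν : ∫⁻ x, latPrimSum b.f x ∂μ ≠ 0 := by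
    intro h
    rw [h, mul_zero] at hle
    exact hM (le_antisymm hle zero_le)
  have hνt := b.lintegral_latPrimSum_ne_top μ
  have hπ : ENNReal.ofReal (π ^ 2 / 6) ≤ 16 := by
    rw [← ENNReal.ofReal_ofNat 16]
    refine ENNReal.ofReal_le_ofReal ?_
    nlinarith [Real.pi_le_four, Real.pi_pos]
  have hsub : {x | b.latFull 1 x = 0} ⊆ {x | latPrimSum b.f x = 0} := by
    intro x
    induction x using QuotientGroup.induction_on with
    | H g =>
      intro h
      have h1 := b.primSum_sc_le_full 1 g
      rw [sc_one] at h1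
      exact le_antisymm (h1.trans (le_of_eq h)) zero_le
  refine (measure_mono hsub).trans ((b.measure_latPrimSum_eq_zero_le hμ hν).trans ?_)
  rw [ENNReal.le_div_iff_mul_le (Or.inl hM) (Or.inl b.mass_lt_top.ne)]
  calc 4 / (∫⁻ x, latPrimSum b.f x ∂μ) * b.mass
      ≤ 4 / (∫⁻ x, latPrimSum b.f x ∂μ) * (16 * ∫⁻ x, latPrimSum b.f x ∂μ) := by
        gcongr
        exact hle.trans (mul_le_mul_left hπ _)
    _ = 4 * 16 * ((∫⁻ x, latPrimSum b.f x ∂μ)⁻¹ * ∫⁻ x, latPrimSum b.f x ∂μ) := by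
        rw [div_eq_mul_inv]; ring
    _ = 64 := by rw [ENNReal.inv_mul_cancel hν hνt]; norm_num

end Bump

lemma Bump.measure_latFull_eq_zero_le {n : ℕ} (hn : 2 ≤ n) (b : Bump n)
    {μ : Measure (LatticeSpace n)} [IsProbabilityMeasure μ] (hμ : InvariantLat μ)
    (hM : b.mass ≠ 0) : μ {x | b.latFull 1 x = 0} ≤ 64 / b.mass := by
  rcases hn.eq_or_lt with rfl | h
  · exact b.measure_latFull_eq_zero_le_of_two hμ hM
  · exact b.measure_latFull_eq_zero_le_of_three_le h hμ hM

end

section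

variable {n : ℕ}

lemma isClosed_range_vecOf (g : SLR n) : IsClosed (Set.range (vecOf n g)) := by
  have e : Set.range (vecOf n g) =
      (fun x => ((g⁻¹ : SLR n) : Matrix (Fin n) (Fin n) ℝ).mulVec x) ⁻¹'
        Set.univ.pi fun _ => Set.range ((↑) : ℤ → ℝ) := by
    ext x
    constructor
    · rintro ⟨m, rfl⟩ i -
      refine ⟨m i, ?_⟩
      change _ = ((g⁻¹ : SLR n) : Matrix (Fin n) (Fin n) ℝ).mulVec
        ((g : Matrix (Fin n) (Fin n) ℝ).mulVec fun i => (m i : ℝ)) i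
      rw [Matrix.mulVec_mulVec, ← Matrix.SpecialLinearGroup.coe_mul, inv_mul_cancel]
      simp
    · intro hx
      choose m hm using fun i => hx i trivial
      refine ⟨m, ?_⟩
      rw [vecOf, funext hm, Matrix.mulVec_mulVec, ← Matrix.SpecialLinearGroup.coe_mul,
        mul_inv_cancel]
      simp
  rw [e]
  exact (isClosed_set_pi fun _ _ => Int.isClosedEmbedding_coe_real.isClosed_range).preimage
    (continuous_const.matrix_mulVec continuous_id)

lemma exists_bump {K : Set (Fin n → ℝ)} (hK : IsCompact K) (hne : K.Nonempty) (h0 : 0 ∉ K) :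
    ∃ S : ℝ, ∀ s, S ≤ s → ∃ b : Bump n,
      b.f = fun x => ENNReal.ofReal (1 - s * Metric.infDist x K) := by
  have hc : 0 < Metric.infDist 0 K := (hK.isClosed.notMem_iff_infDist_pos hne).1 h0
  obtain ⟨R, hR⟩ := hK.isBounded.exists_norm_le
  have hR0 : 0 ≤ R := (norm_nonneg _).trans (hR _ hne.some_mem)
  refine ⟨max 1 (2 / Metric.infDist 0 K), fun s hs => ?_⟩
  have hs1 : 1 ≤ s := (le_max_left _ _).trans hs
  have hs2 : 2 / Metric.infDist 0 K ≤ s := (le_max_right _ _).trans hs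
  have hs0 : 0 < s := by linarith
  have hsupp : ∀ x, ENNReal.ofReal (1 - s * Metric.infDist x K) ≠ 0 →
      s * Metric.infDist x K < 1 := by
    intro x hx
    by_contra! h
    exact hx (ENNReal.ofReal_eq_zero.2 (by linarith))
  refine ⟨{ f := fun x => ENNReal.ofReal (1 - s * Metric.infDist x K), K := s,
            r := Metric.infDist 0 K / 2, R := R + 1, K_nonneg := hs0.le, r_pos := by positivity,
            R_pos := by positivity, measurable := ?_, le_one := ?_, lip := ?_, supp_le := ?_,
            le_supp := ?_ }, rfl⟩
  · exact (continuous_const.sub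
      (continuous_const.mul (Metric.continuous_infDist_pt K))).measurable.ennreal_ofReal
  · intro x
    rw [ENNReal.ofReal_le_one]
    have : 0 ≤ s * Metric.infDist x K := mul_nonneg hs0.le Metric.infDist_nonneg
    linarith
  · intro x y
    refine le_trans (ENNReal.ofReal_le_ofReal ?_) ENNReal.ofReal_add_le
    have h := Metric.infDist_le_infDist_add_dist (s := K) (x := y) (y := x)
    rw [dist_comm, dist_eq_norm] at h
    nlinarith [mul_le_mul_of_nonneg_left h hs0.le]
  · intro x hx
    have h1 := hsupp x hx
    have h2 : Metric.infDist x K < 1 := by nlinarith [Metric.infDist_nonneg (x := x) (s := K)]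
    obtain ⟨y, hy, hxy⟩ := (Metric.infDist_lt_iff hne).1 h2
    have := norm_le_norm_add_norm_sub' x y
    rw [dist_eq_norm] at hxy
    linarith [hR y hy]
  · intro x hx
    have h1 := hsupp x hx
    have h2 := Metric.infDist_le_infDist_add_dist (s := K) (x := 0) (y := x)
    rw [dist_zero_left] at h2
    rw [div_le_iff₀ hc] at hs2
    nlinarith [Metric.infDist_nonneg (x := x) (s := K)]

/-- A compact set of large volume is missed by few lattices. -/
lemma measure_not_intersects_le (hn : 2 ≤ n) {μ : Measure (LatticeSpace n)}
    [IsProbabilityMeasure μ] (hμ : InvariantLat μ) {K : Set (Fin n → ℝ)} (hK : IsCompact K)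
    (h0 : 0 ∉ K) (hvol : volume K ≠ 0) :
    μ {x | ¬ Intersects n x K} ≤ 64 / volume K := by
  have hne : K.Nonempty := nonempty_of_measure_ne_zero hvol
  obtain ⟨S, hS⟩ := exists_bump hK hne h0
  choose b hb using fun j : ℕ => hS (S + j) (le_add_of_nonneg_right j.cast_nonneg)
  have hmass : ∀ j, volume K ≤ (b j).mass := by
    intro j
    rw [← lintegral_indicator_one hK.measurableSet]
    refine lintegral_mono fun x => ?_
    by_cases hx : x ∈ K
    · simp [hx, hb, Metric.infDist_zero_of_mem hx]
    · simp [hx]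
  have hmono : Monotone fun j => {x | (b j).latFull 1 x = 0} := by
    intro i j hij x
    induction x using QuotientGroup.induction_on with
    | H g =>
      intro h
      refine ENNReal.tsum_eq_zero.2 fun m => ?_
      have h1 := (b i).full_eq_zero h m
      have hij' : (i : ℝ) ≤ j := by exact_mod_cast hij
      rw [hb] at h1 ⊢
      refine le_antisymm (le_trans (ENNReal.ofReal_le_ofReal ?_) h1.le) zero_le
      have := mul_le_mul_of_nonneg_right hij'
        (Metric.infDist_nonneg (x := (1 : ℝ)⁻¹ • vecOf n g m) (s := K))
      linarith
  have hsub : {x | ¬ Intersects n x K} ⊆ ⋃ j, {x | (b j).latFull 1 x = 0} := by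
    intro x
    induction x using QuotientGroup.induction_on with
    | H g =>
      intro hx
      have hx' : ∀ m, vecOf n g m ∉ K := by
        intro m hm
        refine hx ((intersects_mk g K).2 ⟨m, ?_, hm⟩)
        rintro rfl
        refine h0 ?_
        convert hm
        simp [vecOf, ← Pi.zero_def]
      have hdisj : Disjoint K (Set.range (vecOf n g)) := by
        rw [Set.disjoint_left]
        rintro _ hv ⟨m, rfl⟩
        exact hx' m hv
      obtain ⟨δ, hδ, hd⟩ := hdisj.exists_thickenings hK (isClosed_range_vecOf g)
      obtain ⟨j, hj⟩ := exists_nat_gt (1 / δ - S)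
      refine Set.mem_iUnion.2 ⟨j, ENNReal.tsum_eq_zero.2 fun m => ?_⟩
      rw [hb, inv_one, one_smul]
      refine ENNReal.ofReal_eq_zero.2 ?_
      have hfar : δ ≤ Metric.infDist (vecOf n g m) K := by
        by_contra! h
        obtain ⟨y, hy, hvy⟩ := (Metric.infDist_lt_iff hne).1 h
        exact Set.disjoint_left.1 hd (Metric.mem_thickening_iff.2 ⟨y, hy, hvy⟩)
          (Metric.self_subset_thickening hδ _ ⟨m, rfl⟩)
      have h1 : 1 / δ < S + j := by linarith
      rw [div_lt_iff₀ hδ] at h1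
      have h2 : 0 < S + j := by
        by_contra! h
        nlinarith
      nlinarith
  refine (measure_mono hsub).trans ?_
  rw [hmono.measure_iUnion]
  refine iSup_le fun j => ?_
  have hj : (b j).mass ≠ 0 := fun h => hvol (le_antisymm ((hmass j).trans h.le) zero_le)
  exact ((b j).measure_latFull_eq_zero_le hn hμ hj).trans (ENNReal.div_le_div_left (hmass j) _)

end

/-- If `m(A_k) → ∞` then the measure of the set of unimodular lattices missing `A_k`
tends to `0`. -/
theorem measure_avoiding_tendsto_zero (n : ℕ) (hn : 2 ≤ n)
    (μ : Measure (LatticeSpace n)) [IsProbabilityMeasure μ]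
    (hinv : ∀ (g : SLR n) (s : Set (LatticeSpace n)), μ ((fun x => g • x) ⁻¹' s) = μ s)
    (A : ℕ → Set (Fin n → ℝ)) (hA : ∀ k, MeasurableSet (A k))
    (hvol : Tendsto (fun k => volume (A k)) atTop (nhds ⊤)) :
    Tendsto (fun k => μ {Λ : LatticeSpace n | ¬ Intersects n Λ (A k)}) atTop (nhds 0) := by
  have hμ : InvariantLat μ := fun g s _ => hinv g s
  have : Nonempty (Fin n) := ⟨⟨0, by omega⟩⟩
  refine ENNReal.tendsto_nhds_zero.2 fun ε hε => ?_
  rcases eq_or_ne ε ⊤ with rfl | hε'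
  · exact Eventually.of_forall fun _ => le_top
  have hc : 64 / ε < ⊤ := ENNReal.div_lt_top (by norm_num) hε.ne'
  filter_upwards [hvol.eventually_const_lt hc] with k hk
  have h0 : volume (A k \ {0}) = volume (A k) := measure_sdiff_null (by simp)
  rw [← h0] at hk
  obtain ⟨K, hKA, hK, hKv⟩ := ((hA k).diff (measurableSet_singleton 0)).exists_lt_isCompact hk
  have hmiss : {Λ : LatticeSpace n | ¬ Intersects n Λ (A k)} ⊆ {Λ | ¬ Intersects n Λ K} := by
    intro Λ h h'
    refine h fun g hg => ?_
    obtain ⟨m, hm, hv⟩ := h' g hg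
    exact ⟨m, hm, (hKA hv).1⟩
  refine (measure_mono hmiss).trans ((measure_not_intersects_le hn hμ hK
    (fun h => (hKA h).2 rfl) (zero_le.trans_lt hKv).ne').trans ?_)
  exact ENNReal.div_le_of_le_mul' ((ENNReal.div_le_iff_le_mul (Or.inl hε.ne') (Or.inl hε')).1 hKv.le)
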